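/- arXiv:1708.02127 — 5 statements merged into one kernel-verified Lean document; each statement's English description precedes it below -/
import Mathlib

section
/- The Mittag-Leffler function is the Laplace transform of the M-Wright function: for 0 < β < 1 and every s ≥ 0, ∫_0^∞ e^{−sτ} M_β(τ) dτ = E_β(−s). -/
open MeasureTheory

/-- The Mittag-Leffler function `E_β(x) = ∑ xⁿ/Γ(βn+1)` (real version). -/
noncomputable def mittagLefflerReal (β : ℝ) (x : ℝ) : ℝ :=
  ∑' n : ℕ, x ^ n / Real.Gamma (β * n + 1)

/-- The M-Wright function `M_β(z) = ∑ (-z)ⁿ/(n! Γ(-βn+1-β))`. -/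
noncomputable def mWright (β : ℝ) (z : ℝ) : ℝ :=
  ∑' n : ℕ, (-z) ^ n / (n.factorial * Real.Gamma (-β * n + 1 - β))


namespace HankelAux

open Set Filter Topology

/-- The direction of the upper ray of the Hankel contour. -/
noncomputable def om (φ : ℝ) : ℂ := Complex.exp (φ * Complex.I)

/-- The upper ray of the Hankel contour with vertex `a`. -/
noncomputable def ray (φ a r : ℝ) : ℂ := a + r * om φ

/-- The Hankel integrand. -/
noncomputable def FF (φ p a r : ℝ) : ℂ :=
  Complex.exp (ray φ a r) * ray φ a r ^ (p : ℂ) * om φ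

lemma om_re (φ : ℝ) : (om φ).re = Real.cos φ := by simp [om, Complex.exp_ofReal_mul_I_re]
lemma om_im (φ : ℝ) : (om φ).im = Real.sin φ := by simp [om, Complex.exp_ofReal_mul_I_im]
lemma om_norm (φ : ℝ) : ‖om φ‖ = 1 := by simp [om, Complex.norm_exp_ofReal_mul_I]
lemma ray_re (φ a r : ℝ) : (ray φ a r).re = a + r * Real.cos φ := by simp [ray, om_re]
lemma ray_im (φ a r : ℝ) : (ray φ a r).im = r * Real.sin φ := by simp [ray, om_im]

lemma ray_norm_le {φ a r : ℝ} (ha : 0 ≤ a) (hr : 0 ≤ r) : ‖ray φ a r‖ ≤ a + r := by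
  unfold ray
  refine (norm_add_le _ _).trans ?_
  simp [om_norm, abs_of_nonneg ha, abs_of_nonneg hr]

lemma le_ray_norm {φ a r : ℝ} : a * Real.sin φ ≤ ‖ray φ a r‖ := by
  refine le_of_sq_le_sq ?_ (norm_nonneg _)
  rw [← Complex.normSq_eq_norm_sq, Complex.normSq_apply, ray_re, ray_im]
  nlinarith [sq_nonneg (r + a * Real.cos φ), Real.sin_sq_add_cos_sq φ,
    mul_comm r (Real.sin φ), show (r * Real.sin φ) * (r * Real.sin φ) = r^2 * (1 - Real.cos φ^2) by
      rw [← Real.sin_sq φ]; ring, show (a * Real.sin φ)^2 = a^2 * (1 - Real.cos φ^2) by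
      rw [← Real.sin_sq φ]; ring]

lemma ray_slit {φ a r : ℝ} (hs : 0 < Real.sin φ) (h : 0 < a ∧ 0 ≤ r ∨ 0 < r) :
    ray φ a r ∈ Complex.slitPlane := by
  rw [Complex.mem_slitPlane_iff, ray_re, ray_im]
  rcases h with ⟨ha, hr⟩ | hr
  · rcases hr.eq_or_lt with rfl | hr
    · left; simpa using ha
    · right; positivity
  · right; positivity

lemma rpow_le_add {m x M p : ℝ} (hm : 0 < m) (h1 : m ≤ x) (h2 : x ≤ M) :
    x ^ p ≤ m ^ p + M ^ p := by
  have hx : 0 < x := hm.trans_le h1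
  rcases le_total 0 p with hp | hp
  · have := Real.rpow_le_rpow hx.le h2 hp
    have := Real.rpow_nonneg hm.le p
    linarith
  · have := Real.rpow_le_rpow_of_nonpos hm h1 hp
    have := Real.rpow_nonneg (hx.le.trans h2) p
    linarith

/-- dominating function -/
noncomputable def BB (φ l u p r : ℝ) : ℝ :=
  Real.exp (u + r * Real.cos φ) * ((l * Real.sin φ) ^ p + (u + r) ^ p)

lemma FF_bound {φ l u p a r : ℝ} (hs : 0 < Real.sin φ) (hl : 0 < l) (hla : l ≤ a) (hau : a ≤ u)
    (hr : 0 ≤ r) : ‖FF φ p a r‖ ≤ BB φ l u p r := by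
  unfold FF BB
  rw [norm_mul, norm_mul, om_norm, mul_one, Complex.norm_exp, Complex.norm_cpow_real, ray_re]
  have h1 : l * Real.sin φ ≤ ‖ray φ a r‖ :=
    (mul_le_mul_of_nonneg_right hla hs.le).trans le_ray_norm
  have h2 : ‖ray φ a r‖ ≤ u + r := (ray_norm_le (hl.le.trans hla) hr).trans (by linarith)
  have := rpow_le_add (p := p) (by positivity) h1 h2
  gcongr

lemma exp_poly_integrable {c u p K : ℝ} (hc : 0 < c) (hu : 0 < u) :
    IntegrableOn (fun r : ℝ => Real.exp (-c * r) * (K + (u + r) ^ p)) (Ioi 0) := by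
  have hc2 : 0 < c / 2 := by positivity
  refine integrable_of_isBigO_exp_neg hc2 ?_ ?_
  · refine ContinuousOn.mul (by fun_prop) (ContinuousOn.add (by fun_prop) ?_)
    refine ContinuousOn.rpow_const (by fun_prop) ?_
    intro x hx
    left
    have : (0:ℝ) ≤ x := hx
    positivity
  · have h1 : (fun r : ℝ => (u + r) ^ p) =O[atTop] fun r => Real.exp (c / 2 * r) := by
      have h := ((isLittleO_rpow_exp_pos_mul_atTop p hc2).comp_tendsto
        (tendsto_atTop_add_const_left atTop u tendsto_id)).isBigO
      refine h.trans ?_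
      simp only [Function.comp_def, id, mul_add, Real.exp_add]
      exact Asymptotics.isBigO_const_mul_self _ _ _
    have h2 : (fun _ : ℝ => K) =O[atTop] fun r => Real.exp (c / 2 * r) := by
      refine Asymptotics.IsBigO.trans (Asymptotics.isBigO_const_const K (one_ne_zero (α := ℝ)) _) ?_
      refine Asymptotics.IsBigO.of_bound 1 ?_
      filter_upwards [eventually_ge_atTop 0] with r hr
      rw [norm_one, one_mul, Real.norm_eq_abs, abs_of_pos (Real.exp_pos _)]
      exact Real.one_le_exp (by positivity)
    have h3 := (Asymptotics.isBigO_refl (fun r : ℝ => Real.exp (-c * r)) atTop).mul (h2.add h1)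
    refine h3.congr_right fun r => ?_
    rw [← Real.exp_add]; congr 1; ring

lemma BB_integrable {φ l u p : ℝ} (hc : Real.cos φ < 0) (hu : 0 < u) :
    IntegrableOn (BB φ l u p) (Ioi 0) := by
  have := (exp_poly_integrable (c := -Real.cos φ) (u := u) (p := p) (K := (l * Real.sin φ) ^ p)
    (by linarith) hu).const_mul (Real.exp u)
  refine this.congr (ae_of_all _ fun r => ?_)
  simp only [BB, Real.exp_add]
  ring_nf

lemma ray_meas (φ a : ℝ) : Measurable (ray φ a) := by unfold ray; fun_prop

lemma FF_meas (φ p a : ℝ) : Measurable (FF φ p a) := by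
  unfold FF
  have := ray_meas φ a
  fun_prop

lemma FF_integrable {φ p a : ℝ} (hs : 0 < Real.sin φ) (hc : Real.cos φ < 0) (ha : 0 < a) :
    IntegrableOn (FF φ p a) (Ioi 0) := by
  refine Integrable.mono' (BB_integrable (l := a) (u := a) (p := p) hc ha)
    (FF_meas φ p a).aestronglyMeasurable ?_
  filter_upwards [ae_restrict_mem measurableSet_Ioi] with r hr
  exact FF_bound hs ha le_rfl le_rfl (le_of_lt hr)

/-- Hankel integral along the upper ray -/
noncomputable def JJ (φ p a : ℝ) : ℂ := ∫ r in Ioi (0 : ℝ), FF φ p a r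

/-- derivative of `e^σ σ^p` -/
lemma hasDerivAt_core {p : ℝ} {z : ℂ} (hz : z ∈ Complex.slitPlane) :
    HasDerivAt (fun w : ℂ => Complex.exp w * w ^ (p : ℂ))
      (Complex.exp z * z ^ (p : ℂ) + p * (Complex.exp z * z ^ ((p - 1 : ℝ) : ℂ))) z := by
  have h := (Complex.hasDerivAt_exp z).mul ((hasDerivAt_id z).cpow_const (c := (p : ℂ)) hz)
  refine h.congr_deriv ?_
  push_cast
  simp only [id]
  ring

lemma FF_tendsto {φ p a : ℝ} (hs : 0 < Real.sin φ) (hc : Real.cos φ < 0) (ha : 0 < a) :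
    Tendsto (fun r => Complex.exp (ray φ a r) * ray φ a r ^ (p : ℂ)) atTop (𝓝 0) := by
  have h0 : Tendsto (fun r : ℝ => Real.exp a * (Real.exp (-(-Real.cos φ) * r) * (a * Real.sin φ) ^ p
      + Real.exp (-(-Real.cos φ) * r) * (a + r) ^ p)) atTop (𝓝 0) := by
    have hcpos : 0 < -Real.cos φ := by linarith
    have e1 : Tendsto (fun r : ℝ => Real.exp (-(-Real.cos φ) * r)) atTop (𝓝 0) := by
      refine Real.tendsto_exp_atBot.comp ?_
      exact tendsto_id.const_mul_atTop_of_neg (by linarith)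
    have e2 : Tendsto (fun r : ℝ => Real.exp (-(-Real.cos φ) * r) * (a + r) ^ p) atTop (𝓝 0) := by
      have h := ((tendsto_rpow_mul_exp_neg_mul_atTop_nhds_zero p _ hcpos).comp
        (tendsto_atTop_add_const_left atTop a tendsto_id)).const_mul (Real.exp ((-Real.cos φ) * a))
      rw [mul_zero] at h
      refine h.congr fun r => ?_
      simp only [Function.comp, id]
      rw [mul_left_comm, ← Real.exp_add, mul_comm]
      congr 2; ring
    simpa using ((e1.mul_const _).add e2).const_mul (Real.exp a)
  refine squeeze_zero_norm' ?_ h0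
  filter_upwards [eventually_ge_atTop 0] with r hr
  have := FF_bound (p := p) hs ha le_rfl le_rfl hr
  unfold FF BB at this
  rw [norm_mul, om_norm, mul_one] at this
  refine this.trans (le_of_eq ?_)
  rw [Real.exp_add]; ring_nf

lemma JJ_parts {φ p a : ℝ} (hs : 0 < Real.sin φ) (hc : Real.cos φ < 0) (ha : 0 < a) :
    JJ φ p a + p * JJ φ (p - 1) a = - ((Real.exp a * a ^ p : ℝ) : ℂ) := by
  have hd : ∀ r ∈ Ici (0:ℝ), HasDerivAt (fun r : ℝ => Complex.exp (ray φ a r) * ray φ a r ^ (p : ℂ))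
      (FF φ p a r + p * FF φ (p - 1) a r) r := by
    intro r hr
    have h1 : HasDerivAt (fun r : ℝ => ray φ a r) (om φ) r := by
      unfold ray
      simpa using ((hasDerivAt_id r).ofReal_comp.mul_const (om φ)).const_add (a : ℂ)
    have h2 := (hasDerivAt_core (p := p) (ray_slit hs (Or.inl ⟨ha, hr⟩))).comp r h1
    refine h2.congr_deriv ?_
    unfold FF; ring
  have hi1 := FF_integrable (p := p) hs hc ha
  have hi2 := (FF_integrable (p := p - 1) hs hc ha).const_mul (p : ℂ)
  have h := integral_Ioi_of_hasDerivAt_of_tendsto' hd (hi1.add hi2) (FF_tendsto hs hc ha)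
  rw [integral_add hi1 hi2, integral_const_mul] at h
  unfold JJ
  rw [h]
  simp [ray, Complex.ofReal_cpow ha.le]

lemma JJ_parts_im {φ p a : ℝ} (hs : 0 < Real.sin φ) (hc : Real.cos φ < 0) (ha : 0 < a) :
    (JJ φ p a).im + p * (JJ φ (p - 1) a).im = 0 := by
  have := congrArg Complex.im (JJ_parts (p := p) hs hc ha)
  simpa [-Complex.ofReal_mul, -Complex.ofReal_exp] using this

lemma JJ_deriv {φ p a : ℝ} (hs : 0 < Real.sin φ) (hc : Real.cos φ < 0) (ha : 0 < a) :
    HasDerivAt (fun a => JJ φ p a) (JJ φ p a + p * JJ φ (p - 1) a) a := by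
  have hi1 := FF_integrable (p := p) hs hc ha
  have hi2 := (FF_integrable (p := p - 1) hs hc ha).const_mul (p : ℂ)
  have h := hasDerivAt_integral_of_dominated_loc_of_deriv_le (μ := volume.restrict (Ioi (0:ℝ)))
    (F := fun a r => FF φ p a r) (F' := fun a r => FF φ p a r + p * FF φ (p - 1) a r)
    (bound := fun r => BB φ (a / 2) (2 * a) p r + |p| * BB φ (a / 2) (2 * a) (p - 1) r)
    (x₀ := a) (s := Icc (a / 2) (2 * a)) (Icc_mem_nhds (by linarith) (by linarith))
    (Eventually.of_forall fun x => (FF_meas φ p x).aestronglyMeasurable) hi1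
    (hi1.add hi2).aestronglyMeasurable ?_ ?_ ?_
  · have h2 := h.2
    rw [integral_add hi1 hi2, integral_const_mul] at h2
    exact h2
  · filter_upwards [ae_restrict_mem measurableSet_Ioi] with r hr x hx
    refine (norm_add_le _ _).trans ?_
    rw [norm_mul, Complex.norm_real, Real.norm_eq_abs]
    have := FF_bound (p := p) hs (by linarith) hx.1 hx.2 (le_of_lt hr)
    have := FF_bound (p := p - 1) hs (by linarith) hx.1 hx.2 (le_of_lt hr)
    gcongr
  · exact (BB_integrable hc (by linarith)).add ((BB_integrable hc (by linarith)).const_mul _)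
  · filter_upwards [ae_restrict_mem measurableSet_Ioi] with r hr x hx
    have h1 : HasDerivAt (fun x : ℝ => ray φ x r) 1 x := by
      unfold ray
      simpa using ((hasDerivAt_id x).ofReal_comp).add_const ((r : ℂ) * om φ)
    have h2 := ((hasDerivAt_core (p := p) (ray_slit (a := x) hs (Or.inr hr))).comp x h1).mul_const
      (om φ)
    refine h2.congr_deriv ?_
    unfold FF; ring

lemma JJ_im_const {φ p a b : ℝ} (hs : 0 < Real.sin φ) (hc : Real.cos φ < 0) (ha : 0 < a)
    (hb : 0 < b) : (JJ φ p a).im = (JJ φ p b).im := by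
  have hd : ∀ x ∈ Ioi (0:ℝ), HasDerivAt (fun a => (JJ φ p a).im) 0 x := by
    intro x hx
    have h := Complex.imCLM.hasFDerivAt.comp_hasDerivAt x (JJ_deriv (p := p) hs hc hx)
    refine h.congr_deriv ?_
    have := JJ_parts_im (p := p) hs hc hx
    simpa using this
  exact isOpen_Ioi.is_const_of_deriv_eq_zero isPreconnected_Ioi
    (fun x hx => (hd x hx).differentiableAt.differentiableWithinAt) (fun x hx => (hd x hx).deriv)
    ha hb

end HankelAux

namespace HankelAux

open Set Filter Topology

/-- rotated Gamma integrand -/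
noncomputable def RR (x θ r : ℝ) : ℂ :=
  ((r ^ (x - 1) : ℝ) : ℂ) * Complex.exp (x * θ * Complex.I - r * Complex.exp (θ * Complex.I))

lemma RR_meas (x θ : ℝ) : Measurable (RR x θ) := by unfold RR; fun_prop

lemma RR_exp_norm (x θ r : ℝ) :
    ‖Complex.exp (x * θ * Complex.I - r * Complex.exp (θ * Complex.I))‖
      = Real.exp (- Real.cos θ * r) := by
  rw [Complex.norm_exp]
  congr 1
  simp [Complex.exp_ofReal_mul_I_re]
  ring

lemma RR_norm_le {x θ t r : ℝ} (hx : 1 ≤ x) (hr : 0 ≤ r) (hcos : t ≤ Real.cos θ) :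
    ‖RR x θ r‖ ≤ Real.exp (- t * r) * (0 + (1 + r) ^ (x - 1)) := by
  unfold RR
  rw [norm_mul, RR_exp_norm, Complex.norm_real, Real.norm_eq_abs,
    abs_of_nonneg (Real.rpow_nonneg hr _), mul_comm, zero_add]
  have h1 : r ^ (x - 1) ≤ (1 + r) ^ (x - 1) :=
    Real.rpow_le_rpow hr (by linarith) (by linarith)
  have h2 : Real.exp (- Real.cos θ * r) ≤ Real.exp (- t * r) :=
    Real.exp_le_exp.2 (by nlinarith)
  gcongr

lemma RR_integrable {x θ : ℝ} (hx : 1 ≤ x) (hcos : 0 < Real.cos θ) :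
    IntegrableOn (RR x θ) (Ioi 0) := by
  refine Integrable.mono' (exp_poly_integrable (K := 0) (p := x - 1) hcos one_pos)
    (RR_meas x θ).aestronglyMeasurable ?_
  filter_upwards [ae_restrict_mem measurableSet_Ioi] with r hr
  exact RR_norm_le hx (le_of_lt hr) le_rfl

/-- derivative in the angle -/
noncomputable def RD (x θ r : ℝ) : ℂ :=
  (x * Complex.I - r * Complex.I * Complex.exp (θ * Complex.I)) * RR x θ r

lemma RD_meas (x θ : ℝ) : Measurable (RD x θ) := by
  unfold RD
  have := RR_meas x θ
  fun_prop

lemma RD_norm_le {x θ t r : ℝ} (hx : 1 ≤ x) (hr : 0 ≤ r) (hcos : t ≤ Real.cos θ) :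
    ‖RD x θ r‖ ≤ x * (Real.exp (- t * r) * (0 + (1 + r) ^ x)) := by
  unfold RD
  rw [norm_mul]
  have h1 : ‖(x * Complex.I - r * Complex.I * Complex.exp (θ * Complex.I) : ℂ)‖ ≤ x * (1 + r) := by
    refine (norm_sub_le _ _).trans ?_
    simp only [norm_mul, Complex.norm_real, Complex.norm_I, Complex.norm_exp_ofReal_mul_I,
      Real.norm_eq_abs, abs_of_nonneg hr, abs_of_nonneg (zero_le_one.trans hx)]
    nlinarith
  have h2 := RR_norm_le hx hr hcos
  calc _ ≤ x * (1 + r) * (Real.exp (- t * r) * (0 + (1 + r) ^ (x - 1))) := by gcongr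
    _ = x * (Real.exp (- t * r) * (0 + (1 + r) * (1 + r) ^ (x - 1))) := by ring
    _ = _ := by
      congr 3
      rw [mul_comm, ← Real.rpow_add_one (by positivity)]
      congr 1; ring

lemma RD_integrable {x θ : ℝ} (hx : 1 ≤ x) (hcos : 0 < Real.cos θ) :
    IntegrableOn (RD x θ) (Ioi 0) := by
  refine Integrable.mono' ((exp_poly_integrable (K := 0) (p := x) hcos one_pos).const_mul x)
    (RD_meas x θ).aestronglyMeasurable ?_
  filter_upwards [ae_restrict_mem measurableSet_Ioi] with r hr
  exact RD_norm_le hx (le_of_lt hr) le_rfl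

lemma RD_integral {x θ : ℝ} (hx : 1 ≤ x) (hcos : 0 < Real.cos θ) :
    ∫ r in Ioi (0:ℝ), RD x θ r = 0 := by
  have hd : ∀ r ∈ Ici (0:ℝ), HasDerivAt (fun r : ℝ => Complex.I * (((r ^ x : ℝ) : ℂ) *
      Complex.exp (x * θ * Complex.I - r * Complex.exp (θ * Complex.I)))) (RD x θ r) r := by
    intro r hr
    have hr : 0 ≤ r := hr
    have h1 : HasDerivAt (fun r : ℝ => ((r ^ x : ℝ) : ℂ)) ((x * r ^ (x - 1) : ℝ) : ℂ) r :=
      (Real.hasDerivAt_rpow_const (Or.inr hx)).ofReal_comp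
    have h2 : HasDerivAt (fun r : ℝ => (x * θ * Complex.I - r * Complex.exp (θ * Complex.I) : ℂ))
        (- Complex.exp (θ * Complex.I)) r := by
      simpa using ((hasDerivAt_id r).ofReal_comp.mul_const
        (Complex.exp (θ * Complex.I))).const_sub (x * θ * Complex.I : ℂ)
    refine ((h1.mul h2.cexp).const_mul Complex.I).congr_deriv ?_
    unfold RD RR
    have h3 : r ^ x = r * r ^ (x - 1) := by
      rcases hr.eq_or_lt with rfl | hr
      · simp [Real.zero_rpow (by linarith : x ≠ 0)]
      · rw [mul_comm, ← Real.rpow_add_one hr.ne']; congr 1; ring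
    rw [h3]
    push_cast
    ring
  have ht : Tendsto (fun r : ℝ => Complex.I * (((r ^ x : ℝ) : ℂ) *
      Complex.exp (x * θ * Complex.I - r * Complex.exp (θ * Complex.I)))) atTop (𝓝 0) := by
    refine squeeze_zero_norm' ?_ (tendsto_rpow_mul_exp_neg_mul_atTop_nhds_zero x _ hcos)
    filter_upwards [eventually_ge_atTop 0] with r hr
    rw [norm_mul, norm_mul, RR_exp_norm, Complex.norm_real, Real.norm_eq_abs,
      abs_of_nonneg (Real.rpow_nonneg hr _), Complex.norm_I, one_mul]
  rw [integral_Ioi_of_hasDerivAt_of_tendsto' hd (RD_integrable hx hcos) ht]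
  simp [Real.zero_rpow (by linarith : x ≠ 0)]

lemma RR_deriv {x θ : ℝ} (hx : 1 ≤ x) (hcos : 0 < Real.cos θ) :
    HasDerivAt (fun θ => ∫ r in Ioi (0:ℝ), RR x θ r) 0 θ := by
  rw [← RD_integral hx hcos]
  have hs : {η : ℝ | Real.cos θ / 2 ≤ Real.cos η} ∈ 𝓝 θ := by
    have := (Real.continuous_cos.tendsto θ).eventually
      (eventually_gt_nhds (show Real.cos θ / 2 < Real.cos θ by linarith))
    filter_upwards [this] with η hη using le_of_lt hη
  refine (hasDerivAt_integral_of_dominated_loc_of_deriv_le (μ := volume.restrict (Ioi (0:ℝ)))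
    (F := fun θ r => RR x θ r) (F' := fun θ r => RD x θ r)
    (bound := fun r => x * (Real.exp (- (Real.cos θ / 2) * r) * (0 + (1 + r) ^ x)))
    hs (Eventually.of_forall fun η => (RR_meas x η).aestronglyMeasurable) (RR_integrable hx hcos)
    (RD_meas x θ).aestronglyMeasurable ?_ ?_ ?_).2
  · filter_upwards [ae_restrict_mem measurableSet_Ioi] with r hr η hη
    exact RD_norm_le hx (le_of_lt hr) hη
  · exact (exp_poly_integrable (by positivity) one_pos).const_mul x
  · refine ae_of_all _ fun r η _ => ?_
    unfold RD RR
    have h1 : HasDerivAt (fun η : ℝ => (η : ℂ)) 1 η := (hasDerivAt_id η).ofReal_comp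
    have h2 : HasDerivAt (fun η : ℝ => (x * η * Complex.I - r * Complex.exp (η * Complex.I) : ℂ))
        (x * 1 * Complex.I - r * (Complex.exp (η * Complex.I) * (1 * Complex.I))) η :=
      ((h1.const_mul (x : ℂ)).mul_const _).sub ((h1.mul_const _).cexp.const_mul _)
    refine (h2.cexp.const_mul _).congr_deriv ?_
    ring

lemma RR_integral {x θ : ℝ} (hx : 1 ≤ x) (hθ : θ ∈ Ioo (-(Real.pi / 2)) (Real.pi / 2)) :
    ∫ r in Ioi (0:ℝ), RR x θ r = (Real.Gamma x : ℂ) := by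
  have hd : ∀ η ∈ Ioo (-(Real.pi / 2)) (Real.pi / 2),
      HasDerivAt (fun θ => ∫ r in Ioi (0:ℝ), RR x θ r) 0 η := fun η hη =>
    RR_deriv hx (Real.cos_pos_of_mem_Ioo hη)
  have h0 : (0:ℝ) ∈ Ioo (-(Real.pi / 2)) (Real.pi / 2) := by
    constructor <;> linarith [Real.pi_pos]
  have h := isOpen_Ioo.is_const_of_deriv_eq_zero isPreconnected_Ioo
    (fun η hη => (hd η hη).differentiableAt.differentiableWithinAt) (fun η hη => (hd η hη).deriv)
    hθ h0
  rw [h, Real.Gamma_eq_integral (by linarith)]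
  refine Eq.trans ?_ (integral_ofReal (𝕜 := ℂ))
  refine integral_congr_ae (ae_of_all _ fun r => ?_)
  simp [RR, mul_comm]

lemma FF_zero {φ x r : ℝ} (hφ : φ ∈ Ioo 0 Real.pi) (hr : 0 < r) :
    FF φ (x - 1) 0 r = Complex.exp (x * Real.pi * Complex.I) * RR x (φ - Real.pi) r := by
  have hray : ray φ 0 r = r * om φ := by simp [ray]
  have hlog : Complex.log (r * om φ) = Real.log r + φ * Complex.I := by
    rw [Complex.log_ofReal_mul hr (by simp [om]), om, Complex.log_exp]
    · simpa using by linarith [hφ.1, Real.pi_pos]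
    · simpa using hφ.2.le
  have hne : (r : ℂ) * om φ ≠ 0 := mul_ne_zero (by exact_mod_cast hr.ne') (by simp [om])
  have h1 : Complex.exp (((φ - Real.pi : ℝ) : ℂ) * Complex.I) = - om φ := by
    push_cast
    rw [sub_mul, Complex.exp_sub_pi_mul_I, om]
  unfold FF RR
  rw [hray, Complex.cpow_def_of_ne_zero hne, hlog, h1, Real.rpow_def_of_pos hr]
  push_cast
  rw [← Complex.exp_add, om, ← Complex.exp_add, ← Complex.exp_add, ← Complex.exp_add]
  congr 1
  ring

lemma JJ_tendsto_zero {φ x : ℝ} (hφ : φ ∈ Ioo (Real.pi / 2) Real.pi) (hx : 1 ≤ x) :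
    Tendsto (fun a => JJ φ (x - 1) a) (𝓝[>] 0)
      (𝓝 (Complex.exp (x * Real.pi * Complex.I) * Real.Gamma x)) := by
  have hs : 0 < Real.sin φ := Real.sin_pos_of_pos_of_lt_pi (by linarith [hφ.1, Real.pi_pos]) hφ.2
  have hc : Real.cos φ < 0 :=
    Real.cos_neg_of_pi_div_two_lt_of_lt hφ.1 (by linarith [hφ.2, Real.pi_pos])
  have h1 : Complex.exp (x * Real.pi * Complex.I) * Real.Gamma x =
      ∫ r in Ioi (0:ℝ), FF φ (x - 1) 0 r := by
    rw [← RR_integral (θ := φ - Real.pi) hx ⟨by linarith [hφ.1], by linarith [hφ.2, Real.pi_pos]⟩,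
      ← integral_const_mul]
    refine setIntegral_congr_fun measurableSet_Ioi fun r hr => ?_
    exact (FF_zero ⟨by linarith [hφ.1, Real.pi_pos], hφ.2⟩ hr).symm
  rw [h1]
  unfold JJ
  refine tendsto_integral_filter_of_dominated_convergence (BB φ 0 1 (x - 1)) ?_ ?_ ?_ ?_
  · exact Eventually.of_forall fun a => (FF_meas _ _ _).aestronglyMeasurable
  · filter_upwards [Ioo_mem_nhdsGT (zero_lt_one' ℝ)] with a ha
    filter_upwards [ae_restrict_mem measurableSet_Ioi] with r hr
    have hr : 0 < r := hr
    unfold FF BB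
    rw [norm_mul, norm_mul, om_norm, mul_one, Complex.norm_exp, Complex.norm_cpow_real, ray_re]
    have h2 : ‖ray φ a r‖ ≤ 1 + r := (ray_norm_le ha.1.le hr.le).trans (by linarith [ha.2])
    have h3 := Real.rpow_le_rpow (norm_nonneg _) h2 (show 0 ≤ x - 1 by linarith)
    have h4 : 0 ≤ (0 * Real.sin φ) ^ (x - 1) := by rw [zero_mul]; exact Real.rpow_nonneg le_rfl _
    have h5 := ha.2.le
    gcongr
    linarith
  · exact BB_integrable hc one_pos
  · filter_upwards [ae_restrict_mem measurableSet_Ioi] with r hr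
    refine Tendsto.mono_left ?_ nhdsWithin_le_nhds
    have hray : Continuous fun a => ray φ a r := by unfold ray; fun_prop
    have := (hasDerivAt_core (p := x - 1) (ray_slit (a := 0) hs (Or.inr hr))).continuousAt
    have h := (ContinuousAt.comp (f := fun a => ray φ a r) (x := (0:ℝ)) this
      hray.continuousAt).mul_const (om φ)
    exact h

lemma hankel_base {φ p a : ℝ} (hφ : φ ∈ Ioo (Real.pi / 2) Real.pi) (hp : 0 ≤ p) (ha : 0 < a) :
    (JJ φ p a).im = Real.pi / Real.Gamma (-p) := by
  have hs : 0 < Real.sin φ := Real.sin_pos_of_pos_of_lt_pi (by linarith [hφ.1, Real.pi_pos]) hφ.2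
  have hc : Real.cos φ < 0 :=
    Real.cos_neg_of_pi_div_two_lt_of_lt hφ.1 (by linarith [hφ.2, Real.pi_pos])
  have h1 := JJ_tendsto_zero (x := p + 1) hφ (by linarith)
  have h2 := (Complex.continuous_im.tendsto _).comp h1
  have h3 : Tendsto (Complex.im ∘ fun a => JJ φ (p + 1 - 1) a) (𝓝[>] 0) (𝓝 (JJ φ p a).im) := by
    refine tendsto_const_nhds.congr' ?_
    filter_upwards [self_mem_nhdsWithin] with b hb
    simp only [Function.comp, add_sub_cancel_right]
    exact JJ_im_const hs hc ha hb
  rw [tendsto_nhds_unique h3 h2]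
  have h4 : Complex.exp (((p + 1 : ℝ) : ℂ) * Real.pi * Complex.I) =
      Complex.exp (((((p + 1) * Real.pi) : ℝ) : ℂ) * Complex.I) := by push_cast; rfl
  rw [h4, Complex.im_mul_ofReal, Complex.exp_ofReal_mul_I_im]
  have h5 := Real.Gamma_mul_Gamma_one_sub (p + 1)
  have h6 : 0 < Real.Gamma (p + 1) := Real.Gamma_pos_of_pos (by linarith)
  rw [show 1 - (p + 1) = -p by ring] at h5
  have h7 : Real.Gamma (-p) = Real.pi / Real.sin (Real.pi * (p + 1)) / Real.Gamma (p + 1) := by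
    rw [← h5]; field_simp
  rw [h7, mul_comm Real.pi]
  simp only [div_eq_mul_inv, mul_inv, inv_inv]
  field_simp

lemma JJ_cont {φ a : ℝ} (hs : 0 < Real.sin φ) (hc : Real.cos φ < 0) (ha : 0 < a) :
    ContinuousAt (fun p => JJ φ p a) (-1) := by
  unfold JJ
  refine tendsto_integral_filter_of_dominated_convergence
    (fun r => BB φ a a (-2) r + BB φ a a 0 r) ?_ ?_ ?_ ?_
  · exact Eventually.of_forall fun a => (FF_meas _ _ _).aestronglyMeasurable
  · filter_upwards [Icc_mem_nhds (show (-2:ℝ) < -1 by norm_num) (show (-1:ℝ) < 0 by norm_num)]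
      with p hp
    filter_upwards [ae_restrict_mem measurableSet_Ioi] with r hr
    refine le_trans ?_ (add_le_add (FF_bound (p := -2) hs ha le_rfl le_rfl (le_of_lt hr))
      (FF_bound (p := 0) hs ha le_rfl le_rfl (le_of_lt hr)))
    unfold FF
    simp only [norm_mul, om_norm, mul_one, Complex.norm_cpow_real]
    rw [← mul_add]
    have hpos : 0 < ‖ray φ a r‖ := lt_of_lt_of_le (by positivity) (le_ray_norm (φ := φ) (a := a))
    gcongr
    rcases le_total 1 ‖ray φ a r‖ with h | h
    · have := Real.rpow_le_rpow_of_exponent_le h hp.2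
      have := Real.rpow_nonneg hpos.le (-2 : ℝ)
      linarith
    · have := Real.rpow_le_rpow_of_exponent_ge hpos h hp.1
      exact this.trans (le_add_of_nonneg_right (Real.rpow_nonneg hpos.le _))
  · exact (BB_integrable hc ha).add (BB_integrable hc ha)
  · filter_upwards [ae_restrict_mem measurableSet_Ioi] with r hr
    have hne := Complex.slitPlane_ne_zero (ray_slit (a := a) hs (Or.inr hr))
    have : Continuous fun p : ℝ => FF φ p a r := by
      unfold FF
      refine Continuous.mul (Continuous.mul continuous_const ?_) continuous_const
      exact Continuous.const_cpow (by fun_prop) (Or.inl hne)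
    exact this.tendsto _

lemma hankel {φ a : ℝ} (hφ : φ ∈ Ioo (Real.pi / 2) Real.pi) (ha : 0 < a) (p : ℝ) :
    (JJ φ p a).im = Real.pi / Real.Gamma (-p) := by
  have hs : 0 < Real.sin φ := Real.sin_pos_of_pos_of_lt_pi (by linarith [hφ.1, Real.pi_pos]) hφ.2
  have hc : Real.cos φ < 0 :=
    Real.cos_neg_of_pi_div_two_lt_of_lt hφ.1 (by linarith [hφ.2, Real.pi_pos])
  have key : ∀ n : ℕ, ∀ p : ℝ, -(n : ℝ) ≤ p → (JJ φ p a).im = Real.pi / Real.Gamma (-p) := by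
    intro n
    induction n with
    | zero => intro p hp; exact hankel_base hφ (by simpa using hp) ha
    | succ n ih =>
      have main : ∀ p : ℝ, -((n + 1 : ℕ) : ℝ) ≤ p → p ≠ -1 →
          (JJ φ p a).im = Real.pi / Real.Gamma (-p) := by
        intro p hp hp1
        have h0 : p + 1 ≠ 0 := fun h => hp1 (by linarith)
        have h1 := JJ_parts_im (p := p + 1) hs hc ha
        rw [ih (p + 1) (by push_cast at hp; linarith), add_sub_cancel_right] at h1
        have h2 := Real.Gamma_add_one (s := -(p + 1)) (neg_ne_zero.2 h0)
        rw [show -(p + 1) + 1 = -p by ring] at h2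
        have h3 : (JJ φ p a).im = - (Real.pi / Real.Gamma (-(p + 1))) / (p + 1) := by
          rw [eq_div_iff h0]; linarith
        rw [h3, h2]
        rw [neg_mul, div_neg, neg_div, div_div, mul_comm (p + 1)]
      intro p hp
      by_cases hp1 : p = -1
      · subst hp1
        have c1 : Tendsto (fun p => (JJ φ p a).im) (𝓝[>] (-1)) (𝓝 (JJ φ (-1) a).im) :=
          ((Complex.continuous_im.tendsto _).comp (JJ_cont hs hc ha)).mono_left nhdsWithin_le_nhds
        have c2 : Tendsto (fun p => Real.pi / Real.Gamma (-p)) (𝓝[>] (-1))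
            (𝓝 (Real.pi / Real.Gamma (-(-1)))) := by
          refine Tendsto.mono_left ?_ nhdsWithin_le_nhds
          have g : ContinuousAt Real.Gamma (-(-1)) := by
            refine (Real.differentiableAt_Gamma fun m => ?_).continuousAt
            have : (0:ℝ) ≤ m := m.cast_nonneg
            intro h; linarith
          have g2 : ContinuousAt (fun p : ℝ => Real.Gamma (-p)) (-1) :=
            ContinuousAt.comp (f := fun p : ℝ => -p) g continuous_neg.continuousAt
          refine ContinuousAt.div continuousAt_const g2 ?_
          simp
        refine tendsto_nhds_unique (c1.congr' ?_) c2
        filter_upwards [self_mem_nhdsWithin] with q hq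
        have hq : -1 < q := hq
        exact main q (by linarith) hq.ne'
      · exact main p hp hp1
  obtain ⟨n, hn⟩ := exists_nat_ge (-p)
  exact key n p (by linarith)

end HankelAux

namespace HankelAux

open Set Filter Topology

lemma ray_arg_le {φ a r : ℝ} (hφ : φ ∈ Ioo 0 Real.pi) (ha : 0 < a) :
    (ray φ a r).arg ≤ φ := by
  by_contra! hlt
  have hs : 0 < Real.sin φ := Real.sin_pos_of_pos_of_lt_pi hφ.1 hφ.2
  have h1 : 0 < Real.sin ((ray φ a r).arg - φ) :=
    Real.sin_pos_of_pos_of_lt_pi (by linarith) (by linarith [Complex.arg_le_pi (ray φ a r), hφ.1])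
  have h2 : ‖ray φ a r‖ * Real.sin ((ray φ a r).arg - φ) = - (a * Real.sin φ) := by
    rw [Real.sin_sub, mul_sub, ← mul_assoc, ← mul_assoc, Complex.norm_mul_sin_arg,
      Complex.norm_mul_cos_arg, ray_re, ray_im]
    ring
  have h3 : 0 ≤ ‖ray φ a r‖ * Real.sin ((ray φ a r).arg - φ) := by positivity
  have h4 : 0 < a * Real.sin φ := by positivity
  linarith

lemma ray_cpow_re {φ a r β : ℝ} (hφ : φ ∈ Ioo 0 Real.pi) (ha : 0 < a) (hr : 0 ≤ r) (hβ : 0 < β)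
    (hβφ : φ * β < Real.pi / 2) :
    (a * Real.sin φ) ^ β * Real.cos (φ * β) ≤ (ray φ a r ^ (β : ℂ)).re := by
  have hs : 0 < Real.sin φ := Real.sin_pos_of_pos_of_lt_pi hφ.1 hφ.2
  have h0 : 0 ≤ φ * β := mul_nonneg hφ.1.le hβ.le
  rw [Complex.cpow_ofReal_re]
  have h1 : 0 ≤ (ray φ a r).arg := by
    rw [Complex.arg_nonneg_iff, ray_im]; positivity
  have h2 := ray_arg_le (r := r) hφ ha
  have h3 : Real.cos (φ * β) ≤ Real.cos ((ray φ a r).arg * β) := by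
    refine Real.cos_le_cos_of_nonneg_of_le_pi (by positivity) (by linarith [Real.pi_pos]) ?_
    gcongr
  have h4 : 0 ≤ Real.cos (φ * β) :=
    Real.cos_nonneg_of_neg_pi_div_two_le_of_le (by linarith [Real.pi_pos]) hβφ.le
  have h5 : (a * Real.sin φ) ^ β ≤ ‖ray φ a r‖ ^ β :=
    Real.rpow_le_rpow (by positivity) le_ray_norm hβ.le
  gcongr

lemma rpow_le_lin {β K ε : ℝ} (hβ : 0 < β) (hβ₁ : β < 1) (hK : 0 ≤ K) (hε : 0 < ε) :
    ∃ C : ℝ, ∀ x : ℝ, 0 ≤ x → K * x ^ β ≤ ε * x + C := by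
  have h1 : Tendsto (fun x : ℝ => K * x ^ (-(1 - β))) atTop (𝓝 0) := by
    simpa using (tendsto_rpow_neg_atTop (show 0 < 1 - β by linarith)).const_mul K
  obtain ⟨X, hX⟩ := eventually_atTop.1 ((h1.eventually (eventually_lt_nhds hε)).and
    (eventually_gt_atTop 0))
  have hX0 : 0 < X := (hX X le_rfl).2
  refine ⟨K * X ^ β, fun x hx => ?_⟩
  rcases le_total x X with h | h
  · have := Real.rpow_le_rpow hx h hβ.le
    have := mul_le_mul_of_nonneg_left this hK
    nlinarith
  · have h2 := (hX x h).1
    have hx0 : 0 < x := hX0.trans_le h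
    have h3 : x ^ β = x ^ (-(1 - β)) * x := by
      rw [← Real.rpow_add_one hx0.ne']; congr 1; ring
    have h4 : 0 ≤ K * X ^ β := by positivity
    rw [h3, ← mul_assoc]
    nlinarith

lemma FF_mul_pow {φ p a r β : ℝ} (hne : ray φ a r ≠ 0) (n : ℕ) :
    FF φ (p + β * n) a r = FF φ p a r * (ray φ a r ^ (β : ℂ)) ^ n := by
  unfold FF
  push_cast
  rw [Complex.cpow_add _ _ hne, Complex.cpow_mul_nat]
  ring

lemma mWright_hasSum {φ a β : ℝ} (hs : 0 < Real.sin φ) (hc : Real.cos φ < 0) (ha : 0 < a)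
    (hβ₀ : 0 < β) (hβ₁ : β < 1) (z : ℝ) :
    HasSum (fun n : ℕ => ∫ r in Ioi (0:ℝ),
        (((-z) ^ n / n.factorial : ℝ) : ℂ) * FF φ (β - 1 + β * n) a r)
      (∫ r in Ioi (0:ℝ), FF φ (β - 1) a r * Complex.exp (-z * ray φ a r ^ (β : ℂ))) := by
  have hexp : ∀ x y : ℝ, HasSum (fun n : ℕ => x * (y ^ n / n.factorial)) (x * Real.exp y) := by
    intro x y
    have h := (NormedSpace.expSeries_div_hasSum_exp (𝔸 := ℝ) y).mul_left x
    rwa [← Real.exp_eq_exp_ℝ] at h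
  refine hasSum_integral_of_dominated_convergence
    (fun n r => BB φ a a (β - 1) r * ((|z| * (a + r) ^ β) ^ n / n.factorial)) ?_ ?_ ?_ ?_ ?_
  · intro n
    exact ((FF_meas _ _ _).const_mul _).aestronglyMeasurable
  · intro n
    filter_upwards [ae_restrict_mem measurableSet_Ioi] with r hr
    have hr : 0 < r := hr
    have hne := Complex.slitPlane_ne_zero (ray_slit (a := a) hs (Or.inr hr))
    rw [FF_mul_pow hne, norm_mul, norm_mul, norm_pow, Complex.norm_cpow_real, Complex.norm_real,
      norm_div, norm_pow, norm_neg, Real.norm_eq_abs, Real.norm_natCast]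
    have h1 := FF_bound (p := β - 1) hs ha le_rfl le_rfl hr.le
    have h2 := Real.rpow_le_rpow (norm_nonneg _) (ray_norm_le (φ := φ) ha.le hr.le) hβ₀.le
    have h3 := (norm_nonneg _).trans h1
    calc |z| ^ n / n.factorial * (‖FF φ (β - 1) a r‖ * (‖ray φ a r‖ ^ β) ^ n)
        ≤ |z| ^ n / n.factorial * (BB φ a a (β - 1) r * ((a + r) ^ β) ^ n) := by gcongr
      _ = _ := by rw [mul_pow]; ring
  · exact ae_of_all _ fun r => (hexp _ _).summable
  · simp only [(hexp _ _).tsum_eq]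
    obtain ⟨C, hC⟩ := rpow_le_lin hβ₀ hβ₁ (abs_nonneg z) (show 0 < -Real.cos φ / 2 by linarith)
    have hI := (exp_poly_integrable (c := -Real.cos φ / 2) (u := a) (p := β - 1)
      (K := (a * Real.sin φ) ^ (β - 1)) (by linarith) ha).const_mul
      (Real.exp (a + -Real.cos φ / 2 * a + C))
    refine Integrable.mono' hI (Measurable.aestronglyMeasurable (by unfold BB; fun_prop)) ?_
    filter_upwards [ae_restrict_mem measurableSet_Ioi] with r hr
    have hr : 0 < r := hr
    have h1 := hC (a + r) (by positivity)
    have h2 : 0 ≤ (a * Real.sin φ) ^ (β - 1) + (a + r) ^ (β - 1) := by positivity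
    unfold BB
    rw [Real.norm_eq_abs, abs_of_nonneg (by positivity), mul_right_comm, ← Real.exp_add, ← mul_assoc,
      ← Real.exp_add]
    refine mul_le_mul_of_nonneg_right (Real.exp_le_exp.2 ?_) h2
    linarith
  · filter_upwards [ae_restrict_mem measurableSet_Ioi] with r hr
    have hne := Complex.slitPlane_ne_zero (ray_slit (a := a) hs (Or.inr hr))
    have h := (NormedSpace.expSeries_div_hasSum_exp (𝔸 := ℂ) (-z * ray φ a r ^ (β : ℂ))).mul_left
      (FF φ (β - 1) a r)
    rw [← Complex.exp_eq_exp_ℂ] at h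
    refine Eq.mp (congrArg (fun f => HasSum f _) (funext fun n => ?_)) h
    symm
    rw [FF_mul_pow hne, mul_pow]
    push_cast
    ring

lemma mWright_eq {φ a β : ℝ} (hφ : φ ∈ Ioo (Real.pi / 2) Real.pi) (ha : 0 < a)
    (hβ₀ : 0 < β) (hβ₁ : β < 1) (z : ℝ) :
    mWright β z = (∫ r in Ioi (0:ℝ), FF φ (β - 1) a r *
      Complex.exp (-z * ray φ a r ^ (β : ℂ))).im / Real.pi := by
  have hs : 0 < Real.sin φ := Real.sin_pos_of_pos_of_lt_pi (by linarith [hφ.1, Real.pi_pos]) hφ.2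
  have hc : Real.cos φ < 0 :=
    Real.cos_neg_of_pi_div_two_lt_of_lt hφ.1 (by linarith [hφ.2, Real.pi_pos])
  have h := ((Complex.hasSum_iff _ _).1 (mWright_hasSum hs hc ha hβ₀ hβ₁ z)).2.div_const Real.pi
  rw [← h.tsum_eq, mWright]
  refine tsum_congr fun n => ?_
  have hJ := hankel hφ ha (β - 1 + β * n)
  unfold JJ at hJ
  rw [integral_const_mul, Complex.im_ofReal_mul, hJ,
    show -(β - 1 + β * n) = -β * n + 1 - β by ring]
  have := Real.pi_ne_zero
  simp only [div_eq_mul_inv, mul_inv]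
  field_simp

lemma mittag_hasSum {φ a β s : ℝ} (hs : 0 < Real.sin φ) (hc : Real.cos φ < 0) (ha : 0 < a)
    (hβ₀ : 0 < β) (hs0 : 0 ≤ s) (hsa : s < (a * Real.sin φ) ^ β) :
    HasSum (fun n : ℕ => ∫ r in Ioi (0:ℝ),
        (((-s) ^ n : ℝ) : ℂ) * FF φ (-1 + -β * n) a r)
      (∫ r in Ioi (0:ℝ), FF φ (β - 1) a r * (s + ray φ a r ^ (β : ℂ))⁻¹) := by
  have hm : 0 < (a * Real.sin φ) ^ β := by positivity
  have hq0 : 0 ≤ s / (a * Real.sin φ) ^ β := by positivity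
  have hq1 : s / (a * Real.sin φ) ^ β < 1 := by rwa [div_lt_one hm]
  have hrn : ∀ r : ℝ, (s * ‖ray φ a r‖ ^ (-β)) ≤ s / (a * Real.sin φ) ^ β := by
    intro r
    rw [div_eq_mul_inv, ← Real.rpow_neg (by positivity)]
    exact mul_le_mul_of_nonneg_left
      (Real.rpow_le_rpow_of_nonpos (by positivity) le_ray_norm (by linarith)) hs0
  refine hasSum_integral_of_dominated_convergence
    (fun n r => BB φ a a (-1) r * (s / (a * Real.sin φ) ^ β) ^ n) ?_ ?_ ?_ ?_ ?_
  · intro n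
    exact ((FF_meas _ _ _).const_mul _).aestronglyMeasurable
  · intro n
    filter_upwards [ae_restrict_mem measurableSet_Ioi] with r hr
    have hr : 0 < r := hr
    have hne := Complex.slitPlane_ne_zero (ray_slit (a := a) hs (Or.inr hr))
    rw [FF_mul_pow hne, norm_mul, norm_mul, norm_pow, Complex.norm_cpow_real, Complex.norm_real,
      norm_pow, norm_neg, Real.norm_eq_abs, abs_of_nonneg hs0]
    have h1 := FF_bound (p := -1) hs ha le_rfl le_rfl hr.le
    have h3 := (norm_nonneg _).trans h1
    have h4 := hrn r
    calc s ^ n * (‖FF φ (-1) a r‖ * (‖ray φ a r‖ ^ (-β)) ^ n)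
        = ‖FF φ (-1) a r‖ * (s * ‖ray φ a r‖ ^ (-β)) ^ n := by rw [mul_pow]; ring
      _ ≤ _ := by gcongr
  · exact ae_of_all _ fun r => (summable_geometric_of_lt_one hq0 hq1).mul_left _
  · simp only [tsum_mul_left]
    exact (BB_integrable hc ha).mul_const _
  · filter_upwards [ae_restrict_mem measurableSet_Ioi] with r hr
    have hne := Complex.slitPlane_ne_zero (ray_slit (a := a) hs (Or.inr hr))
    have hn : ‖(-s * ray φ a r ^ ((-β : ℝ) : ℂ) : ℂ)‖ < 1 := by
      rw [norm_mul, norm_neg, Complex.norm_cpow_real, Complex.norm_real, Real.norm_eq_abs,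
        abs_of_nonneg hs0]
      exact (hrn r).trans_lt hq1
    have h := (hasSum_geometric_of_norm_lt_one hn).mul_left (FF φ (-1) a r)
    have e1 : FF φ (β - 1) a r * (s + ray φ a r ^ (β : ℂ))⁻¹ =
        FF φ (-1) a r * (1 - -s * ray φ a r ^ ((-β : ℝ) : ℂ))⁻¹ := by
      have hb : ray φ a r ^ (β : ℂ) ≠ 0 := by simp [Complex.cpow_eq_zero_iff, hne]
      have e2 := FF_mul_pow (p := -1) (β := β) hne 1
      rw [Nat.cast_one, mul_one, pow_one, show -1 + β = β - 1 by ring] at e2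
      rw [e2, mul_assoc]
      congr 1
      push_cast
      rw [Complex.cpow_neg, ← inv_inv (ray φ a r ^ (β : ℂ)), ← mul_inv, inv_inv]
      congr 1
      field_simp
      ring
    rw [e1]
    refine Eq.mp (congrArg (fun f => HasSum f _) (funext fun n => ?_)) h
    symm
    rw [FF_mul_pow hne, mul_pow]
    push_cast
    ring

lemma mittag_eq {φ a β s : ℝ} (hφ : φ ∈ Ioo (Real.pi / 2) Real.pi) (ha : 0 < a)
    (hβ₀ : 0 < β) (hs0 : 0 ≤ s) (hsa : s < (a * Real.sin φ) ^ β) :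
    mittagLefflerReal β (-s) = (∫ r in Ioi (0:ℝ), FF φ (β - 1) a r *
      (s + ray φ a r ^ (β : ℂ))⁻¹).im / Real.pi := by
  have hs : 0 < Real.sin φ := Real.sin_pos_of_pos_of_lt_pi (by linarith [hφ.1, Real.pi_pos]) hφ.2
  have hc : Real.cos φ < 0 :=
    Real.cos_neg_of_pi_div_two_lt_of_lt hφ.1 (by linarith [hφ.2, Real.pi_pos])
  have h := ((Complex.hasSum_iff _ _).1 (mittag_hasSum hs hc ha hβ₀ hs0 hsa)).2.div_const Real.pi
  rw [← h.tsum_eq, mittagLefflerReal]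
  refine tsum_congr fun n => ?_
  have hJ := hankel hφ ha (-1 + -β * n)
  unfold JJ at hJ
  rw [integral_const_mul, Complex.im_ofReal_mul, hJ,
    show -(-1 + -β * n) = β * n + 1 by ring]
  have := Real.pi_ne_zero
  field_simp

lemma laplace_swap {φ a β s : ℝ} (hφ : φ ∈ Ioo (Real.pi / 2) Real.pi) (ha : 0 < a)
    (hβ₀ : 0 < β) (hβφ : φ * β < Real.pi / 2) (hs0 : 0 ≤ s) :
    Integrable (fun z : ℝ => (Real.exp (-s * z) : ℂ) * ∫ r in Ioi (0:ℝ), FF φ (β - 1) a r *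
      Complex.exp (-z * ray φ a r ^ (β : ℂ))) (volume.restrict (Ioi 0)) ∧
    ∫ z in Ioi (0:ℝ), (Real.exp (-s * z) : ℂ) * ∫ r in Ioi (0:ℝ), FF φ (β - 1) a r *
      Complex.exp (-z * ray φ a r ^ (β : ℂ)) =
    ∫ r in Ioi (0:ℝ), FF φ (β - 1) a r * (s + ray φ a r ^ (β : ℂ))⁻¹ := by
  have hs : 0 < Real.sin φ := Real.sin_pos_of_pos_of_lt_pi (by linarith [hφ.1, Real.pi_pos]) hφ.2
  have hc : Real.cos φ < 0 :=
    Real.cos_neg_of_pi_div_two_lt_of_lt hφ.1 (by linarith [hφ.2, Real.pi_pos])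
  have hφpos : φ ∈ Ioo 0 Real.pi := ⟨by linarith [hφ.1, Real.pi_pos], hφ.2⟩
  set δ := (a * Real.sin φ) ^ β * Real.cos (φ * β) with hδ
  have hδ0 : 0 < δ := by
    have : 0 < Real.cos (φ * β) :=
      Real.cos_pos_of_mem_Ioo ⟨by linarith [mul_pos hφpos.1 hβ₀, Real.pi_pos], hβφ⟩
    positivity
  have hre : ∀ r : ℝ, 0 ≤ r → δ ≤ (ray φ a r ^ (β : ℂ)).re := fun r hr =>
    ray_cpow_re hφpos ha hr hβ₀ hβφ
  have hint : Integrable (Function.uncurry fun z r : ℝ => (Real.exp (-s * z) : ℂ) *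
      (FF φ (β - 1) a r * Complex.exp (-z * ray φ a r ^ (β : ℂ))))
      ((volume.restrict (Ioi 0)).prod (volume.restrict (Ioi 0))) := by
    have h1 : IntegrableOn (fun z : ℝ => Real.exp (-δ * z)) (Ioi 0) :=
      integrableOn_exp_mul_Ioi (by linarith) 0
    refine Integrable.mono' (h1.mul_prod (FF_integrable (p := β - 1) hs hc ha).norm) ?_ ?_
    · refine Measurable.aestronglyMeasurable ?_
      have := FF_meas φ (β - 1) a
      have := ray_meas φ a
      unfold Function.uncurry
      fun_prop
    · rw [Measure.prod_restrict]
      filter_upwards [ae_restrict_mem (measurableSet_Ioi.prod measurableSet_Ioi)] with ⟨z, r⟩ hzr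
      have hz : 0 < z := hzr.1
      have hr : 0 < r := hzr.2
      simp only [Function.uncurry, norm_mul, Complex.norm_real, Real.norm_eq_abs, Real.abs_exp,
        Complex.norm_exp]
      have e : (-(z:ℂ) * ray φ a r ^ (β : ℂ)).re = -z * (ray φ a r ^ (β : ℂ)).re := by simp
      rw [e, mul_left_comm, ← Real.exp_add, mul_comm]
      refine mul_le_mul_of_nonneg_right (Real.exp_le_exp.2 ?_) (norm_nonneg _)
      have := hre r hr.le
      nlinarith [mul_nonneg hs0 hz.le]
  have e0 : (fun z : ℝ => (Real.exp (-s * z) : ℂ) * ∫ r in Ioi (0:ℝ), FF φ (β - 1) a r *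
      Complex.exp (-z * ray φ a r ^ (β : ℂ))) = fun z : ℝ => ∫ r in Ioi (0:ℝ),
      (Real.exp (-s * z) : ℂ) * (FF φ (β - 1) a r * Complex.exp (-z * ray φ a r ^ (β : ℂ))) := by
    funext z; rw [integral_const_mul]
  rw [e0]
  refine ⟨hint.integral_prod_left, ?_⟩
  rw [integral_integral_swap hint]
  refine setIntegral_congr_fun measurableSet_Ioi fun r hr => ?_
  have hneg : (-(s + ray φ a r ^ (β : ℂ))).re < 0 := by
    have := hre r (le_of_lt hr)
    simp only [Complex.neg_re, Complex.add_re, Complex.ofReal_re]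
    linarith
  have h2 := integral_exp_mul_complex_Ioi hneg 0
  have e1 : ∀ z : ℝ, (Real.exp (-s * z) : ℂ) *
      (FF φ (β - 1) a r * Complex.exp (-z * ray φ a r ^ (β : ℂ))) =
      FF φ (β - 1) a r * Complex.exp (-(s + ray φ a r ^ (β : ℂ)) * z) := by
    intro z
    push_cast
    rw [mul_left_comm, ← Complex.exp_add]
    congr 2; ring
  simp only [e1]
  rw [integral_const_mul, h2]
  rw [neg_div_neg_eq]
  simp

end HankelAux

/-- The Mittag-Leffler function is the Laplace transform of the M-Wright function:
for `0 < β < 1` and `s ≥ 0`, `∫_0^∞ e^{-sτ} M_β(τ) dτ = E_β(-s)`. -/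
theorem laplace_mWright_eq_mittagLeffler (β : ℝ) (hβ₀ : 0 < β) (hβ₁ : β < 1)
    (s : ℝ) (hs : 0 ≤ s) :
    ∫ τ in Set.Ioi (0 : ℝ), Real.exp (-s * τ) * mWright β τ = mittagLefflerReal β (-s) := by
  have hpi := Real.pi_pos
  obtain ⟨φ, hφ, hβφ⟩ : ∃ φ ∈ Set.Ioo (Real.pi / 2) Real.pi, φ * β < Real.pi / 2 := by
    refine ⟨Real.pi / (1 + β), ⟨?_, ?_⟩, ?_⟩
    · exact div_lt_div_of_pos_left hpi (by linarith) (by linarith)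
    · rw [div_lt_iff₀ (by linarith)]; nlinarith
    · rw [div_mul_eq_mul_div, div_lt_div_iff₀ (by linarith) (by norm_num)]; nlinarith
  have hsin : 0 < Real.sin φ := Real.sin_pos_of_pos_of_lt_pi (by linarith [hφ.1]) hφ.2
  obtain ⟨a, ha, hsa⟩ : ∃ a : ℝ, 0 < a ∧ s < (a * Real.sin φ) ^ β := by
    refine ⟨(s + 1) ^ (β⁻¹) / Real.sin φ, by positivity, ?_⟩
    rw [div_mul_cancel₀ _ hsin.ne', Real.rpow_inv_rpow (by linarith) hβ₀.ne']
    linarith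
  obtain ⟨h1, h2⟩ := HankelAux.laplace_swap hφ ha hβ₀ hβφ hs
  rw [HankelAux.mittag_eq hφ ha hβ₀ hs hsa, ← h2]
  have h3 := integral_im h1
  simp only [RCLike.im_eq_complex_im] at h3
  rw [← h3, ← integral_div]
  refine integral_congr_ae (ae_of_all _ fun z => ?_)
  simp only []
  rw [HankelAux.mWright_eq hφ ha hβ₀ hβ₁ z, Complex.im_ofReal_mul, mul_div_assoc]
end

section
/- For all t, s ≥ 0 and all 0 < α < 2, the L²(ℝ) inner product ⟨M_−^{α/2} 1_{[0,t)}, M_−^{α/2} 1_{[0,s)}⟩ equals ½(t^α + s^α − |t − s|^α). -/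
open MeasureTheory

/-- Right-sided Riemann–Liouville fractional integral
`(I_-^r f)(x) = (1/Γ(r)) ∫_x^∞ f(t)(t-x)^{r-1} dt`. -/
noncomputable def fracIntMinus (r : ℝ) (f : ℝ → ℝ) (x : ℝ) : ℝ :=
  (1 / Real.Gamma r) * ∫ t in Set.Ioi x, f t * (t - x) ^ (r - 1)

/-- Right-sided Riemann–Liouville fractional derivative
`(D_-^r f)(x) = (-1/Γ(1-r)) d/dx ∫_x^∞ f(t)(t-x)^{-r} dt`. -/
noncomputable def fracDerivMinus (r : ℝ) (f : ℝ → ℝ) (x : ℝ) : ℝ :=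
  -(1 / Real.Gamma (1 - r)) * deriv (fun y => ∫ t in Set.Ioi y, f t * (t - y) ^ (-r)) x

/-- The normalization constant `K_{α/2} = √(α sin(απ/2) Γ(α))`. -/
noncomputable def Kconst (α : ℝ) : ℝ :=
  Real.sqrt (α * Real.sin (α * Real.pi / 2) * Real.Gamma α)

/-- The operator `M_-^{α/2}` for `0 < α < 2`. -/
noncomputable def Mminus (α : ℝ) (f : ℝ → ℝ) : ℝ → ℝ :=
  if α < 1 then fun x => Kconst α * fracDerivMinus (-(α - 1) / 2) f x
  else if α = 1 then f
  else fun x => Kconst α * fracIntMinus ((α - 1) / 2) f x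


lemma beta_unit (a b : ℝ) (ha : 0 < a) (hb : 0 < b) :
    IntegrableOn (fun x : ℝ => x ^ (a - 1) * (1 - x) ^ (b - 1)) (Set.Ioo 0 1) ∧
    ∫ x in Set.Ioo (0:ℝ) 1, x ^ (a - 1) * (1 - x) ^ (b - 1) = 
      Real.Gamma a * Real.Gamma b / Real.Gamma (a + b) := by
  have h := ProbabilityTheory.lintegral_betaPDF_eq_one ha hb
  rw [ProbabilityTheory.lintegral_betaPDF] at h
  have hB := ProbabilityTheory.beta_pos ha hb
  have hnn : 0 ≤ᵐ[volume.restrict (Set.Ioo (0:ℝ) 1)] (fun x : ℝ => 1 / ProbabilityTheory.beta a b *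
      x ^ (a - 1) * (1 - x) ^ (b - 1)) := by
    refine (ae_restrict_iff' measurableSet_Ioo).2 (Filter.Eventually.of_forall ?_)
    intro x hx
    have := hx.1
    have h2 : 0 < 1 - x := by linarith [hx.2]
    simp only [Pi.zero_apply]
    positivity
  have hm : AEStronglyMeasurable (fun x : ℝ => 1 / ProbabilityTheory.beta a b *
      x ^ (a - 1) * (1 - x) ^ (b - 1)) (volume.restrict (Set.Ioo (0:ℝ) 1)) := by
    apply Measurable.aestronglyMeasurable
    fun_prop
  have hint : Integrable (fun x : ℝ => 1 / ProbabilityTheory.beta a b *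
      x ^ (a - 1) * (1 - x) ^ (b - 1)) (volume.restrict (Set.Ioo (0:ℝ) 1)) := by
    refine ⟨hm, ?_⟩
    rw [hasFiniteIntegral_iff_ofReal hnn, h]
    simp
  have hval := integral_eq_lintegral_of_nonneg_ae hnn hm
  rw [h] at hval
  have e : (fun x : ℝ => x ^ (a - 1) * (1 - x) ^ (b - 1)) = fun x => 
    ProbabilityTheory.beta a b * (1 / ProbabilityTheory.beta a b *
      x ^ (a - 1) * (1 - x) ^ (b - 1)) := by
    funext x; field_simp
  rw [e]
  refine ⟨hint.const_mul _, ?_⟩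
  rw [integral_const_mul, hval]
  simp [ProbabilityTheory.beta]

lemma beta_half (a b : ℝ) (ha : 0 < a) (hb : 0 < b) :
    IntegrableOn (fun u : ℝ => u ^ (a - 1) * (1 + u) ^ (-a - b)) (Set.Ioi 0) ∧
    ∫ u in Set.Ioi (0:ℝ), u ^ (a - 1) * (1 + u) ^ (-a - b) = 
      Real.Gamma a * Real.Gamma b / Real.Gamma (a + b) := by
  obtain ⟨h1, h2⟩ := beta_unit a b ha hb
  have himg : (fun u : ℝ => u / (1 + u)) '' Set.Ioi 0 = Set.Ioo 0 1 := by
    ext x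
    constructor
    · rintro ⟨u, hu, rfl⟩
      have hu : 0 < u := hu
      exact ⟨by positivity, by simp only; rw [div_lt_one (by positivity)]; linarith⟩
    · rintro ⟨h0, h1⟩
      have : 0 < 1 - x := by linarith
      refine ⟨x / (1 - x), by simp only [Set.mem_Ioi]; positivity, ?_⟩
      simp only
      have : (1 + x / (1 - x)) = 1 / (1 - x) := by field_simp; ring
      rw [this]; field_simp
  have hd : ∀ u ∈ Set.Ioi (0:ℝ), HasDerivWithinAt (fun u : ℝ => u / (1 + u)) (1 / (1 + u) ^ 2)
      (Set.Ioi 0) u := by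
    intro u hu
    have hu : 0 < u := hu
    have := ((hasDerivAt_id u).div ((hasDerivAt_id u).const_add 1) (by simp; positivity))
    refine (this.congr_deriv ?_).hasDerivWithinAt
    simp
  have hinj : Set.InjOn (fun u : ℝ => u / (1 + u)) (Set.Ioi 0) := by
    intro u hu v hv h
    have hu : 0 < u := hu
    have hv : 0 < v := hv
    simp only at h
    rw [div_eq_div_iff (by positivity) (by positivity)] at h
    linarith
  have key : ∀ u ∈ Set.Ioi (0:ℝ), |1 / (1 + u) ^ 2| • ((u / (1 + u)) ^ (a - 1) * 
      (1 - u / (1 + u)) ^ (b - 1)) = u ^ (a - 1) * (1 + u) ^ (-a - b) := by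
    intro u hu
    have hu : 0 < u := hu
    have h1 : 0 < 1 + u := by positivity
    have e : 1 - u / (1 + u) = (1 + u)⁻¹ := by field_simp; ring
    rw [e, Real.div_rpow hu.le h1.le, Real.inv_rpow h1.le, abs_of_pos (by positivity)]
    have : (1 + u) ^ (-a - b) = ((1 + u) ^ 2)⁻¹ * ((1 + u) ^ (a - 1))⁻¹ * ((1 + u) ^ (b - 1))⁻¹ := by
      rw [← Real.rpow_natCast, ← Real.rpow_neg h1.le, ← Real.rpow_neg h1.le, ← Real.rpow_neg h1.le,
        ← Real.rpow_add h1, ← Real.rpow_add h1]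
      congr 1; push_cast; ring
    rw [this, smul_eq_mul]
    field_simp
  constructor
  · have := (integrableOn_image_iff_integrableOn_abs_deriv_smul measurableSet_Ioi hd hinj
      (fun x : ℝ => x ^ (a - 1) * (1 - x) ^ (b - 1))).1 (by rw [himg]; exact h1)
    exact this.congr_fun key measurableSet_Ioi
  · rw [← h2, ← himg, integral_image_eq_integral_abs_deriv_smul measurableSet_Ioi hd hinj]
    exact (setIntegral_congr_fun measurableSet_Ioi key).symm

/-- elementary bound -/
lemma w_bound (r : ℝ) (h2 : r < 1) (u : ℝ) (hu : 0 < u) :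
    |(1 + u) ^ r - u ^ r| ≤ |r| * u ^ (r - 1) := by
  obtain ⟨c, hc, h⟩ := exists_hasDerivAt_eq_slope (fun x : ℝ => x ^ r) (fun x => r * x ^ (r - 1))
    (a := u) (b := 1 + u) (by linarith)
    (fun x hx => (Real.continuousAt_rpow_const _ _ (Or.inl (by linarith [hx.1]))).continuousWithinAt)
    (fun x hx => Real.hasDerivAt_rpow_const (Or.inl (by linarith [hx.1])))
  have hc' : 0 < c := by linarith [hc.1]
  have e : 1 + u - u = 1 := by ring
  rw [e, div_one] at h
  rw [← h, abs_mul, abs_of_pos (Real.rpow_pos_of_pos hc' _)]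
  gcongr ?_ * ?_
  exact Real.rpow_le_rpow_of_nonpos hu hc.1.le (by linarith)

lemma w_sq_int (r : ℝ) (h1 : -1/2 < r) (h2 : r < 1/2) :
    IntegrableOn (fun u : ℝ => ((1 + u) ^ r - u ^ r) ^ 2) (Set.Ioi 0) := by
  have hmeas : Measurable (fun u : ℝ => ((1 + u) ^ r - u ^ r) ^ 2) := by fun_prop
  rw [← Set.Ioc_union_Ioi_eq_Ioi (zero_le_one (α := ℝ))]
  refine IntegrableOn.union ?_ ?_
  · have hi : IntegrableOn (fun u : ℝ => 2 * (1 + u) ^ (2 * r) + 2 * u ^ (2 * r)) (Set.Ioc 0 1) := by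
      refine Integrable.add (Integrable.const_mul ?_ _) (Integrable.const_mul ?_ _)
      · refine ContinuousOn.integrableOn_Icc (a := 0) (b := 1) ?_ |>.mono_set Set.Ioc_subset_Icc_self
        intro u hu
        refine ContinuousAt.continuousWithinAt ?_
        exact ContinuousAt.rpow_const (by fun_prop) (Or.inl (by linarith [hu.1]))
      · exact (intervalIntegrable_iff_integrableOn_Ioc_of_le zero_le_one).1
          (intervalIntegral.intervalIntegrable_rpow' (by linarith))
    refine Integrable.mono' hi hmeas.aestronglyMeasurable ?_
    refine (ae_restrict_iff' measurableSet_Ioc).2 (Filter.Eventually.of_forall ?_)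
    intro u hu
    have h0 := hu.1
    rw [Real.norm_of_nonneg (sq_nonneg _), mul_comm 2 r, Real.rpow_mul (by linarith), 
      Real.rpow_mul h0.le, Real.rpow_two, Real.rpow_two]
    nlinarith [sq_nonneg ((1 + u) ^ r + u ^ r)]
  · have hi : IntegrableOn (fun u : ℝ => r ^ 2 * u ^ (2 * r - 2)) (Set.Ioi 1) :=
      Integrable.const_mul (integrableOn_Ioi_rpow_of_lt (by linarith) one_pos) _
    refine Integrable.mono' hi hmeas.aestronglyMeasurable ?_
    refine (ae_restrict_iff' measurableSet_Ioi).2 (Filter.Eventually.of_forall ?_)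
    intro u hu
    have h0 : 0 < u := lt_trans one_pos hu
    have := w_bound r (by linarith) u h0
    have e : r ^ 2 * u ^ (2 * r - 2) = (|r| * u ^ (r - 1)) ^ 2 := by
      rw [mul_pow, sq_abs, ← Real.rpow_natCast (u ^ (r-1)), ← Real.rpow_mul h0.le]
      congr 2; push_cast; ring
    rw [Real.norm_of_nonneg (sq_nonneg _), e, ← sq_abs]
    gcongr

lemma rpow_lim (e : ℝ) (he : e < 0) : Filter.Tendsto (fun u : ℝ => u ^ e) Filter.atTop (nhds 0) := by
  have := tendsto_rpow_neg_atTop (y := -e) (by linarith)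
  simpa using this

lemma uw_lim (r : ℝ) (h2 : r < 1/2) :
    Filter.Tendsto (fun u : ℝ => u * ((1 + u) ^ r - u ^ r) ^ 2) Filter.atTop (nhds 0) := by
  have hl : Filter.Tendsto (fun u : ℝ => r ^ 2 * u ^ (2 * r - 1)) Filter.atTop (nhds 0) := by
    simpa using (rpow_lim (2 * r - 1) (by linarith)).const_mul (r ^ 2)
  refine squeeze_zero' ?_ ?_ hl
  · filter_upwards [Filter.eventually_gt_atTop 0] with u hu
    positivity
  · filter_upwards [Filter.eventually_gt_atTop 0] with u hu
    have := w_bound r (by linarith) u hu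
    have e : r ^ 2 * u ^ (2 * r - 1) = u * (|r| * u ^ (r - 1)) ^ 2 := by
      rw [mul_pow, sq_abs, ← Real.rpow_natCast (u ^ (r-1)), ← Real.rpow_mul hu.le]
      have : 2 * r - 1 = 1 + (r - 1) * (2:ℕ) := by push_cast; ring
      rw [this, Real.rpow_add hu, Real.rpow_one]; ring
    rw [e, ← sq_abs ((1 + u) ^ r - u ^ r)]
    gcongr

lemma w_lim (r : ℝ) (h0 : 0 < r) (h2 : r < 1/2) :
    Filter.Tendsto (fun u : ℝ => (1 + u) ^ r * ((1 + u) ^ r - u ^ r)) Filter.atTop (nhds 0) := by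
  have hl : Filter.Tendsto (fun u : ℝ => 2 ^ r * r * u ^ (2 * r - 1)) Filter.atTop (nhds 0) := by
    simpa using (rpow_lim (2 * r - 1) (by linarith)).const_mul (2 ^ r * r)
  refine squeeze_zero_norm' ?_ hl
  filter_upwards [Filter.eventually_ge_atTop 1] with u hu
  have hu0 : 0 < u := by linarith
  have := w_bound r (by linarith) u hu0
  rw [abs_of_pos h0] at this
  rw [Real.norm_eq_abs, abs_mul, abs_of_pos (Real.rpow_pos_of_pos (by linarith) _)]
  calc (1 + u) ^ r * |(1 + u) ^ r - u ^ r| ≤ (2 * u) ^ r * (r * u ^ (r - 1)) := by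
        gcongr; linarith
    _ = _ := by
        have e : 2 * r - 1 = r + (r - 1) := by ring
        rw [Real.mul_rpow (by norm_num) hu0.le, e, Real.rpow_add hu0]; ring

lemma uw_cont (r : ℝ) (h1 : -1/2 < r) :
    ContinuousWithinAt (fun u : ℝ => u * ((1 + u) ^ r - u ^ r) ^ 2) (Set.Ici 0) 0 := by
  have hc : ContinuousWithinAt (fun u : ℝ => u * (1 + u) ^ (2 * r) - 2 * u ^ (r + 1) * (1 + u) ^ r
      + u ^ (2 * r + 1)) (Set.Ici 0) 0 := by
    refine ContinuousAt.continuousWithinAt ?_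
    refine ContinuousAt.add (ContinuousAt.sub (ContinuousAt.mul continuousAt_id ?_) 
      (ContinuousAt.mul (ContinuousAt.mul continuousAt_const ?_) ?_)) ?_
    · exact ContinuousAt.rpow_const (by fun_prop) (Or.inl (by norm_num))
    · exact ContinuousAt.rpow_const (by fun_prop) (Or.inr (by linarith))
    · exact ContinuousAt.rpow_const (by fun_prop) (Or.inl (by norm_num))
    · exact ContinuousAt.rpow_const (by fun_prop) (Or.inr (by linarith))
  refine hc.congr_of_mem ?_ (by simp)
  intro u hu
  rcases (show 0 ≤ u from hu).eq_or_lt with h | h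
  · subst h
    rw [Real.zero_rpow (by linarith : r + 1 ≠ 0), Real.zero_rpow (by linarith : 2 * r + 1 ≠ 0)]
    simp
  · have hp : 0 < 1 + u := by linarith
    rw [Real.rpow_add h, Real.rpow_add h, mul_comm 2 r, Real.rpow_mul h.le, Real.rpow_mul hp.le,
      Real.rpow_two, Real.rpow_two, Real.rpow_one]
    ring

lemma w_deriv (r u : ℝ) (hu : 0 < u) : HasDerivAt (fun u : ℝ => (1 + u) ^ r - u ^ r) 
    (r * ((1 + u) ^ r / (1 + u) - u ^ r / u)) u := by
  have h1 : HasDerivAt (fun u : ℝ => (1 + u) ^ r) (1 * r * (1 + u) ^ (r - 1)) u :=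
    ((hasDerivAt_id u).const_add 1).rpow_const (Or.inl (by simp; linarith))
  have h2 := Real.hasDerivAt_rpow_const (p := r) (Or.inl hu.ne')
  refine HasDerivAt.congr_deriv (h1.sub h2) ?_
  rw [Real.rpow_sub_one hu.ne', Real.rpow_sub_one (by linarith)]
  ring

lemma w_norm (r : ℝ) (h1 : -1/2 < r) (h2 : r < 1/2) (hr : r ≠ 0) :
    (2 * r + 1) * ∫ u in Set.Ioi (0:ℝ), ((1 + u) ^ r - u ^ r) ^ 2 =
      Real.Gamma (r + 1) * Real.Gamma (1 - 2 * r) / Real.Gamma (1 - r) - 1 := by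
  have hI := w_sq_int r h1 h2
  rcases lt_or_gt_of_ne hr with h | h
  · obtain ⟨b1, b2⟩ := beta_half (r + 1) (- 2 * r) (by linarith) (by linarith)
    have hF : ∀ u ∈ Set.Ioi (0:ℝ), HasDerivAt 
        (fun u : ℝ => u * ((1 + u) ^ r - u ^ r) ^ 2 + (1 + u) ^ (2 * r))
        ((2 * r + 1) * ((1 + u) ^ r - u ^ r) ^ 2 + 2 * r * (u ^ (r + 1 - 1) * (1 + u) ^ (-(r + 1) - (- 2 * r)))) u := by
      intro u hu
      have hu : 0 < u := hu
      have hp : 0 < 1 + u := by linarith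
      have h3 : HasDerivAt (fun u : ℝ => (1 + u) ^ (2 * r)) (1 * (2 * r) * (1 + u) ^ (2 * r - 1)) u :=
        ((hasDerivAt_id u).const_add 1).rpow_const (Or.inl (by simp; linarith))
      refine HasDerivAt.congr_deriv (((hasDerivAt_id u).mul ((w_deriv r u hu).pow 2)).add h3) ?_
      have e1 : (1 + u) ^ (2 * r - 1) = ((1 + u) ^ r) ^ 2 / (1 + u) := by
        rw [Real.rpow_sub_one hp.ne', mul_comm, Real.rpow_mul hp.le, Real.rpow_two]
      have e2 : (1 + u) ^ (-(r + 1) - (- 2 * r)) = (1 + u) ^ r / (1 + u) := by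
        rw [← Real.rpow_sub_one hp.ne']; congr 1; ring
      rw [e1, e2, add_sub_cancel_right]
      simp
      field_simp
      ring
    have := integral_Ioi_of_hasDerivAt_of_tendsto (m := 0) (a := 0) ?_ hF 
      ((hI.const_mul _).add (b1.const_mul _)) ?_
    · rw [integral_add (hI.const_mul _) (b1.const_mul _), integral_const_mul, integral_const_mul, b2] at this
      have g : Real.Gamma (1 - 2 * r) = (-2 * r) * Real.Gamma (- 2 * r) := by
        rw [← Real.Gamma_add_one (by simpa using hr)]; congr 1; ring
      have e : r + 1 + (- 2 * r) = 1 - r := by ring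
      rw [e] at this
      rw [g]
      simp [-neg_mul] at this
      linear_combination this
    · refine (uw_cont r h1).add (ContinuousAt.continuousWithinAt ?_)
      exact ContinuousAt.rpow_const (by fun_prop) (Or.inl (by norm_num))
    · have := (uw_lim r h2).add ((rpow_lim (2 * r) (by linarith)).comp 
        (Filter.tendsto_atTop_add_const_left _ 1 Filter.tendsto_id))
      simpa using this
  · obtain ⟨b1, b2⟩ := beta_half r (1 - 2 * r) (by linarith) (by linarith)
    have hF : ∀ u ∈ Set.Ioi (0:ℝ), HasDerivAt 
        (fun u : ℝ => u * ((1 + u) ^ r - u ^ r) ^ 2 + (1 + u) ^ r * ((1 + u) ^ r - u ^ r))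
        ((2 * r + 1) * ((1 + u) ^ r - u ^ r) ^ 2 + (-r) * (u ^ (r - 1) * (1 + u) ^ (-r - (1 - 2 * r)))) u := by
      intro u hu
      have hu : 0 < u := hu
      have hp : 0 < 1 + u := by linarith
      have h3 : HasDerivAt (fun u : ℝ => (1 + u) ^ r) (1 * r * (1 + u) ^ (r - 1)) u :=
        ((hasDerivAt_id u).const_add 1).rpow_const (Or.inl (by simp; linarith))
      refine HasDerivAt.congr_deriv (((hasDerivAt_id u).mul ((w_deriv r u hu).pow 2)).add (h3.mul (w_deriv r u hu))) ?_
      have e2 : (1 + u) ^ (-r - (1 - 2 * r)) = (1 + u) ^ r / (1 + u) := by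
        rw [← Real.rpow_sub_one hp.ne']; congr 1; ring
      rw [e2, Real.rpow_sub_one hp.ne', Real.rpow_sub_one hu.ne']
      simp
      field_simp
      ring
    have := integral_Ioi_of_hasDerivAt_of_tendsto (m := 0) (a := 0) ?_ hF 
      ((hI.const_mul _).add (b1.const_mul _)) ?_
    · rw [integral_add (hI.const_mul _) (b1.const_mul _), integral_const_mul, integral_const_mul, b2] at this
      have e : r + (1 - 2 * r) = 1 - r := by ring
      rw [e] at this
      rw [Real.Gamma_add_one hr]
      simp [Real.zero_rpow hr] at this
      linear_combination this
    · refine (uw_cont r h1).add (ContinuousAt.continuousWithinAt ?_)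
      refine ContinuousAt.mul ?_ (ContinuousAt.sub ?_ ?_)
      · exact ContinuousAt.rpow_const (by fun_prop) (Or.inl (by norm_num))
      · exact ContinuousAt.rpow_const (by fun_prop) (Or.inl (by norm_num))
      · exact ContinuousAt.rpow_const (by fun_prop) (Or.inr (by linarith))
    · simpa using (uw_lim r h2).add (w_lim r h h2)

/-- truncated power kernel -/
noncomputable def pk (r y : ℝ) : ℝ := (max y 0) ^ r

lemma pk_pos (r : ℝ) {y : ℝ} (hy : 0 ≤ y) : pk r y = y ^ r := by rw [pk, max_eq_left hy]

lemma pk_neg (r : ℝ) (hr : r ≠ 0) {y : ℝ} (hy : y ≤ 0) : pk r y = 0 := by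
  rw [pk, max_eq_right hy, Real.zero_rpow hr]

lemma unit_int (r : ℝ) (h1 : -1/2 < r) (h2 : r < 1/2) (hr : r ≠ 0) :
    Integrable (fun y : ℝ => (pk r (1 + y) - pk r y) ^ 2) ∧
    (2 * r + 1) * ∫ y : ℝ, (pk r (1 + y) - pk r y) ^ 2 =
      Real.Gamma (r + 1) * Real.Gamma (1 - 2 * r) / Real.Gamma (1 - r) := by
  have hI := w_sq_int r h1 h2
  have e1 : Set.EqOn (fun u : ℝ => ((1 + u) ^ r - u ^ r) ^ 2) 
      (fun y : ℝ => (pk r (1 + y) - pk r y) ^ 2) (Set.Ioi 0) := by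
    intro u hu
    have hu : 0 < u := hu
    simp only
    rw [pk_pos r hu.le, pk_pos r (by linarith)]
  have e2 : Set.EqOn (fun u : ℝ => (1 + u) ^ (2 * r)) 
      (fun y : ℝ => (pk r (1 + y) - pk r y) ^ 2) (Set.Ioc (-1) 0) := by
    intro u hu
    have h3 := hu.1
    simp only
    rw [pk_neg r hr hu.2, pk_pos r (by linarith), mul_comm, Real.rpow_mul (by linarith),
      Real.rpow_two, sub_zero]
  have e3 : Set.EqOn (fun u : ℝ => (0:ℝ)) 
      (fun y : ℝ => (pk r (1 + y) - pk r y) ^ 2) (Set.Iic (-1)) := by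
    intro u hu
    have hu : u ≤ -1 := hu
    simp only
    rw [pk_neg r hr (by linarith), pk_neg r hr (by linarith)]
    simp
  have i1 := hI.congr_fun e1 measurableSet_Ioi
  have v1 := setIntegral_congr_fun (μ := volume) measurableSet_Ioi e1
  have ii : IntervalIntegrable (fun u : ℝ => (1 + u) ^ (2 * r)) volume (-1) 0 := by
    have := (intervalIntegral.intervalIntegrable_rpow' (r := 2 * r) (a := 0) (b := 1) (by linarith)).comp_add_left 1
    simpa using this
  have i2' := (intervalIntegrable_iff_integrableOn_Ioc_of_le (by norm_num)).1 ii
  have i2 := i2'.congr_fun e2 measurableSet_Ioc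
  have v2 := setIntegral_congr_fun (μ := volume) measurableSet_Ioc e2
  have i3 := (integrableOn_zero (μ := volume)).congr_fun e3 measurableSet_Iic
  have v3 := setIntegral_congr_fun (μ := volume) measurableSet_Iic e3
  have vv : ∫ u in Set.Ioc (-1:ℝ) 0, (1 + u) ^ (2 * r) = 1 / (2 * r + 1) := by
    rw [← intervalIntegral.integral_of_le (by norm_num), 
      intervalIntegral.integral_comp_add_left (fun x : ℝ => x ^ (2 * r)) 1]
    rw [integral_rpow (Or.inl (by linarith))]
    simp [Real.zero_rpow (by linarith : 2 * r + 1 ≠ 0)]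
  have i23 := i3.union i2
  rw [Set.Iic_union_Ioc_eq_Iic (by norm_num)] at i23
  have i123 := i23.union i1
  rw [Set.Iic_union_Ioi, integrableOn_univ] at i123
  refine ⟨i123, ?_⟩
  have hs := intervalIntegral.integral_Iic_add_Ioi i23 i1
  rw [← hs, ← Set.Iic_union_Ioc_eq_Iic (by norm_num : (-1:ℝ) ≤ 0), setIntegral_union ?_ measurableSet_Ioc i3 i2,
    ← v1, ← v2, ← v3, vv]
  · have := w_norm r h1 h2 hr
    have h4 : 2 * r + 1 ≠ 0 := by linarith
    simp only [integral_zero]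
    rw [mul_add, this]
    field_simp
    ring
  · rw [Set.disjoint_left]
    intro x hx hx'
    exact absurd hx'.1 (not_lt.2 hx)

lemma pk_scale (r c y : ℝ) (hc : 0 < c) : pk r (c * y) = c ^ r * pk r y := by
  rw [pk, pk, ← Real.mul_rpow hc.le (le_max_right _ _), mul_max_of_nonneg _ _ hc.le, mul_zero]

lemma diff_aux (r : ℝ) (h1 : -1/2 < r) (h2 : r < 1/2) (hr : r ≠ 0) (a b : ℝ) (hab : b < a) :
    Integrable (fun x : ℝ => (pk r (a - x) - pk r (b - x)) ^ 2) ∧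
    ∫ x : ℝ, (pk r (a - x) - pk r (b - x)) ^ 2 =
      (a - b) ^ (2 * r + 1) * ∫ y : ℝ, (pk r (1 + y) - pk r y) ^ 2 := by
  obtain ⟨i, -⟩ := unit_int r h1 h2 hr
  have hc : 0 < a - b := by linarith
  have e : (fun x : ℝ => (pk r (a - x) - pk r (b - x)) ^ 2) = fun x => (a - b) ^ (2 * r) *
     (fun z : ℝ => (pk r (1 + (a - b)⁻¹ * z) - pk r ((a - b)⁻¹ * z)) ^ 2) (b - x) := by
    funext x
    have e1 : a - x = (a - b) * (1 + (a - b)⁻¹ * (b - x)) := by field_simp; ring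
    have e2 : b - x = (a - b) * ((a - b)⁻¹ * (b - x)) := by field_simp
    have e3 : (a - b) ^ (2 * r) = ((a - b) ^ r) ^ 2 := by
      rw [mul_comm, Real.rpow_mul hc.le, Real.rpow_two]
    simp only
    rw [e1, pk_scale _ _ _ hc]
    conv_lhs => rw [e2, pk_scale _ _ _ hc]
    rw [e3, ← mul_pow, mul_sub]
    congr 4
    field_simp
  rw [e]
  constructor
  · refine Integrable.const_mul ?_ _
    refine Integrable.comp_sub_left (f := (fun z : ℝ => (pk r (1 + (a - b)⁻¹ * z) - pk r ((a - b)⁻¹ * z)) ^ 2)) ?_ b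
    exact i.comp_mul_left' (inv_ne_zero hc.ne')
  · rw [integral_const_mul, integral_sub_left_eq_self (fun z : ℝ => (pk r (1 + (a - b)⁻¹ * z) - pk r ((a - b)⁻¹ * z)) ^ 2) volume b,
      Measure.integral_comp_mul_left (fun y : ℝ => (pk r (1 + y) - pk r y) ^ 2), inv_inv, abs_of_pos hc,
      Real.rpow_add_one hc.ne', smul_eq_mul]
    ring

lemma diff_int (r : ℝ) (h1 : -1/2 < r) (h2 : r < 1/2) (hr : r ≠ 0) (a b : ℝ) :
    Integrable (fun x : ℝ => (pk r (a - x) - pk r (b - x)) ^ 2) ∧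
    ∫ x : ℝ, (pk r (a - x) - pk r (b - x)) ^ 2 =
      |a - b| ^ (2 * r + 1) * ∫ y : ℝ, (pk r (1 + y) - pk r y) ^ 2 := by
  rcases lt_trichotomy a b with h | h | h
  · have := diff_aux r h1 h2 hr b a h
    rw [abs_sub_comm, abs_of_pos (by linarith)]
    simpa only [sub_sq_comm] using this
  · subst h
    simp [Real.zero_rpow (by linarith : 2 * r + 1 ≠ 0)]
  · rw [abs_of_pos (by linarith)]
    exact diff_aux r h1 h2 hr a b h

lemma inner_pk (r : ℝ) (h1 : -1/2 < r) (h2 : r < 1/2) (hr : r ≠ 0) (t s : ℝ) (ht : 0 ≤ t) (hs : 0 ≤ s) :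
    ∫ x : ℝ, (pk r (t - x) - pk r (-x)) * (pk r (s - x) - pk r (-x)) =
      (1 / 2) * (t ^ (2 * r + 1) + s ^ (2 * r + 1) - |t - s| ^ (2 * r + 1)) * 
        ∫ y : ℝ, (pk r (1 + y) - pk r y) ^ 2 := by
  obtain ⟨i1, v1⟩ := diff_int r h1 h2 hr t 0
  obtain ⟨i2, v2⟩ := diff_int r h1 h2 hr s 0
  obtain ⟨i3, v3⟩ := diff_int r h1 h2 hr t s
  have e : (fun x : ℝ => (pk r (t - x) - pk r (-x)) * (pk r (s - x) - pk r (-x))) = 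
     fun x => (1 / 2) * ((pk r (t - x) - pk r (0 - x)) ^ 2 + (pk r (s - x) - pk r (0 - x)) ^ 2
      - (pk r (t - x) - pk r (s - x)) ^ 2) := by
    funext x; rw [zero_sub]; ring
  have i12 : Integrable (fun x : ℝ => (pk r (t - x) - pk r (0 - x)) ^ 2
      + (pk r (s - x) - pk r (0 - x)) ^ 2) := i1.add i2
  rw [e, integral_const_mul, integral_sub i12 i3, integral_add i1 i2, v1, v2, v3, sub_zero,
    sub_zero, abs_of_nonneg ht, abs_of_nonneg hs]
  ring

lemma frac_prim (e : ℝ) (he : -1 < e) (t x : ℝ) (ht : 0 ≤ t) :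
    ∫ u in Set.Ioi x, (Set.indicator (Set.Ico 0 t) 1 : ℝ → ℝ) u * (u - x) ^ e =
      (pk (e + 1) (t - x) - pk (e + 1) (-x)) / (e + 1) := by
  have h1 : (fun u : ℝ => (Set.indicator (Set.Ico 0 t) 1 : ℝ → ℝ) u * (u - x) ^ e) = 
      Set.indicator (Set.Ico 0 t) (fun u => (u - x) ^ e) := by
    funext u
    by_cases h : u ∈ Set.Ico 0 t <;> simp [h]
  rw [h1, setIntegral_indicator measurableSet_Ico]
  have hle : max 0 x ≤ max t x := max_le_max_right x ht
  have h2 : (Set.Ioi x ∩ Set.Ico 0 t : Set ℝ) =ᵐ[volume] Set.Ioc (max 0 x) (max t x) := by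
    have hn : ∀ c : ℝ, ∀ᵐ u : ℝ, u ≠ c := fun c => by simp [ae_iff]
    filter_upwards [hn 0, hn x, hn t] with u u0 ux ut
    apply propext
    change (u ∈ Set.Ioi x ∩ Set.Ico 0 t) ↔ u ∈ Set.Ioc (max 0 x) (max t x)
    simp only [Set.mem_inter_iff, Set.mem_Ioi, Set.mem_Ico, Set.mem_Ioc, max_lt_iff, le_max_iff]
    constructor
    · rintro ⟨h3, h4, h5⟩
      exact ⟨⟨lt_of_le_of_ne h4 u0.symm, h3⟩, Or.inl h5.le⟩
    · rintro ⟨⟨h3, h4⟩, h5⟩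
      refine ⟨h4, h3.le, lt_of_le_of_ne ?_ ut⟩
      rcases h5 with h5 | h5
      · exact h5
      · linarith
  rw [setIntegral_congr_set h2, ← intervalIntegral.integral_of_le hle,
    intervalIntegral.integral_comp_sub_right (fun v : ℝ => v ^ e), integral_rpow (Or.inl he), pk, pk]
  rw [← max_sub_sub_right, ← max_sub_sub_right, sub_self, zero_sub]

lemma pk_deriv (q : ℝ) (hq : q ≠ 1) (hq0 : q ≠ 0) (z : ℝ) (hz : z ≠ 0) :
    HasDerivAt (pk q) (q * pk (q - 1) z) z := by
  rcases lt_or_gt_of_ne hz with h | h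
  · rw [pk_neg _ (sub_ne_zero.2 hq) h.le, mul_zero]
    refine (hasDerivAt_const z (0:ℝ)).congr_of_eventuallyEq ?_
    filter_upwards [eventually_lt_nhds h] with y hy
    exact pk_neg q hq0 hy.le
  · rw [pk_pos _ h.le]
    refine (Real.hasDerivAt_rpow_const (p := q) (Or.inl h.ne')).congr_of_eventuallyEq ?_
    filter_upwards [eventually_gt_nhds h] with y hy
    exact pk_pos q hy.le

lemma const_id (r : ℝ) (h1 : -1/2 < r) (h2 : r < 1/2) (hr : r ≠ 0) :
    (Kconst (2 * r + 1) / Real.Gamma (r + 1)) ^ 2 * ∫ y : ℝ, (pk r (1 + y) - pk r y) ^ 2 = 1 := by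
  obtain ⟨-, v⟩ := unit_int r h1 h2 hr
  have ha : 0 < 2 * r + 1 := by linarith
  have hpi := Real.pi_pos
  have hsin : 0 < Real.sin ((2 * r + 1) * Real.pi / 2) :=
    Real.sin_pos_of_pos_of_lt_pi (by positivity) (by nlinarith)
  have e : Real.sin ((2 * r + 1) * Real.pi / 2) = Real.cos (Real.pi * r) := by
    rw [← Real.sin_add_pi_div_two]; congr 1; ring
  have g0 := Real.Gamma_pos_of_pos ha
  have g1 : 0 < Real.Gamma (r + 1) := Real.Gamma_pos_of_pos (by linarith)
  have g2 : 0 < Real.Gamma (1 - r) := Real.Gamma_pos_of_pos (by linarith)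
  have r1 := Real.Gamma_mul_Gamma_one_sub r
  have r2 := Real.Gamma_mul_Gamma_one_sub (2 * r)
  have f1 := Real.Gamma_add_one hr
  have f2 := Real.Gamma_add_one (s := 2 * r) (by simpa using hr)
  have s2 : Real.sin (Real.pi * (2 * r)) = 2 * Real.sin (Real.pi * r) * Real.cos (Real.pi * r) := by
    rw [← Real.sin_two_mul]; congr 1; ring
  have hs : Real.sin (Real.pi * r) ≠ 0 := by
    rcases lt_or_gt_of_ne hr with h | h
    · exact (Real.sin_neg_of_neg_of_neg_pi_lt (by nlinarith) (by nlinarith)).ne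
    · exact (Real.sin_pos_of_pos_of_lt_pi (by positivity) (by nlinarith)).ne'
  have hK : Kconst (2 * r + 1) ^ 2 = (2 * r + 1) * Real.sin ((2 * r + 1) * Real.pi / 2) * Real.Gamma (2 * r + 1) :=
    Real.sq_sqrt (by positivity)
  rw [e] at hK hsin
  clear e
  rw [s2] at r2
  clear s2
  generalize Real.sin (Real.pi * r) = S at *
  generalize Real.cos (Real.pi * r) = D at *
  have A : Real.Gamma (r + 1) * Real.Gamma (1 - r) * S = Real.pi * r := by
    rw [f1, mul_assoc r, r1]; field_simp
  have B : Real.Gamma (2 * r + 1) * Real.Gamma (1 - 2 * r) * (S * D) = Real.pi * r := by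
    rw [f2, mul_assoc (2 * r), r2]; field_simp
  have C : Real.Gamma (2 * r + 1) * Real.Gamma (1 - 2 * r) * D = 
      Real.Gamma (r + 1) * Real.Gamma (1 - r) := by
    apply mul_right_cancel₀ hs
    linear_combination B - A
  have v' : ∫ y : ℝ, (pk r (1 + y) - pk r y) ^ 2 = Real.Gamma (r + 1) * Real.Gamma (1 - 2 * r) / Real.Gamma (1 - r) / (2 * r + 1) := by
    rw [← v]; field_simp
  rw [div_pow, hK, v']
  field_simp
  linear_combination C

lemma final_aux (α : ℝ) (hα₀ : 0 < α) (hα₂ : α < 2) (hα₁ : α ≠ 1)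
    (H : ∀ t : ℝ, 0 ≤ t → ∀ᵐ x : ℝ, Mminus α (Set.indicator (Set.Ico 0 t) 1) x =
      Kconst α / Real.Gamma ((α - 1) / 2 + 1) * (pk ((α - 1) / 2) (t - x) - pk ((α - 1) / 2) (-x)))
    (t s : ℝ) (ht : 0 ≤ t) (hs : 0 ≤ s) :
    ∫ x : ℝ, Mminus α (Set.indicator (Set.Ico 0 t) 1) x *
        Mminus α (Set.indicator (Set.Ico 0 s) 1) x =
      (1 / 2) * (t ^ α + s ^ α - |t - s| ^ α) := by
  obtain ⟨r, hr⟩ : ∃ r, r = (α - 1) / 2 := ⟨_, rfl⟩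
  have hα : α = 2 * r + 1 := by rw [hr]; ring
  rw [← hr] at H
  have h1 : -1/2 < r := by linarith
  have h2 : r < 1/2 := by linarith
  have h0 : r ≠ 0 := by rintro rfl; apply hα₁; linarith
  have := const_id r h1 h2 h0
  rw [← hα] at this
  have E : ∫ x : ℝ, Mminus α (Set.indicator (Set.Ico 0 t) 1) x *
        Mminus α (Set.indicator (Set.Ico 0 s) 1) x = ∫ x : ℝ, (Kconst α / Real.Gamma (r + 1)) ^ 2 *
         ((pk r (t - x) - pk r (-x)) * (pk r (s - x) - pk r (-x))) := by
    apply integral_congr_ae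
    filter_upwards [H t ht, H s hs] with x hx hy
    rw [hx, hy]; ring
  rw [E, integral_const_mul, inner_pk r h1 h2 h0 t s ht hs, ← hα]
  linear_combination (1 / 2) * (t ^ α + s ^ α - |t - s| ^ α) * this

/-- For all `t, s ≥ 0` and `0 < α < 2`, the `L²(ℝ)` inner product of
`M_-^{α/2} 1_{[0,t)}` and `M_-^{α/2} 1_{[0,s)}` equals `½(t^α + s^α - |t-s|^α)`. -/
theorem Mminus_indicator_inner (α : ℝ) (hα₀ : 0 < α) (hα₂ : α < 2)
    (t s : ℝ) (ht : 0 ≤ t) (hs : 0 ≤ s) :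
    ∫ x : ℝ, Mminus α (Set.indicator (Set.Ico 0 t) 1) x *
        Mminus α (Set.indicator (Set.Ico 0 s) 1) x =
      (1 / 2) * (t ^ α + s ^ α - |t - s| ^ α) := by
  rcases lt_trichotomy α 1 with h | h | h
  · refine final_aux α hα₀ hα₂ h.ne ?_ t s ht hs
    intro t ht
    have hn : ∀ c : ℝ, ∀ᵐ u : ℝ, u ≠ c := fun c => by simp [ae_iff]
    filter_upwards [hn 0, hn t] with x hx0 hxt
    rw [Mminus, if_pos h]
    simp only [fracDerivMinus]
    have e : - (-(α - 1) / 2) = (α - 1) / 2 := by ring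
    have e' : 1 - (-(α - 1) / 2) = (α - 1) / 2 + 1 := by ring
    rw [e, e']
    have hq : (α - 1) / 2 + 1 ≠ 0 := by linarith
    have hq1 : (α - 1) / 2 + 1 ≠ 1 := by intro h'; linarith
    have hf : (fun y : ℝ => ∫ u in Set.Ioi y, (Set.indicator (Set.Ico 0 t) 1 : ℝ → ℝ) u * (u - y) ^ ((α - 1) / 2))
       = fun y => (pk ((α - 1) / 2 + 1) (t - y) - pk ((α - 1) / 2 + 1) (-y)) / ((α - 1) / 2 + 1) := by
      funext y
      exact frac_prim _ (by linarith) t y ht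
    rw [hf]
    have d1 : HasDerivAt (fun y : ℝ => pk ((α - 1) / 2 + 1) (t - y)) _ x :=
      (pk_deriv _ hq1 hq (t - x) (sub_ne_zero.2 hxt.symm)).comp x ((hasDerivAt_id x).const_sub t)
    have d2 : HasDerivAt (fun y : ℝ => pk ((α - 1) / 2 + 1) (-y)) _ x :=
      (pk_deriv _ hq1 hq (-x) (neg_ne_zero.2 hx0)).comp x (hasDerivAt_neg x)
    have d3 : HasDerivAt (fun y : ℝ => (pk ((α - 1) / 2 + 1) (t - y) - pk ((α - 1) / 2 + 1) (-y)) /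
      ((α - 1) / 2 + 1)) _ x := (d1.sub d2).div_const _
    rw [d3.deriv, add_sub_cancel_right]
    have := (Real.Gamma_pos_of_pos (by linarith : 0 < (α - 1) / 2 + 1)).ne'
    clear d1 d2 d3 hf
    generalize Real.Gamma ((α - 1) / 2 + 1) = G at *
    generalize (α - 1) / 2 + 1 = q at *
    field_simp
    ring
  · subst h
    have e : (fun x : ℝ => Mminus 1 (Set.indicator (Set.Ico 0 t) 1) x *
        Mminus 1 (Set.indicator (Set.Ico 0 s) 1) x) = Set.indicator (Set.Ico 0 (min t s)) 1 := by
      funext x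
      simp only [Mminus, lt_irrefl, if_false, if_true]
      have hI : Set.Ico 0 (min t s) = Set.Ico 0 t ∩ Set.Ico 0 s := by
        rw [Set.Ico_inter_Ico, max_self]
      rw [hI, Set.inter_indicator_one]
      rfl
    rw [e, integral_indicator_one measurableSet_Ico]
    simp only [Real.rpow_one, Real.volume_real_Ico, sub_zero]
    rw [max_eq_left (le_min ht hs)]
    rcases le_total t s with h | h
    · rw [min_eq_left h, abs_of_nonpos (by linarith)]; ring
    · rw [min_eq_right h, abs_of_nonneg (by linarith)]; ring
  · refine final_aux α hα₀ hα₂ h.ne' ?_ t s ht hs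
    intro t ht
    refine Filter.Eventually.of_forall fun x => ?_
    rw [Mminus, if_neg (not_lt.2 h.le), if_neg h.ne']
    simp only [fracIntMinus]
    rw [frac_prim _ (by linarith) t x ht, sub_add_cancel]
    have h0 : (α - 1) / 2 ≠ 0 := by linarith
    have := (Real.Gamma_pos_of_pos (by linarith : 0 < (α - 1) / 2)).ne'
    rw [Real.Gamma_add_one h0]
    field_simp
end

section
/- Let μ_β be a probability measure on the dual space S'_d with characteristic functional ∫ e^{i⟨w,φ⟩} dμ_β(w) = E_β(−½|φ|₀²) for φ ∈ S_d, where 0 < β ≤ 1. Then for every φ ∈ S_d and n ∈ ℕ₀, the odd moments vanish: ∫ ⟨w,φ⟩^{2n+1} dμ_β(w) = 0, and the even moments satisfy ∫ ⟨w,φ⟩^{2n} dμ_β(w) = (2n)! / (2^n Γ(βn+1)) · |φ|₀^{2n}. -/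
open MeasureTheory

/-- The Mittag-Leffler function `E_β(z) = ∑ zⁿ/Γ(βn+1)` (complex version). -/
noncomputable def mittagLeffler (β : ℝ) (z : ℂ) : ℂ :=
  ∑' n : ℕ, z ^ n / Complex.Gamma ((β * n + 1 : ℝ) : ℂ)

open Filter Topology

noncomputable def gML (n : ℕ) (x : ℝ) : ℝ :=
  (-1) ^ n * (Real.cos x - ∑ k ∈ Finset.range n, (-1) ^ k * x ^ (2 * k) / (2 * k).factorial)

noncomputable def hML (n : ℕ) (x : ℝ) : ℝ :=
  (-1) ^ n * (Real.sin x - ∑ k ∈ Finset.range n, (-1) ^ k * x ^ (2 * k + 1) / (2 * k + 1).factorial)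

lemma hML_deriv (n : ℕ) (x : ℝ) : HasDerivAt (hML n) (gML n x) x := by
  unfold hML gML
  refine HasDerivAt.const_mul _ (HasDerivAt.sub (Real.hasDerivAt_sin x) ?_)
  refine HasDerivAt.fun_sum fun k _ => ?_
  have := ((hasDerivAt_pow (2 * k + 1) x).const_mul ((-1 : ℝ) ^ k)).div_const
    ((2 * k + 1).factorial : ℝ)
  refine this.congr_deriv ?_
  rw [Nat.factorial_succ]
  have : ((2 * k).factorial : ℝ) ≠ 0 := by positivity
  push_cast
  field_simp

lemma gML_deriv (n : ℕ) (x : ℝ) : HasDerivAt (gML (n + 1)) (hML n x) x := by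
  have e : hML n x = (-1) ^ (n + 1) * (-Real.sin x - ∑ k ∈ Finset.range n,
      (-1) ^ (k + 1) * x ^ (2 * k + 1) / (2 * k + 1).factorial) := by
    unfold hML
    have : ∑ k ∈ Finset.range n, (-1 : ℝ) ^ (k + 1) * x ^ (2 * k + 1) / (2 * k + 1).factorial
      = - ∑ k ∈ Finset.range n, (-1 : ℝ) ^ k * x ^ (2 * k + 1) / (2 * k + 1).factorial := by
      rw [← Finset.sum_neg_distrib]
      refine Finset.sum_congr rfl fun k _ => ?_
      ring
    rw [this]; ring
  rw [e]
  unfold gML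
  refine HasDerivAt.const_mul _ (HasDerivAt.sub (Real.hasDerivAt_cos x) ?_)
  have : (fun x : ℝ => ∑ k ∈ Finset.range (n + 1), (-1 : ℝ) ^ k * x ^ (2 * k) / (2 * k).factorial)
    = fun x : ℝ => ∑ k ∈ Finset.range n, (-1 : ℝ) ^ (k + 1) * x ^ (2 * (k + 1)) / (2 * (k + 1)).factorial + 1 := by
    funext x
    rw [Finset.sum_range_succ']
    simp
  rw [this]
  refine HasDerivAt.add_const _ ?_
  refine HasDerivAt.fun_sum fun k _ => ?_
  have := ((hasDerivAt_pow (2 * k + 2) x).const_mul ((-1 : ℝ) ^ (k + 1))).div_const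
    ((2 * k + 2).factorial : ℝ)
  refine this.congr_deriv ?_
  rw [Nat.factorial_succ (2 * k + 1)]
  have : ((2 * k + 1).factorial : ℝ) ≠ 0 := by positivity
  push_cast
  field_simp
  ring

lemma nonneg_of_deriv {f f' : ℝ → ℝ} (hf : ∀ x, HasDerivAt f (f' x) x) (h0 : f 0 = 0)
    (h : ∀ x, 0 ≤ x → 0 ≤ f' x) (x : ℝ) (hx : 0 ≤ x) : 0 ≤ f x := by
  have := monotoneOn_of_deriv_nonneg (convex_Ici (0 : ℝ)) (f := f)
    (fun y _ => (hf y).continuousAt.continuousWithinAt)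
    (fun y _ => (hf y).differentiableAt.differentiableWithinAt)
    (fun y hy => by
      rw [(hf y).deriv]; rw [interior_Ici] at hy; exact h y (le_of_lt hy))
  rw [← h0]
  exact this (by simp) hx hx

lemma gML_zero (n : ℕ) : gML (n + 1) 0 = 0 := by
  unfold gML
  rw [Finset.sum_range_succ']
  simp

lemma hML_zero (n : ℕ) : hML n 0 = 0 := by
  unfold hML
  simp

lemma gML_nonneg' (n : ℕ) : ∀ x, 0 ≤ x → 0 ≤ gML (n + 1) x := by
  induction n with
  | zero => 
    intro x _
    simp [gML]
    linarith [Real.cos_le_one x]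
  | succ n ih =>
    exact nonneg_of_deriv (gML_deriv (n + 1)) (gML_zero _)
      (nonneg_of_deriv (hML_deriv (n + 1)) (hML_zero _) ih)

lemma gML_nonneg (n : ℕ) (x : ℝ) : 0 ≤ gML (n + 1) x := by
  have : gML (n + 1) x = gML (n + 1) |x| := by
    unfold gML
    rw [Real.cos_abs]
    simp only [pow_mul, sq_abs]
  rw [this]
  exact gML_nonneg' n _ (abs_nonneg x)

lemma gML_succ (n : ℕ) (x : ℝ) : gML (n + 1) x = x ^ (2 * n) / (2 * n).factorial - gML n x := by
  unfold gML
  rw [Finset.sum_range_succ, pow_succ]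
  have : ((-1 : ℝ) ^ n) * (-1) ^ n = 1 := by rw [← mul_pow]; simp
  linear_combination (x ^ (2 * n) / (2 * n).factorial) * this

lemma gML_le (n : ℕ) (x : ℝ) : gML n x ≤ x ^ (2 * n) / (2 * n).factorial := by
  linarith [gML_nonneg n x, gML_succ n x]

lemma gML_tendsto (n : ℕ) (x : ℝ) :
    Tendsto (fun t : ℝ => gML n (t * x) / t ^ (2 * n)) (𝓝[≠] 0)
      (𝓝 (x ^ (2 * n) / (2 * n).factorial)) := by
  have h1 : Tendsto (fun t : ℝ => x ^ (2 * n) / (2 * n).factorial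
      - t ^ 2 * (x ^ (2 * (n + 1)) / (2 * (n + 1)).factorial)) (𝓝[≠] 0)
      (𝓝 (x ^ (2 * n) / (2 * n).factorial)) := by
    have : Continuous (fun t : ℝ => x ^ (2 * n) / (2 * n).factorial
      - t ^ 2 * (x ^ (2 * (n + 1)) / (2 * (n + 1)).factorial)) := by fun_prop
    have := this.tendsto 0
    simp only [ne_eq, OfNat.ofNat_ne_zero, not_false_eq_true, zero_pow, zero_mul, sub_zero] at this
    exact this.mono_left nhdsWithin_le_nhds
  refine tendsto_of_tendsto_of_tendsto_of_le_of_le' h1 tendsto_const_nhds ?_ ?_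
  · filter_upwards [self_mem_nhdsWithin] with t ht
    have ht : t ≠ 0 := ht
    have ht2 : 0 < t ^ (2 * n) := by rw [pow_mul]; positivity
    rw [le_div_iff₀ ht2]
    have := gML_le (n + 1) (t * x)
    rw [gML_succ, mul_pow, mul_pow, mul_add 2 n 1, pow_add t] at this
    rw [mul_add 2 n 1]
    refine le_trans (le_of_eq ?_) (sub_le_comm.1 this)
    ring
  · filter_upwards [self_mem_nhdsWithin] with t ht
    have ht : t ≠ 0 := ht
    have ht2 : 0 < t ^ (2 * n) := by rw [pow_mul]; positivity
    rw [div_le_iff₀ ht2]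
    have := gML_le n (t * x)
    rw [mul_pow] at this
    refine le_trans this (le_of_eq ?_)
    ring

lemma gamma_ge {x : ℝ} (hx : 1 ≤ x) : 1 / 2 ≤ Real.Gamma x := by
  have key : ∀ y : ℝ, 2 ≤ y → 1 ≤ Real.Gamma y := by
    intro y hy
    have := Real.Gamma_strictMonoOn_Ici.monotoneOn (Set.mem_Ici.2 le_rfl) (Set.mem_Ici.2 hy) hy
    rwa [Real.Gamma_two] at this
  rcases le_total 2 x with h | h
  · linarith [key x h]
  · have h2 := key (x + 1) (by linarith)
    rw [Real.Gamma_add_one (by linarith)] at h2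
    have : 0 < Real.Gamma x := Real.Gamma_pos_of_pos (by linarith)
    nlinarith

noncomputable def aML (β : ℝ) (k : ℕ) : ℝ := (Real.Gamma (β * k + 1))⁻¹

lemma aML_bound {β : ℝ} (hβ : 0 < β) (k : ℕ) : |aML β k| ≤ 2 := by
  have h := gamma_ge (x := β * k + 1) (by have : 0 ≤ β * k := by positivity
                                          linarith)
  unfold aML
  rw [abs_of_nonneg (by positivity)]
  rw [inv_le_comm₀ (by linarith) (by norm_num)]
  linarith

lemma term_bound {β : ℝ} (hβ : 0 < β) (n k : ℕ) {z : ℝ} (hz : |z| ≤ 1 / 2) :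
    ‖aML β (k + n) * z ^ k‖ ≤ 2 * (1 / 2) ^ k := by
  rw [norm_mul, norm_pow]
  simp only [Real.norm_eq_abs]
  gcongr
  exact aML_bound hβ _

lemma tail_tendsto {β : ℝ} (hβ : 0 < β) (n : ℕ) :
    Tendsto (fun z : ℝ => ∑' k, aML β (k + n) * z ^ k) (𝓝 0) (𝓝 (aML β n)) := by
  have e : aML β n = ∑' k, aML β (k + n) * (0 : ℝ) ^ k := by
    rw [tsum_eq_single 0]
    · simp
    · intro b hb; simp [hb]
  rw [e]
  refine tendsto_tsum_of_dominated_convergence (bound := fun k => 2 * (1 / 2 : ℝ) ^ k) ?_ ?_ ?_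
  · exact (summable_geometric_of_lt_one (by norm_num) (by norm_num)).mul_left 2
  · intro k
    exact (by fun_prop : Continuous fun z : ℝ => aML β (k + n) * z ^ k).tendsto 0
  · have : ∀ᶠ z : ℝ in 𝓝 0, |z| ≤ 1 / 2 := by
      filter_upwards [Metric.closedBall_mem_nhds (0 : ℝ) (by norm_num : (0 : ℝ) < 1 / 2)] with z hz
      simpa using hz
    filter_upwards [this] with z hz k using term_bound hβ n k hz

lemma tail_eq {β : ℝ} (hβ : 0 < β) (n : ℕ) {z : ℝ} (hz : |z| ≤ 1 / 2) :
    ∑' k, aML β k * z ^ k = ∑ k ∈ Finset.range n, aML β k * z ^ k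
      + z ^ n * ∑' k, aML β (k + n) * z ^ k := by
  have hs : Summable fun k => aML β k * z ^ k :=
    Summable.of_norm_bounded
      ((summable_geometric_of_lt_one (by norm_num) (by norm_num)).mul_left 2)
      (fun k => term_bound hβ 0 k hz)
  rw [← hs.sum_add_tsum_nat_add n, ← tsum_mul_left]
  congr 1
  refine tsum_congr fun k => ?_
  rw [pow_add]; ring

noncomputable def eML (β z : ℝ) : ℝ := ∑' k, aML β k * z ^ k

lemma mittagLeffler_ofReal (β z : ℝ) : 
   mittagLeffler β (z : ℂ) = (eML β z : ℝ) := by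
  unfold eML aML mittagLeffler
  rw [Complex.ofReal_tsum]
  refine tsum_congr fun k => ?_
  rw [Complex.Gamma_ofReal]
  push_cast
  rw [div_eq_mul_inv, mul_comm]

section main
variable {Ω : Type*} [MeasurableSpace Ω] {μ : Measure Ω} {X : Ω → ℝ} {β σ : ℝ}

lemma eventually_small (σ : ℝ) : ∀ᶠ t : ℝ in 𝓝 0, |(-(t ^ 2 * σ ^ 2 / 2))| ≤ 1 / 2 := by
  have : Continuous fun t : ℝ => |(-(t ^ 2 * σ ^ 2 / 2))| := by fun_prop
  have := this.tendsto 0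
  simp only [ne_eq, OfNat.ofNat_ne_zero, not_false_eq_true, zero_pow, zero_mul, zero_div,
    neg_zero, abs_zero] at this
  exact this.eventually_le_const (by norm_num)

lemma z_tendsto (σ : ℝ) : Tendsto (fun t : ℝ => -(t ^ 2 * σ ^ 2 / 2)) (𝓝 0) (𝓝 0) := by
  have : Continuous fun t : ℝ => (-(t ^ 2 * σ ^ 2 / 2)) := by fun_prop
  simpa using this.tendsto 0

lemma aML_zero (β : ℝ) : aML β 0 = 1 := by simp [aML]

lemma X_aemeasurable (hβ : 0 < β)
    (hchar : ∀ t : ℝ, ∫ w, Complex.exp (Complex.I * (t * X w)) ∂μ =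
        (eML β (-(t ^ 2 * σ ^ 2 / 2)) : ℝ)) : AEMeasurable X μ := by
  have h1 : Tendsto (fun t : ℝ => eML β (-(t ^ 2 * σ ^ 2 / 2))) (𝓝 0) (𝓝 1) := by
    have := (tail_tendsto hβ 0).comp (z_tendsto σ)
    rw [aML_zero] at this
    exact this
  have h2 : ∀ᶠ t : ℝ in 𝓝[≠] 0, AEMeasurable (fun w => Real.sin (t * X w) / t) μ := by
    have h3 := h1.eventually_ne (one_ne_zero)
    filter_upwards [nhdsWithin_le_nhds h3] with t ht
    have hi : Integrable (fun w => Complex.exp (Complex.I * (t * X w))) μ := by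
      by_contra hc
      have h := hchar t
      rw [integral_undef hc] at h
      exact ht (by exact_mod_cast h.symm)
    have hm := (Complex.measurable_im.comp_aemeasurable hi.aemeasurable).div_const t
    refine hm.congr (Eventually.of_forall fun w => ?_)
    have : Complex.I * (t * X w) = ((t * X w : ℝ) : ℂ) * Complex.I := by push_cast; ring
    simp only [Function.comp, this, Complex.exp_ofReal_mul_I_im]
  have h4 : ∀ x : ℝ, Tendsto (fun t : ℝ => Real.sin (t * x) / t) (𝓝[≠] 0) (𝓝 x) := by
    intro x
    have hd : HasDerivAt (fun t : ℝ => Real.sin (t * x)) x 0 := by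
      have := (hasDerivAt_mul_const (x := (0 : ℝ)) x).sin
      simpa using this
    have := hd.tendsto_slope
    refine this.congr fun t => ?_
    simp [slope_def_field]
  obtain ⟨v, hv⟩ := (𝓝[≠] (0 : ℝ)).exists_seq_tendsto
  obtain ⟨N, hN⟩ := eventually_atTop.1 (hv.eventually h2)
  refine aemeasurable_of_tendsto_metrizable_ae' (f := fun n w => Real.sin (v (n + N) * X w) / v (n + N))
    (fun n => hN _ (by omega)) (Eventually.of_forall fun w => ?_)
  exact ((h4 (X w)).comp hv).comp (tendsto_add_atTop_nat N)

lemma even_moments [IsProbabilityMeasure μ] (hβ : 0 < β) (hX : AEMeasurable X μ)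
    (hcos : ∀ t : ℝ, ∫ w, Real.cos (t * X w) ∂μ = eML β (-(t ^ 2 * σ ^ 2 / 2))) (n : ℕ) :
    Integrable (fun w => X w ^ (2 * n)) μ ∧
      ∫ w, X w ^ (2 * n) / (2 * n).factorial ∂μ = aML β n * (σ ^ 2 / 2) ^ n := by
  induction n using Nat.strong_induction_on with
  | _ n ih =>
  rcases n with _ | n
  · simp [aML_zero]
  set m := n + 1 with hm
  have hcosint : ∀ t : ℝ, Integrable (fun w => Real.cos (t * X w)) μ := by
    intro t
    refine Integrable.of_bound (C := 1) ?_ ?_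
    · exact (Real.continuous_cos.measurable.comp_aemeasurable (hX.const_mul t)).aestronglyMeasurable
    · exact Eventually.of_forall fun w => Real.abs_cos_le_one _
  have hterm : ∀ t : ℝ, ∀ k ∈ Finset.range m,
      Integrable (fun w => (-1) ^ k * (t * X w) ^ (2 * k) / (2 * k).factorial) μ := by
    intro t k hk
    have := ((ih k (Finset.mem_range.1 hk)).1.const_mul ((-1) ^ k * t ^ (2 * k))).div_const
      ((2 * k).factorial : ℝ)
    refine this.congr (Eventually.of_forall fun w => ?_)
    simp only [mul_pow]; ring
  have hgint : ∀ t : ℝ, Integrable (fun w => gML m (t * X w)) μ := by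
    intro t
    unfold gML
    exact ((hcosint t).sub (integrable_finset_sum _ (hterm t))).const_mul _
  have hgval : ∀ t : ℝ, |(-(t ^ 2 * σ ^ 2 / 2))| ≤ 1 / 2 → ∫ w, gML m (t * X w) ∂μ =
      t ^ (2 * m) * ((σ ^ 2 / 2) ^ m * ∑' k, aML β (k + m) * (-(t ^ 2 * σ ^ 2 / 2)) ^ k) := by
    intro t ht
    unfold gML
    rw [integral_const_mul, integral_sub (hcosint t) (integrable_finset_sum _ (hterm t)),
      integral_finset_sum _ (hterm t), hcos t, eML, tail_eq hβ m ht]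
    have : ∑ k ∈ Finset.range m, ∫ w, (-1) ^ k * (t * X w) ^ (2 * k) / (2 * k).factorial ∂μ
        = ∑ k ∈ Finset.range m, aML β k * (-(t ^ 2 * σ ^ 2 / 2)) ^ k := by
      refine Finset.sum_congr rfl fun k hk => ?_
      have e := (ih k (Finset.mem_range.1 hk)).2
      have : (fun w => (-1) ^ k * (t * X w) ^ (2 * k) / ((2 * k).factorial : ℝ))
        = fun w => ((-1) ^ k * t ^ (2 * k)) * (X w ^ (2 * k) / ((2 * k).factorial : ℝ)) := by
        funext w; rw [mul_pow]; ring
      rw [this, integral_const_mul, e, pow_mul,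
        show -(t ^ 2 * σ ^ 2 / 2) = (-1) * t ^ 2 * (σ ^ 2 / 2) by ring, mul_pow, mul_pow]
      ring
    rw [this, add_sub_cancel_left]
    have e1 : (-(t ^ 2 * σ ^ 2 / 2)) ^ m = (-1) ^ m * t ^ (2 * m) * (σ ^ 2 / 2) ^ m := by
      rw [show -(t ^ 2 * σ ^ 2 / 2) = (-1) * t ^ 2 * (σ ^ 2 / 2) by ring, mul_pow, mul_pow, pow_mul]
    have e2 : ((-1 : ℝ) ^ m) * (-1) ^ m = 1 := by rw [← mul_pow]; simp
    rw [e1]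
    linear_combination (t ^ (2 * m) * ((σ ^ 2 / 2) ^ m *
      ∑' k, aML β (k + m) * (-(t ^ 2 * σ ^ 2 / 2)) ^ k)) * e2
  have hlim : Tendsto (fun t : ℝ => ∫ w, gML m (t * X w) / t ^ (2 * m) ∂μ) (𝓝[≠] 0)
      (𝓝 (aML β m * (σ ^ 2 / 2) ^ m)) := by
    have h0 := (((tail_tendsto hβ m).comp (z_tendsto σ)).const_mul ((σ ^ 2 / 2) ^ m)).mono_left
      (nhdsWithin_le_nhds (s := {0}ᶜ))
    rw [mul_comm (aML β m)]
    refine h0.congr' ?_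
    filter_upwards [nhdsWithin_le_nhds (eventually_small σ), self_mem_nhdsWithin] with t ht ht0
    have ht0 : t ≠ 0 := ht0
    rw [integral_div, hgval t ht, mul_div_cancel_left₀ _ (pow_ne_zero _ ht0)]
    rfl
  have hnn : ∀ t x : ℝ, 0 ≤ gML m (t * x) / t ^ (2 * m) := fun t x =>
    div_nonneg (gML_nonneg n _) (by rw [pow_mul]; positivity)
  have hint : Integrable (fun w => X w ^ (2 * m) / ((2 * m).factorial : ℝ)) μ := by
    refine ⟨((hX.pow_const _).div_const _).aestronglyMeasurable, ?_⟩
    have hF : ∫⁻ w, ‖X w ^ (2 * m) / ((2 * m).factorial : ℝ)‖ₑ ∂μ ≤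
        liminf (fun t : ℝ => ∫⁻ w, ‖gML m (t * X w) / t ^ (2 * m)‖ₑ ∂μ) (𝓝[≠] 0) := by
      rw [lintegral_congr (fun w => ((gML_tendsto m (X w)).enorm.liminf_eq).symm)]
      exact lintegral_liminf_le' (fun t => ((hgint t).div_const _).aemeasurable.enorm)
    have hL : Tendsto (fun t : ℝ => ∫⁻ w, ‖gML m (t * X w) / t ^ (2 * m)‖ₑ ∂μ) (𝓝[≠] 0)
        (𝓝 (ENNReal.ofReal (aML β m * (σ ^ 2 / 2) ^ m))) := by
      refine (ENNReal.tendsto_ofReal hlim).congr fun t => ?_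
      rw [ofReal_integral_eq_lintegral_ofReal ((hgint t).div_const _)
        (Eventually.of_forall fun w => hnn t _)]
      refine lintegral_congr fun w => ?_
      rw [Real.enorm_of_nonneg (hnn t _)]
    rw [hL.liminf_eq] at hF
    exact lt_of_le_of_lt hF ENNReal.ofReal_lt_top
  refine ⟨?_, ?_⟩
  · have := hint.mul_const ((2 * m).factorial : ℝ)
    refine this.congr (Eventually.of_forall fun w => ?_)
    have : ((2 * m).factorial : ℝ) ≠ 0 := by positivity
    simp only
    field_simp
  · refine tendsto_nhds_unique ?_ hlim
    refine tendsto_integral_filter_of_dominated_convergence _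
      (Eventually.of_forall fun t => ((hgint t).div_const _).aestronglyMeasurable) ?_ hint
      (Eventually.of_forall fun w => gML_tendsto m (X w))
    filter_upwards [self_mem_nhdsWithin] with t ht0
    refine Eventually.of_forall fun w => ?_
    have ht0 : t ≠ 0 := ht0
    have ht2 : 0 < t ^ (2 * m) := by rw [pow_mul]; positivity
    rw [Real.norm_of_nonneg (hnn t _), div_le_iff₀ ht2]
    refine le_trans (gML_le m _) (le_of_eq ?_)
    rw [mul_pow]; ring

lemma odd_moments [IsProbabilityMeasure μ] (hX : AEMeasurable X μ)
    (hchar : ∀ t : ℝ, ∫ w, Complex.exp (Complex.I * (t * X w)) ∂μ =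
        (eML β (-(t ^ 2 * σ ^ 2 / 2)) : ℝ)) (n : ℕ) : ∫ w, X w ^ (2 * n + 1) ∂μ = 0 := by
  have hN : AEMeasurable (fun w => - X w) μ := hX.neg
  have hmap : μ.map X = μ.map (fun w => - X w) := by
    have := Measure.isProbabilityMeasure_map (μ := μ) hX
    have : IsProbabilityMeasure (μ.map (fun w => - X w)) := Measure.isProbabilityMeasure_map hN
    refine Measure.ext_of_charFun (funext fun t => ?_)
    rw [charFun_apply_real, charFun_apply_real,
      integral_map hX (by fun_prop), integral_map hN (by fun_prop)]
    have h1 := hchar t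
    have h2 := hchar (-t)
    rw [neg_sq, ← h1] at h2
    convert h2.symm using 3 with w w
    · ring_nf
    · push_cast; ring_nf
  have e1 := integral_map (f := fun x : ℝ => x ^ (2 * n + 1)) hX (by fun_prop)
  have e2 := integral_map (f := fun x : ℝ => x ^ (2 * n + 1)) hN (by fun_prop)
  rw [hmap, e2] at e1
  simp only [Odd.neg_pow ⟨n, rfl⟩, integral_neg] at e1
  linarith

end main

/-- Moments under the Mittag-Leffler (grey noise) measure: if a real random variable `X`
(standing for `⟨·,φ⟩` under `μ_β`) has characteristic function `t ↦ E_β(-½ t² σ²)` with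
`σ = |φ|₀`, then its odd moments vanish and its even moments are
`(2n)!/(2ⁿ Γ(βn+1)) σ^{2n}`. -/
theorem mittagLeffler_measure_moments
    {Ω : Type*} [MeasurableSpace Ω] (μ : Measure Ω) [IsProbabilityMeasure μ]
    (β : ℝ) (hβ₀ : 0 < β) (hβ₁ : β ≤ 1) (X : Ω → ℝ) (σ : ℝ) (hσ : 0 ≤ σ)
    (hchar : ∀ t : ℝ,
      ∫ w, Complex.exp (Complex.I * (t * X w)) ∂μ =
        mittagLeffler β (-((t ^ 2 * σ ^ 2 / 2 : ℝ) : ℂ))) :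
    ∀ n : ℕ,
      (∫ w, X w ^ (2 * n + 1) ∂μ) = 0 ∧
      (∫ w, X w ^ (2 * n) ∂μ) =
        (2 * n).factorial / (2 ^ n * Real.Gamma (β * n + 1)) * σ ^ (2 * n) := by
  have hc : ∀ t : ℝ, ∫ w, Complex.exp (Complex.I * (t * X w)) ∂μ =
        (eML β (-(t ^ 2 * σ ^ 2 / 2)) : ℝ) := by
    intro t
    rw [hchar t, ← mittagLeffler_ofReal]
    push_cast
    rfl
  have hX := X_aemeasurable hβ₀ hc
  have hcos : ∀ t : ℝ, ∫ w, Real.cos (t * X w) ∂μ = eML β (-(t ^ 2 * σ ^ 2 / 2)) := by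
    intro t
    have hre := congrArg Complex.re (hc t)
    have hi : Integrable (fun w => Complex.exp (Complex.I * (t * X w))) μ := by
      refine Integrable.of_bound (C := 1) ?_ (Eventually.of_forall fun w => ?_)
      · have hcont : Continuous fun x : ℝ => Complex.exp (Complex.I * (t * x)) := by fun_prop
        exact (hcont.measurable.comp_aemeasurable hX).aestronglyMeasurable
      · have : Complex.I * (t * X w) = ((t * X w : ℝ) : ℂ) * Complex.I := by push_cast; ring
        rw [this, Complex.norm_exp_ofReal_mul_I]
    rw [Complex.ofReal_re] at hre
    rw [← hre]
    refine Eq.trans ?_ (integral_re hi)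
    refine integral_congr_ae (Eventually.of_forall fun w => ?_)
    have : Complex.I * (t * X w) = ((t * X w : ℝ) : ℂ) * Complex.I := by push_cast; ring
    simp only [this]
    exact (Complex.exp_ofReal_mul_I_re _).symm
  intro n
  refine ⟨odd_moments hX hc n, ?_⟩
  have h := (even_moments hβ₀ hX hcos n).2
  rw [integral_div] at h
  have hf : ((2 * n).factorial : ℝ) ≠ 0 := by positivity
  rw [div_eq_iff hf] at h
  rw [h, aML, div_pow, ← pow_mul]
  field_simp
end

section
/- For 0 < β < 1 and any r > −1, the moments of the M-Wright function satisfy ∫_0^∞ τ^r M_β(τ) dτ = Γ(r+1)/Γ(βr+1). -/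
open MeasureTheory

open MeasureTheory Filter Topology Set

lemma mw_gamma_integrable (a : ℝ) (ha : 0 < a) (b : ℝ) (hb : 0 < b) :
    IntegrableOn (fun t : ℝ => t ^ (a - 1) * Real.exp (-(b * t))) (Ioi 0) := by
  have := integrableOn_rpow_mul_exp_neg_mul_rpow (p := 1) (s := a - 1) (b := b) (by linarith)
    one_pos hb
  simpa using this

lemma mw_gamma_diff (a : ℝ) (ha : 0 < a) :
    DifferentiableOn ℂ (fun ζ : ℂ => ∫ t in Ioi (0 : ℝ),
      ((t ^ (a - 1) : ℝ) : ℂ) * Complex.exp (-(ζ * t))) {ζ | 0 < ζ.re} := by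
  intro ζ hζ
  have hζ' : 0 < ζ.re := hζ
  have hmeas : ∀ (p : ℝ) (x : ℂ), AEStronglyMeasurable
      (fun t : ℝ => ((t ^ p : ℝ) : ℂ) * Complex.exp (-(x * t))) (volume.restrict (Ioi 0)) := by
    intro p x
    have : Measurable (fun t : ℝ => ((t ^ p : ℝ) : ℂ) * Complex.exp (-(x * t))) := by
      fun_prop
    exact this.aestronglyMeasurable
  have hnorm : ∀ (p : ℝ) (x : ℂ) (t : ℝ), 0 < t →
      ‖((t ^ p : ℝ) : ℂ) * Complex.exp (-(x * t))‖ = t ^ p * Real.exp (-(x.re * t)) := by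
    intro p x t ht
    rw [norm_mul, Complex.norm_real, Complex.norm_exp, Real.norm_of_nonneg (by positivity)]
    simp
  have key := hasDerivAt_integral_of_dominated_loc_of_deriv_le (𝕜 := ℂ)
    (μ := volume.restrict (Ioi (0 : ℝ)))
    (F := fun ζ t => ((t ^ (a - 1) : ℝ) : ℂ) * Complex.exp (-(ζ * t)))
    (F' := fun ζ t => -(((t ^ (a + 1 - 1) : ℝ) : ℂ) * Complex.exp (-(ζ * t))))
    (x₀ := ζ) (s := {x : ℂ | ζ.re / 2 < x.re})
    (bound := fun t => t ^ (a + 1 - 1) * Real.exp (-(ζ.re / 2 * t)))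
    ((isOpen_lt continuous_const Complex.continuous_re).mem_nhds (by simp; linarith))
    (Eventually.of_forall fun x => hmeas _ x)
    ?_ ((hmeas _ ζ).neg) ?_ (mw_gamma_integrable (a + 1) (by linarith) _ (by linarith)) ?_
  · exact key.2.differentiableAt.differentiableWithinAt
  · refine (mw_gamma_integrable a ha ζ.re hζ).mono' (hmeas _ ζ) ?_
    filter_upwards [ae_restrict_mem measurableSet_Ioi] with t ht
    rw [hnorm _ _ _ ht]
  · filter_upwards [ae_restrict_mem measurableSet_Ioi] with t ht x hx
    rw [norm_neg, hnorm _ _ _ ht]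
    have ht' : (0 : ℝ) < t := ht
    have hx' : ζ.re / 2 < x.re := hx
    gcongr
  · filter_upwards [ae_restrict_mem measurableSet_Ioi] with t ht x hx
    have ht' : (0 : ℝ) < t := ht
    have h1 : HasDerivAt (fun x : ℂ => -(x * t)) (-(1 * (t : ℂ))) x :=
      ((hasDerivAt_id x).mul_const (t : ℂ)).neg
    have h2 := (h1.cexp).const_mul ((t ^ (a - 1) : ℝ) : ℂ)
    refine h2.congr_deriv ?_
    have : t ^ (a + 1 - 1) = t ^ (a - 1) * t := by
      rw [show a + 1 - 1 = (a - 1) + 1 by ring, Real.rpow_add_one ht'.ne']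
    rw [this]
    push_cast
    ring

lemma mw_gammaInt (a : ℝ) (ha : 0 < a) (ζ : ℂ) (hζ : 0 < ζ.re) :
    ∫ t in Ioi (0 : ℝ), ((t ^ (a - 1) : ℝ) : ℂ) * Complex.exp (-(ζ * t)) =
      Complex.exp (-(a * Complex.log ζ)) * Real.Gamma a := by
  have hopen : IsOpen {ζ : ℂ | 0 < ζ.re} := isOpen_lt continuous_const Complex.continuous_re
  have h1 := (mw_gamma_diff a ha).analyticOnNhd hopen
  have h2 : AnalyticOnNhd ℂ (fun ζ : ℂ => Complex.exp (-(a * Complex.log ζ)) * Real.Gamma a)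
      {ζ | 0 < ζ.re} := by
    refine DifferentiableOn.analyticOnNhd ?_ hopen
    intro x hx
    have hx' : x ∈ Complex.slitPlane := Or.inl hx
    have : DifferentiableAt ℂ (fun ζ : ℂ => Complex.exp (-(a * Complex.log ζ)) * Real.Gamma a) x :=
      (((differentiableAt_id.clog hx').const_mul _).neg.cexp).mul_const _
    exact this.differentiableWithinAt
  have hpre : IsPreconnected {ζ : ℂ | 0 < ζ.re} :=
    (convex_halfSpace_re_gt 0).isPreconnected
  have hreal : ∀ b : ℝ, 0 < b →
      ∫ t in Ioi (0 : ℝ), ((t ^ (a - 1) : ℝ) : ℂ) * Complex.exp (-((b : ℂ) * t)) =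
      Complex.exp (-(a * Complex.log b)) * Real.Gamma a := by
    intro b hb
    have e1 := Real.integral_rpow_mul_exp_neg_mul_Ioi ha hb
    have e2 : ∫ t in Ioi (0 : ℝ), ((t ^ (a - 1) : ℝ) : ℂ) * Complex.exp (-((b : ℂ) * t)) =
      ((∫ t in Ioi (0 : ℝ), t ^ (a - 1) * Real.exp (-(b * t)) : ℝ) : ℂ) := by
      rw [← integral_complex_ofReal]
      congr 1
      ext t
      push_cast
      rfl
    rw [e2, e1, Real.rpow_def_of_pos (by positivity), ← Complex.ofReal_log hb.le, one_div,
      Real.log_inv]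
    push_cast
    congr 2
    ring
  refine h1.eqOn_of_preconnected_of_frequently_eq h2 hpre (z₀ := 1) (by simp) ?_ hζ
  have ht : Tendsto (fun n : ℕ => ((1 + 1 / ((n : ℝ) + 1) : ℝ) : ℂ)) atTop (𝓝[≠] 1) := by
    refine tendsto_nhdsWithin_iff.2 ⟨?_, Eventually.of_forall fun n => ?_⟩
    · have := (tendsto_one_div_add_atTop_nhds_zero_nat (𝕜 := ℝ)).const_add 1
      have h3 := (Complex.continuous_ofReal.tendsto _).comp this
      simpa [Function.comp_def] using h3
    · simp only [mem_compl_iff, mem_singleton_iff]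
      rw [Complex.ofReal_eq_one]
      have : 0 < 1 / ((n : ℝ) + 1) := by positivity
      linarith
  refine ht.frequently (Eventually.frequently (Eventually.of_forall fun n => ?_))
  exact hreal _ (by positivity)

noncomputable def mwSg (θ c s : ℝ) : ℂ := c + s * Complex.exp (θ * Complex.I)

lemma mwSg_re (θ c s : ℝ) : (mwSg θ c s).re = c + s * Real.cos θ := by
  simp [mwSg, Complex.exp_ofReal_mul_I_re]

lemma mwSg_im (θ c s : ℝ) : (mwSg θ c s).im = s * Real.sin θ := by
  simp [mwSg, Complex.exp_ofReal_mul_I_im]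

lemma mwSg_slit {θ c s : ℝ} (hθ : 0 < Real.sin θ) (hc : 0 ≤ c) (hs : 0 ≤ s) (h : 0 < c ∨ 0 < s) :
    mwSg θ c s ∈ Complex.slitPlane := by
  rw [Complex.mem_slitPlane_iff, mwSg_re, mwSg_im]
  rcases hs.eq_or_lt with h0 | h0
  · left
    subst h0
    simpa using h
  · right
    positivity

lemma mwSg_norm_le {θ c s : ℝ} (hc : 0 ≤ c) (hs : 0 ≤ s) : ‖mwSg θ c s‖ ≤ c + s := by
  unfold mwSg
  refine (norm_add_le _ _).trans ?_
  rw [norm_mul, Complex.norm_exp_ofReal_mul_I, Complex.norm_real, Complex.norm_real,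
    Real.norm_of_nonneg hc, Real.norm_of_nonneg hs, mul_one]

lemma mwSg_norm_ge {θ c s : ℝ} (hc : 0 ≤ c) (hθ : 0 < Real.sin θ) :
    c * Real.sin θ ≤ ‖mwSg θ c s‖ := by
  rw [Complex.norm_def]
  apply Real.le_sqrt_of_sq_le
  rw [Complex.normSq_apply, mwSg_re, mwSg_im]
  have e : (c + s * Real.cos θ) * (c + s * Real.cos θ) + s * Real.sin θ * (s * Real.sin θ) =
      (s + c * Real.cos θ) ^ 2 + (c * Real.sin θ) ^ 2 := by
    linear_combination (s ^ 2 - c ^ 2) * Real.sin_sq_add_cos_sq θ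
  rw [e]
  nlinarith [sq_nonneg (s + c * Real.cos θ)]

lemma mw_norm_pow {σ : ℂ} (hσ : σ ≠ 0) (p : ℝ) :
    ‖Complex.exp (p * Complex.log σ)‖ = ‖σ‖ ^ p := by
  rw [Complex.norm_exp, Real.rpow_def_of_pos (norm_pos_iff.2 hσ)]
  simp [Complex.log_re, mul_comm]

lemma mw_pow_bound {x m y p q : ℝ} (hm : 0 < m) (hm1 : m ≤ 1) (hy : 1 ≤ y) (hx : m ≤ x)
    (hxy : x ≤ y) (hpq : |p| ≤ q) : x ^ p ≤ m ^ (-q) * y ^ q := by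
  have hq : 0 ≤ q := (abs_nonneg p).trans hpq
  have hx0 : 0 < x := hm.trans_le hx
  have h1 : 1 ≤ m ^ (-q) := Real.one_le_rpow_of_pos_of_le_one_of_nonpos hm hm1 (by linarith)
  have h2 : 1 ≤ y ^ q := Real.one_le_rpow hy hq
  rcases le_or_gt 0 p with hp | hp
  · have : x ^ p ≤ y ^ q :=
      (Real.rpow_le_rpow hx0.le hxy hp).trans
        (Real.rpow_le_rpow_of_exponent_le hy ((le_abs_self p).trans hpq))
    nlinarith
  · have : x ^ p ≤ m ^ (-q) :=
      (Real.rpow_le_rpow_of_nonpos hm hx hp.le).trans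
        (Real.rpow_le_rpow_of_exponent_ge hm hm1 (by linarith [neg_abs_le p]))
    nlinarith

noncomputable def mwB (β θ q A s : ℝ) : ℝ :=
  Real.exp (1 + s * Real.cos θ) * (1 + s) ^ q * Real.exp (A * (1 + s) ^ β)

lemma mwB_isBigO {β θ : ℝ} (hβ : β < 1) (hθ : Real.cos θ < 0) (q A : ℝ) :
    (mwB β θ q A) =O[atTop] fun s => Real.exp (-(-Real.cos θ / 2) * s) := by
  have hk : 0 < -Real.cos θ / 4 := by linarith
  have h1 : (fun x : ℝ => q * Real.log x + A * x ^ β) =o[atTop] (fun x : ℝ => x) := by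
    refine (Real.isLittleO_log_id_atTop.const_mul_left q).add (Asymptotics.IsLittleO.const_mul_left ?_ A)
    refine Asymptotics.isLittleO_of_tendsto' ?_ ?_
    · filter_upwards [eventually_gt_atTop 0] with x hx hx0
      exact absurd hx0 hx.ne'
    · refine (tendsto_rpow_neg_atTop (y := 1 - β) (by linarith)).congr' ?_
      filter_upwards [eventually_gt_atTop 0] with x hx
      rw [neg_sub, Real.rpow_sub_one hx.ne']
      rfl
  have h2 := (h1.bound hk)
  have h3 : Tendsto (fun s : ℝ => 1 + s) atTop atTop := tendsto_atTop_add_const_left _ _ tendsto_id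
  refine Asymptotics.IsBigO.of_bound (Real.exp (1 - Real.cos θ / 4)) ?_
  filter_upwards [h3.eventually h2, eventually_ge_atTop 0] with s hs hs0
  have hs1 : 0 < 1 + s := by linarith
  have e : mwB β θ q A s = Real.exp (1 + s * Real.cos θ + (q * Real.log (1 + s) + A * (1 + s) ^ β)) := by
    rw [mwB, Real.rpow_def_of_pos hs1 q, ← Real.exp_add, ← Real.exp_add]
    ring_nf
  rw [e, Real.norm_of_nonneg (Real.exp_pos _).le, Real.norm_of_nonneg (Real.exp_pos _).le,
    ← Real.exp_add, Real.exp_le_exp]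
  rw [Real.norm_of_nonneg hs1.le] at hs
  have := (le_abs_self _).trans hs
  nlinarith

lemma mwB_integrable {β θ : ℝ} (hβ : β < 1) (hθ : Real.cos θ < 0) (q A : ℝ) :
    IntegrableOn (mwB β θ q A) (Ioi 0) := by
  refine integrable_of_isBigO_exp_neg (b := -Real.cos θ / 2) (by linarith) ?_
    (mwB_isBigO hβ hθ q A)
  intro s hs
  have hs1 : 1 + s ≠ 0 := by have : (0 : ℝ) ≤ s := hs; linarith
  have h1 : ContinuousAt (fun s : ℝ => 1 + s) s := by fun_prop
  have h2 := h1.rpow_const (p := q) (Or.inl hs1)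
  have h3 := h1.rpow_const (p := β) (Or.inl hs1)
  have : ContinuousAt (mwB β θ q A) s := by
    unfold mwB
    exact ((by fun_prop : ContinuousAt (fun s : ℝ => Real.exp (1 + s * Real.cos θ)) s).mul
      h2).mul (h3.const_mul A).rexp
  exact this.continuousWithinAt

lemma mwB_tendsto {β θ : ℝ} (hβ : β < 1) (hθ : Real.cos θ < 0) (q A : ℝ) :
    Tendsto (mwB β θ q A) atTop (𝓝 0) := by
  refine (mwB_isBigO hβ hθ q A).trans_tendsto ?_
  refine Real.tendsto_exp_atBot.comp ?_
  exact tendsto_id.const_mul_atTop_of_neg (by linarith)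

/-- `e^σ σ^p` -/
noncomputable def mwG (p : ℝ) (σ : ℂ) : ℂ := Complex.exp σ * Complex.exp (p * Complex.log σ)

lemma mwG_norm {σ : ℂ} (hσ : σ ≠ 0) (p : ℝ) : ‖mwG p σ‖ = Real.exp σ.re * ‖σ‖ ^ p := by
  rw [mwG, norm_mul, mw_norm_pow hσ, Complex.norm_exp]

lemma mwG_deriv {σ : ℂ} (hσ : σ ∈ Complex.slitPlane) (p : ℝ) :
    HasDerivAt (mwG p) (mwG p σ + p * mwG (p - 1) σ) σ := by
  have hσ0 := Complex.slitPlane_ne_zero hσ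
  have h1 := (((Complex.hasDerivAt_log hσ).const_mul (p : ℂ)).cexp)
  have h2 := (Complex.hasDerivAt_exp σ).mul h1
  refine h2.congr_deriv ?_
  have : Complex.exp ((p - 1 : ℝ) * Complex.log σ) = Complex.exp (p * Complex.log σ) * σ⁻¹ := by
    push_cast
    rw [sub_mul, Complex.exp_sub, one_mul, Complex.exp_log hσ0, div_eq_mul_inv]
  rw [mwG, mwG, this]
  ring

lemma mwG_measurable (p : ℝ) : Measurable (mwG p) := by
  unfold mwG
  fun_prop

lemma mwSg_measurable (θ : ℝ) : Measurable (fun x : ℝ × ℝ => mwSg θ x.1 x.2) := by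
  unfold mwSg
  fun_prop

lemma mwSg_measurable' (θ c : ℝ) : Measurable (fun s : ℝ => mwSg θ c s) := by
  unfold mwSg
  fun_prop

lemma mwG_bound {β θ c s p q : ℝ} (hθ : 0 < Real.sin θ) (hc : 0 < c) (hc1 : c ≤ 1)
    (hs : 0 ≤ s) (hpq : |p| ≤ q) :
    ‖mwG p (mwSg θ c s)‖ ≤ (c * Real.sin θ) ^ (-q) * mwB β θ q 0 s := by
  rw [mwG_norm (Complex.slitPlane_ne_zero (mwSg_slit hθ hc.le hs (Or.inl hc))), mwSg_re, mwB]
  have h1 : ‖mwSg θ c s‖ ^ p ≤ (c * Real.sin θ) ^ (-q) * (1 + s) ^ q :=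
    mw_pow_bound (by positivity) (by nlinarith [Real.sin_le_one θ]) (by linarith)
      (mwSg_norm_ge hc.le hθ) ((mwSg_norm_le hc.le hs).trans (by linarith)) hpq
  have h2 : Real.exp (c + s * Real.cos θ) ≤ Real.exp (1 + s * Real.cos θ) := by gcongr
  calc _ ≤ Real.exp (1 + s * Real.cos θ) * ((c * Real.sin θ) ^ (-q) * (1 + s) ^ q) := by
        gcongr
    _ = _ := by simp; ring

lemma mwG_integrable {θ c : ℝ} (hθ : 0 < Real.sin θ) (hθ' : Real.cos θ < 0) (hc : 0 < c)
    (hc1 : c ≤ 1) (p : ℝ) : IntegrableOn (fun s => mwG p (mwSg θ c s)) (Ioi 0) := by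
  refine ((mwB_integrable (β := 0) one_pos hθ' |p| 0).const_mul
    ((c * Real.sin θ) ^ (-|p|))).mono'
    ((mwG_measurable p).comp (mwSg_measurable' θ c)).aestronglyMeasurable ?_
  filter_upwards [ae_restrict_mem measurableSet_Ioi] with s hs
  exact mwG_bound hθ hc hc1 (le_of_lt hs) le_rfl

lemma mwSg_hasDerivAt (θ c s : ℝ) :
    HasDerivAt (fun s => mwSg θ c s) (Complex.exp (θ * Complex.I)) s := by
  unfold mwSg
  have := ((Complex.ofRealCLM.hasDerivAt (x := s)).mul_const
    (Complex.exp (θ * Complex.I))).const_add (c : ℂ)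
  simpa using this

lemma mwSg_hasDerivAt' (θ c s : ℝ) :
    HasDerivAt (fun c => mwSg θ c s) 1 c := by
  unfold mwSg
  have := ((Complex.ofRealCLM.hasDerivAt (x := c))).add_const
    ((s : ℂ) * Complex.exp (θ * Complex.I))
  simpa using this

lemma mwG_parts {θ c : ℝ} (hθ : 0 < Real.sin θ) (hθ' : Real.cos θ < 0) (hc : 0 < c)
    (hc1 : c ≤ 1) (p : ℝ) :
    ∫ s in Ioi (0 : ℝ), Complex.exp (θ * Complex.I) *
      (mwG p (mwSg θ c s) + p * mwG (p - 1) (mwSg θ c s)) = - mwG p c := by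
  have h0 : mwSg θ c 0 = c := by simp [mwSg]
  rw [← h0, ← zero_sub]
  refine integral_Ioi_of_hasDerivAt_of_tendsto' (f := fun s => mwG p (mwSg θ c s)) ?_ ?_ ?_
  · intro s hs
    have := (mwG_deriv (mwSg_slit hθ hc.le hs (Or.inl hc)) p).comp_of_eq s (mwSg_hasDerivAt θ c s) rfl
    refine this.congr_deriv ?_
    ring
  · exact ((mwG_integrable hθ hθ' hc hc1 p).add
      ((mwG_integrable hθ hθ' hc hc1 (p - 1)).const_mul _)).const_mul _
  · rw [tendsto_zero_iff_norm_tendsto_zero]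
    have := (mwB_tendsto (β := 0) one_pos hθ' |p| 0).const_mul ((c * Real.sin θ) ^ (-|p|))
    rw [mul_zero] at this
    refine squeeze_zero' (Eventually.of_forall fun s => norm_nonneg _) ?_ this
    filter_upwards [eventually_ge_atTop 0] with s hs
    exact mwG_bound hθ hc hc1 hs le_rfl

lemma mwG_real_im {c : ℝ} (hc : 0 < c) (p : ℝ) : (mwG p c).im = 0 := by
  rw [mwG, ← Complex.ofReal_log hc.le, ← Complex.ofReal_exp, ← Complex.ofReal_mul,
    ← Complex.ofReal_exp, ← Complex.ofReal_mul, Complex.ofReal_im]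

noncomputable def mwJ (θ p : ℝ) : ℝ :=
  (∫ s in Ioi (0 : ℝ), Complex.exp (θ * Complex.I) * mwG p (mwSg θ 1 s)).im

lemma mwJ_rec {θ : ℝ} (hθ : 0 < Real.sin θ) (hθ' : Real.cos θ < 0) (p : ℝ) :
    mwJ θ p + p * mwJ θ (p - 1) = 0 := by
  have h := mwG_parts hθ hθ' one_pos le_rfl p
  have e : ∫ s in Ioi (0 : ℝ), Complex.exp (θ * Complex.I) *
      (mwG p (mwSg θ 1 s) + p * mwG (p - 1) (mwSg θ 1 s)) =
      (∫ s in Ioi (0 : ℝ), Complex.exp (θ * Complex.I) * mwG p (mwSg θ 1 s)) +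
      p * ∫ s in Ioi (0 : ℝ), Complex.exp (θ * Complex.I) * mwG (p - 1) (mwSg θ 1 s) := by
    rw [← integral_const_mul, ← integral_add]
    · congr 1
      ext s
      ring
    · exact (mwG_integrable hθ hθ' one_pos le_rfl p).const_mul _
    · exact ((mwG_integrable hθ hθ' one_pos le_rfl (p - 1)).const_mul _).const_mul _
  rw [e] at h
  have h2 := congrArg Complex.im h
  rw [Complex.add_im, Complex.im_ofReal_mul, Complex.neg_im, mwG_real_im one_pos] at h2
  simpa [mwJ] using h2

lemma mwG_bound' {θ c s p : ℝ} (hθ : 0 < Real.sin θ) (hc : 0 ≤ c) (hc1 : c ≤ 1)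
    (hs : 0 < s) (hp : 0 ≤ p) :
    ‖mwG p (mwSg θ c s)‖ ≤ mwB 0 θ p 0 s := by
  rw [mwG_norm (Complex.slitPlane_ne_zero (mwSg_slit hθ hc hs.le (Or.inr hs))), mwSg_re, mwB]
  have h1 : ‖mwSg θ c s‖ ^ p ≤ (1 + s) ^ p :=
    Real.rpow_le_rpow (norm_nonneg _) ((mwSg_norm_le hc hs.le).trans (by linarith)) hp
  have h2 : Real.exp (c + s * Real.cos θ) ≤ Real.exp (1 + s * Real.cos θ) := by gcongr
  calc _ ≤ Real.exp (1 + s * Real.cos θ) * (1 + s) ^ p := by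
        gcongr
    _ = _ := by simp

lemma mw_refl {p : ℝ} (hp : 0 ≤ p) :
    Real.sin ((p + 1) * Real.pi) * Real.Gamma (p + 1) = Real.pi / Real.Gamma (-p) := by
  have h := Real.Gamma_mul_Gamma_one_sub (p + 1)
  rw [show 1 - (p + 1) = -p by ring, mul_comm Real.pi] at h
  have hG : 0 < Real.Gamma (p + 1) := Real.Gamma_pos_of_pos (by linarith)
  by_cases h0 : Real.sin ((p + 1) * Real.pi) = 0
  · rw [h0, div_zero] at h
    have : Real.Gamma (-p) = 0 := by
      rcases mul_eq_zero.1 h with h | h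
      · exact absurd h hG.ne'
      · exact h
    rw [h0, this]
    simp
  · have h2 : Real.Gamma (-p) ≠ 0 := by
      intro h3
      rw [h3, mul_zero] at h
      have := div_ne_zero Real.pi_ne_zero h0
      exact this h.symm
    rw [eq_div_iff h2]
    rw [eq_div_iff h0] at h
    linarith

lemma mw_base0 {θ p : ℝ} (hθ1 : Real.pi / 2 < θ) (hθ2 : θ < Real.pi) (hp : 0 ≤ p) :
    (∫ s in Ioi (0 : ℝ), Complex.exp (θ * Complex.I) * mwG p (mwSg θ 0 s)).im =
      Real.pi / Real.Gamma (-p) := by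
  have hpi := Real.pi_pos
  have hcos : Real.cos θ < 0 := Real.cos_neg_of_pi_div_two_lt_of_lt hθ1 (by linarith)
  have e1 : ∫ s in Ioi (0 : ℝ), Complex.exp (θ * Complex.I) * mwG p (mwSg θ 0 s) =
      ∫ s in Ioi (0 : ℝ), (Complex.exp (θ * Complex.I) * Complex.exp (p * (θ * Complex.I))) *
        (((s ^ (p + 1 - 1) : ℝ) : ℂ) * Complex.exp (-(-Complex.exp (θ * Complex.I) * s))) := by
    refine setIntegral_congr_fun measurableSet_Ioi fun s hs => ?_
    have hs' : (0 : ℝ) < s := hs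
    have hl : Complex.log (Complex.exp (θ * Complex.I)) = θ * Complex.I :=
      Complex.log_exp (by simp; linarith) (by simp; linarith)
    have h1 : Complex.log (mwSg θ 0 s) = Real.log s + θ * Complex.I := by
      rw [mwSg, Complex.ofReal_zero, zero_add, Complex.log_ofReal_mul hs' (Complex.exp_ne_zero _),
        hl]
    have h2 : ((s ^ (p + 1 - 1) : ℝ) : ℂ) = Complex.exp (p * Real.log s) := by
      rw [add_sub_cancel_right, Real.rpow_def_of_pos hs']
      push_cast
      rw [mul_comm]
    have h3 : -(-Complex.exp (θ * Complex.I) * s) = mwSg θ 0 s := by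
      simp [mwSg, mul_comm]
    simp only [mwG]
    rw [h1, h2, h3, mul_add, Complex.exp_add]
    ring
  have hneg : -Complex.exp (θ * Complex.I) = Complex.exp (((θ - Real.pi : ℝ) : ℂ) * Complex.I) := by
    push_cast
    rw [sub_mul, Complex.exp_sub, Complex.exp_pi_mul_I, div_neg, div_one]
  have hlog : Complex.log (-Complex.exp (θ * Complex.I)) = ((θ - Real.pi : ℝ) : ℂ) * Complex.I := by
    rw [hneg]
    exact Complex.log_exp (by simp; linarith) (by simp; linarith)
  rw [e1, integral_const_mul, mw_gammaInt (p + 1) (by linarith) _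
    (by simp [Complex.exp_ofReal_mul_I_re]; exact hcos), hlog, ← mul_assoc, ← Complex.exp_add,
    ← Complex.exp_add, ← mw_refl hp]
  have e2 : (θ : ℂ) * Complex.I + p * (θ * Complex.I) +
      -(((p + 1 : ℝ) : ℂ) * (((θ - Real.pi : ℝ) : ℂ) * Complex.I)) =
      (((p + 1) * Real.pi : ℝ) : ℂ) * Complex.I := by
    push_cast
    ring
  rw [e2, Complex.im_mul_ofReal, Complex.exp_ofReal_mul_I_im]

lemma mwJ_base {θ p : ℝ} (hθ1 : Real.pi / 2 < θ) (hθ2 : θ < Real.pi) (hp : 1 ≤ p) :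
    mwJ θ p = Real.pi / Real.Gamma (-p) := by
  have hpi := Real.pi_pos
  have hcos : Real.cos θ < 0 := Real.cos_neg_of_pi_div_two_lt_of_lt hθ1 (by linarith)
  have hsin : 0 < Real.sin θ := Real.sin_pos_of_pos_of_lt_pi (by linarith) hθ2
  rw [← mw_base0 hθ1 hθ2 (by linarith), mwJ, ← sub_eq_zero, ← Complex.sub_im]
  have hI0 : IntegrableOn (fun s => Complex.exp (θ * Complex.I) * mwG p (mwSg θ 0 s)) (Ioi 0) := by
    refine Integrable.const_mul ?_ _
    refine (mwB_integrable (β := 0) one_pos hcos p 0).mono'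
      ((mwG_measurable p).comp (mwSg_measurable' θ 0)).aestronglyMeasurable ?_
    filter_upwards [ae_restrict_mem measurableSet_Ioi] with s hs
    exact mwG_bound' hsin le_rfl zero_le_one hs (by linarith)
  rw [← integral_sub ((mwG_integrable hsin hcos one_pos le_rfl p).const_mul _) hI0]
  set D : ℝ → ℝ → ℂ := fun s c => Complex.exp (θ * Complex.I) *
      (mwG p (mwSg θ c s) + p * mwG (p - 1) (mwSg θ c s)) with hD
  have hDm : Measurable (Function.uncurry D) := by
    have h1 : Measurable (fun x : ℝ × ℝ => mwSg θ x.2 x.1) :=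
      (mwSg_measurable θ).comp measurable_swap
    exact (((mwG_measurable p).comp h1).add
      (((mwG_measurable (p - 1)).comp h1).const_mul _)).const_mul _
  have hDb : ∀ s c : ℝ, 0 < s → 0 ≤ c → c ≤ 1 →
      ‖D s c‖ ≤ mwB 0 θ p 0 s + p * mwB 0 θ (p - 1) 0 s := by
    intro s c hs hc hc1
    rw [hD]
    rw [norm_mul, Complex.norm_exp_ofReal_mul_I, one_mul]
    refine (norm_add_le _ _).trans ?_
    rw [norm_mul, Complex.norm_real, Real.norm_of_nonneg (by linarith)]
    have h1 := mwG_bound' (p := p) hsin hc hc1 hs (by linarith)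
    have h2 := mwG_bound' (p := p - 1) hsin hc hc1 hs (by linarith)
    nlinarith
  have hDi : Integrable (Function.uncurry D)
      ((volume.restrict (Ioi 0)).prod (volume.restrict (Ioc 0 1))) := by
    have hb : Integrable (fun s => mwB 0 θ p 0 s + p * mwB 0 θ (p - 1) 0 s)
        (volume.restrict (Ioi 0)) :=
      (mwB_integrable (β := 0) one_pos hcos p 0).add
        ((mwB_integrable (β := 0) one_pos hcos (p - 1) 0).const_mul p)
    have hone : Integrable (fun _ : ℝ => (1 : ℝ)) (volume.restrict (Ioc (0 : ℝ) 1)) :=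
      integrable_const _
    refine (hb.mul_prod hone).mono' hDm.aestronglyMeasurable ?_
    rw [Measure.prod_restrict]
    filter_upwards [ae_restrict_mem (measurableSet_Ioi.prod measurableSet_Ioc)] with x hx
    rw [mul_one]
    exact hDb x.1 x.2 hx.1 hx.2.1.le hx.2.2
  have e1 : ∫ s in Ioi (0 : ℝ), (Complex.exp (θ * Complex.I) * mwG p (mwSg θ 1 s) -
      Complex.exp (θ * Complex.I) * mwG p (mwSg θ 0 s)) =
      ∫ s in Ioi (0 : ℝ), ∫ c in Ioc (0 : ℝ) 1, D s c := by
    refine setIntegral_congr_fun measurableSet_Ioi fun s hs => ?_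
    have hs' : (0 : ℝ) < s := hs
    rw [← intervalIntegral.integral_of_le zero_le_one]
    symm
    refine intervalIntegral.integral_eq_sub_of_hasDerivAt
      (f := fun c => Complex.exp (θ * Complex.I) * mwG p (mwSg θ c s)) ?_ ?_
    · intro c hc
      rw [uIcc_of_le zero_le_one] at hc
      have := (mwG_deriv (mwSg_slit hsin hc.1 hs'.le (Or.inr hs')) p).comp_of_eq c
        (mwSg_hasDerivAt' θ c s) rfl
      refine (this.const_mul _).congr_deriv ?_
      rw [hD]
      ring
    · rw [intervalIntegrable_iff_integrableOn_Ioc_of_le zero_le_one]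
      have hm : Measurable (D s) := hDm.of_uncurry_left
      refine Integrable.mono' (integrable_const (mwB 0 θ p 0 s + p * mwB 0 θ (p - 1) 0 s))
        hm.aestronglyMeasurable ?_
      filter_upwards [ae_restrict_mem measurableSet_Ioc] with c hc
      exact hDb s c hs' hc.1.le hc.2
  rw [e1, integral_integral_swap hDi]
  have e2 : ∫ c in Ioc (0 : ℝ) 1, ∫ s in Ioi (0 : ℝ), D s c =
      ∫ c in Ioc (0 : ℝ) 1, (((-mwG p c).re : ℝ) : ℂ) := by
    refine setIntegral_congr_fun measurableSet_Ioc fun c hc => ?_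
    rw [hD, mwG_parts hsin hcos hc.1 hc.2 p]
    apply Complex.ext
    · simp
    · simp [mwG_real_im hc.1]
  rw [e2, integral_complex_ofReal, Complex.ofReal_im]

lemma mwJ_tendsto {θ : ℝ} (hθ1 : Real.pi / 2 < θ) (hθ2 : θ < Real.pi) :
    Tendsto (mwJ θ) (𝓝 (-1)) (𝓝 (mwJ θ (-1))) := by
  have hpi := Real.pi_pos
  have hcos : Real.cos θ < 0 := Real.cos_neg_of_pi_div_two_lt_of_lt hθ1 (by linarith)
  have hsin : 0 < Real.sin θ := Real.sin_pos_of_pos_of_lt_pi (by linarith) hθ2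
  unfold mwJ
  refine (Complex.continuous_im.tendsto _).comp ?_
  refine tendsto_integral_filter_of_dominated_convergence
    (fun s => (1 * Real.sin θ) ^ (-(2 : ℝ)) * mwB 0 θ 2 0 s) ?_ ?_ ?_ ?_
  · exact Eventually.of_forall fun p => (((mwG_measurable p).comp
      (mwSg_measurable' θ 1)).const_mul _).aestronglyMeasurable
  · filter_upwards [Ioo_mem_nhds (show (-2 : ℝ) < -1 by norm_num) (show (-1 : ℝ) < 0 by norm_num)]
      with p hp
    filter_upwards [ae_restrict_mem measurableSet_Ioi] with s hs
    rw [norm_mul, Complex.norm_exp_ofReal_mul_I, one_mul]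
    exact mwG_bound hsin one_pos le_rfl (le_of_lt hs) (abs_le.2 ⟨by linarith [hp.1], by linarith [hp.2]⟩)
  · exact (mwB_integrable (β := 0) one_pos hcos 2 0).const_mul _
  · refine Eventually.of_forall fun s => ?_
    have : Continuous (fun p : ℝ => Complex.exp (θ * Complex.I) * mwG p (mwSg θ 1 s)) := by
      unfold mwG
      fun_prop
    exact this.tendsto _

lemma mw_Gamma_rec (p : ℝ) (hp : p ≠ 0) {J J' : ℝ} (h : J + p * J' = 0)
    (hJ : J = Real.pi / Real.Gamma (-p)) : J' = Real.pi / Real.Gamma (-(p - 1)) := by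
  have h1 : Real.Gamma (-(p - 1)) = -p * Real.Gamma (-p) := by
    rw [← Real.Gamma_add_one (neg_ne_zero.2 hp)]
    congr 1
    ring
  have h2 : J' = -J / p := by
    field_simp
    linarith
  rw [h2, hJ, h1]
  by_cases h0 : Real.Gamma (-p) = 0
  · simp [h0]
  · field_simp

lemma mwJ_step {θ p : ℝ} (hθ1 : Real.pi / 2 < θ) (hθ2 : θ < Real.pi) (hp : p ≠ 0)
    (hJ : mwJ θ p = Real.pi / Real.Gamma (-p)) :
    mwJ θ (p - 1) = Real.pi / Real.Gamma (-(p - 1)) := by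
  have hpi := Real.pi_pos
  have hcos : Real.cos θ < 0 := Real.cos_neg_of_pi_div_two_lt_of_lt hθ1 (by linarith)
  have hsin : 0 < Real.sin θ := Real.sin_pos_of_pos_of_lt_pi (by linarith) hθ2
  exact mw_Gamma_rec p hp (mwJ_rec hsin hcos p) hJ

lemma mwJ_nonneg {θ p : ℝ} (hθ1 : Real.pi / 2 < θ) (hθ2 : θ < Real.pi) (hp : 0 ≤ p) :
    mwJ θ p = Real.pi / Real.Gamma (-p) := by
  have := mwJ_step (p := p + 1) hθ1 hθ2 (by linarith) (mwJ_base hθ1 hθ2 (by linarith))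
  simpa using this

lemma mwJ_neg_one {θ : ℝ} (hθ1 : Real.pi / 2 < θ) (hθ2 : θ < Real.pi) :
    mwJ θ (-1) = Real.pi / Real.Gamma (- -1) := by
  have hc : ContinuousAt (fun p : ℝ => Real.pi / Real.Gamma (-p)) (-1) := by
    have : ContinuousAt Real.Gamma (- -1) := by
      refine (Real.differentiableAt_Gamma fun m => ?_).continuousAt
      have : (0 : ℝ) ≤ m := Nat.cast_nonneg m
      intro h
      linarith
    refine continuousAt_const.div (ContinuousAt.comp (f := fun p : ℝ => -p) this (by fun_prop)) ?_
    exact (Real.Gamma_pos_of_pos (by norm_num)).ne'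
  have h1 := (mwJ_tendsto hθ1 hθ2).mono_left (nhdsWithin_le_nhds (s := Ioi (-1)))
  have h2 := hc.tendsto.mono_left (nhdsWithin_le_nhds (s := Ioi (-1)))
  refine tendsto_nhds_unique h1 (h2.congr' ?_)
  filter_upwards [self_mem_nhdsWithin] with p hp
  have hp' : -1 < p := hp
  have := mwJ_step (p := p + 1) hθ1 hθ2 (by linarith) (mwJ_nonneg hθ1 hθ2 (by linarith))
  simpa using this.symm

lemma mwJ_eq {θ : ℝ} (hθ1 : Real.pi / 2 < θ) (hθ2 : θ < Real.pi) (p : ℝ) :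
    mwJ θ p = Real.pi / Real.Gamma (-p) := by
  have key : ∀ n : ℕ, ∀ p : ℝ, -(n : ℝ) ≤ p → mwJ θ p = Real.pi / Real.Gamma (-p) := by
    intro n
    induction n with
    | zero => intro p hp; exact mwJ_nonneg hθ1 hθ2 (by simpa using hp)
    | succ n ih =>
      intro p hp
      by_cases h : p = -1
      · rw [h]
        exact mwJ_neg_one hθ1 hθ2
      · have hne : p + 1 ≠ 0 := fun h' => h (by linarith)
        have := mwJ_step (p := p + 1) hθ1 hθ2 hne (ih _ (by push_cast at hp; linarith))
        simpa using this
  obtain ⟨n, hn⟩ := exists_nat_ge (-p)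
  exact key n p (by linarith)

lemma mw_rep {β θ : ℝ} (hβ₀ : 0 < β) (hβ₁ : β < 1) (hθ1 : Real.pi / 2 < θ) (hθ2 : θ < Real.pi)
    (z : ℝ) :
    Real.pi * mWright β z = (∫ s in Ioi (0 : ℝ), Complex.exp (θ * Complex.I) *
      mwG (β - 1) (mwSg θ 1 s) *
      Complex.exp (-(Complex.exp (β * Complex.log (mwSg θ 1 s)) * z))).im := by
  have hpi := Real.pi_pos
  have hcos : Real.cos θ < 0 := Real.cos_neg_of_pi_div_two_lt_of_lt hθ1 (by linarith)
  have hsin : 0 < Real.sin θ := Real.sin_pos_of_pos_of_lt_pi (by linarith) hθ2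
  have hne : ∀ s : ℝ, 0 < s → mwSg θ 1 s ≠ 0 := fun s hs =>
    Complex.slitPlane_ne_zero (mwSg_slit hsin zero_le_one hs.le (Or.inr hs))
  have hG : ∀ (n : ℕ) (σ : ℂ), mwG (β * n + β - 1) σ =
      mwG (β - 1) σ * Complex.exp (β * Complex.log σ) ^ n := by
    intro n σ
    rw [mwG, mwG, ← Complex.exp_nat_mul, ← Complex.exp_add, ← Complex.exp_add, ← Complex.exp_add]
    congr 1
    push_cast
    ring
  have hexp : ∀ x : ℝ, HasSum (fun n : ℕ => x ^ n / (n.factorial : ℝ)) (Real.exp x) := by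
    intro x
    rw [Real.exp_eq_exp_ℝ]
    exact NormedSpace.expSeries_div_hasSum_exp x
  have hcexp : ∀ x : ℂ, HasSum (fun n : ℕ => x ^ n / (n.factorial : ℂ)) (Complex.exp x) := by
    intro x
    rw [Complex.exp_eq_exp_ℂ]
    exact NormedSpace.expSeries_div_hasSum_exp x
  have key := hasSum_integral_of_dominated_convergence (μ := volume.restrict (Ioi (0 : ℝ)))
    (F := fun (n : ℕ) (s : ℝ) => (((-z) ^ n / (n.factorial : ℝ) : ℝ) : ℂ) *
      (Complex.exp (θ * Complex.I) * mwG (β * n + β - 1) (mwSg θ 1 s)))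
    (f := fun s => Complex.exp (θ * Complex.I) *
      mwG (β - 1) (mwSg θ 1 s) *
      Complex.exp (-(Complex.exp (β * Complex.log (mwSg θ 1 s)) * z)))
    (fun n s => ‖mwG (β - 1) (mwSg θ 1 s)‖ *
      ((|z| * ‖Complex.exp (β * Complex.log (mwSg θ 1 s))‖) ^ n / (n.factorial : ℝ)))
    ?_ ?_ ?_ ?_ ?_
  · have h2 := Complex.hasSum_im key
    rw [← h2.tsum_eq, mWright, ← tsum_mul_left]
    congr 1
    ext n
    rw [integral_const_mul, Complex.im_ofReal_mul]
    have := mwJ_eq hθ1 hθ2 (β * n + β - 1)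
    rw [mwJ] at this
    rw [this, show -(β * n + β - 1) = -β * n + 1 - β by ring, div_mul_div_comm]
    ring
  · intro n
    exact ((((mwG_measurable _).comp (mwSg_measurable' θ 1)).const_mul _).const_mul
      _).aestronglyMeasurable
  · intro n
    refine Eventually.of_forall fun s => ?_
    rw [hG, norm_mul, norm_mul, norm_mul, Complex.norm_exp_ofReal_mul_I, Complex.norm_real,
      norm_div, norm_pow, norm_pow, norm_neg, Real.norm_eq_abs, Real.norm_eq_abs, Nat.abs_cast,
      mul_pow]
    apply le_of_eq
    ring
  · exact Eventually.of_forall fun s => (hexp _).summable.mul_left _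
  · have e : (fun s => ∑' n : ℕ, ‖mwG (β - 1) (mwSg θ 1 s)‖ *
        ((|z| * ‖Complex.exp (β * Complex.log (mwSg θ 1 s))‖) ^ n / (n.factorial : ℝ))) =
        fun s => ‖mwG (β - 1) (mwSg θ 1 s)‖ *
          Real.exp (|z| * ‖Complex.exp (β * Complex.log (mwSg θ 1 s))‖) := by
      ext s
      rw [tsum_mul_left, (hexp _).tsum_eq]
    rw [e]
    have hm := mwSg_measurable' θ 1
    have hm' := (mwG_measurable (β - 1)).comp hm
    refine ((mwB_integrable hβ₁ hcos |β - 1| |z|).const_mul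
      ((1 * Real.sin θ) ^ (-|β - 1|))).mono' ?_ ?_
    · refine Measurable.aestronglyMeasurable ?_
      refine hm'.norm.mul (Real.measurable_exp.comp (Measurable.const_mul ?_ _))
      fun_prop
    · filter_upwards [ae_restrict_mem measurableSet_Ioi] with s hs
      have hs' : (0 : ℝ) < s := hs
      have h1 := mwG_bound (β := β) (p := β - 1) hsin one_pos le_rfl hs'.le le_rfl
      rw [Real.norm_of_nonneg (by positivity), mw_norm_pow (hne s hs')]
      have h2 : ‖mwSg θ 1 s‖ ^ β ≤ (1 + s) ^ β :=
        Real.rpow_le_rpow (norm_nonneg _) (mwSg_norm_le zero_le_one hs'.le) hβ₀.le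
      calc _ ≤ (1 * Real.sin θ) ^ (-|β - 1|) * mwB β θ |β - 1| 0 s *
            Real.exp (|z| * (1 + s) ^ β) :=
            mul_le_mul h1 (by gcongr) (Real.exp_pos _).le ((norm_nonneg _).trans h1)
        _ = _ := by
          simp only [mwB, zero_mul, Real.exp_zero, mul_one]
          ring
  · refine Eventually.of_forall fun s => ?_
    have := (hcexp (-(Complex.exp (β * Complex.log (mwSg θ 1 s)) * z))).mul_left
      (Complex.exp (θ * Complex.I) * mwG (β - 1) (mwSg θ 1 s))
    refine HasSum.congr_fun this fun n => ?_
    rw [hG]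
    push_cast
    rw [neg_mul_eq_mul_neg, mul_pow]
    ring

lemma mw_arg {θ s : ℝ} (hθ1 : Real.pi / 2 < θ) (hθ2 : θ < Real.pi) (hs : 0 < s) :
    0 ≤ (mwSg θ 1 s).arg ∧ (mwSg θ 1 s).arg ≤ θ := by
  have hpi := Real.pi_pos
  have hsin : 0 < Real.sin θ := Real.sin_pos_of_pos_of_lt_pi (by linarith) hθ2
  have h0 : 0 ≤ (mwSg θ 1 s).arg := by
    rw [Complex.arg_nonneg_iff, mwSg_im]
    positivity
  refine ⟨h0, ?_⟩
  by_contra! hcon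
  have hne : 0 < ‖mwSg θ 1 s‖ := lt_of_lt_of_le (by positivity) (mwSg_norm_ge zero_le_one hsin)
  have h1 : 0 < Real.sin ((mwSg θ 1 s).arg - θ) :=
    Real.sin_pos_of_pos_of_lt_pi (by linarith) (by linarith [Complex.arg_le_pi (mwSg θ 1 s)])
  rw [Real.sin_sub] at h1
  have h2 := mul_pos hne h1
  have h3 : ‖mwSg θ 1 s‖ * Real.cos (mwSg θ 1 s).arg = 1 + s * Real.cos θ := by
    rw [Complex.norm_mul_cos_arg, mwSg_re]
  have h4 : ‖mwSg θ 1 s‖ * Real.sin (mwSg θ 1 s).arg = s * Real.sin θ := by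
    rw [Complex.norm_mul_sin_arg, mwSg_im]
  have h5 : ‖mwSg θ 1 s‖ * (Real.sin (mwSg θ 1 s).arg * Real.cos θ -
      Real.cos (mwSg θ 1 s).arg * Real.sin θ) = -Real.sin θ := by
    linear_combination Real.cos θ * h4 - Real.sin θ * h3
  linarith

lemma mw_re_bound {β θ s : ℝ} (hβ₀ : 0 < β) (hθ1 : Real.pi / 2 < θ) (hθ2 : θ < Real.pi)
    (hθβ : β * θ < Real.pi / 2) (hs : 0 < s) :
    (Real.sin θ) ^ β * Real.cos (β * θ) ≤
      (Complex.exp (β * Complex.log (mwSg θ 1 s))).re := by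
  have hpi := Real.pi_pos
  have hsin : 0 < Real.sin θ := Real.sin_pos_of_pos_of_lt_pi (by linarith) hθ2
  have hge := mwSg_norm_ge (s := s) zero_le_one hsin
  rw [one_mul] at hge
  have hne : 0 < ‖mwSg θ 1 s‖ := lt_of_lt_of_le hsin hge
  obtain ⟨ha, hb⟩ := mw_arg hθ1 hθ2 hs
  have e : (Complex.exp (β * Complex.log (mwSg θ 1 s))).re =
      ‖mwSg θ 1 s‖ ^ β * Real.cos (β * (mwSg θ 1 s).arg) := by
    rw [Complex.exp_re, Real.rpow_def_of_pos hne]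
    simp [Complex.log_re, Complex.log_im, mul_comm]
  rw [e]
  have h1 : Real.cos (β * θ) ≤ Real.cos (β * (mwSg θ 1 s).arg) :=
    Real.cos_le_cos_of_nonneg_of_le_pi (by positivity) (by linarith) (by gcongr)
  have h2 : 0 < Real.cos (β * θ) := Real.cos_pos_of_mem_Ioo ⟨by nlinarith, hθβ⟩
  have h3 : Real.sin θ ^ β ≤ ‖mwSg θ 1 s‖ ^ β := Real.rpow_le_rpow hsin.le hge hβ₀.le
  have h4 : 0 < Real.sin θ ^ β := Real.rpow_pos_of_pos hsin _
  exact mul_le_mul h3 h1 h2.le (by positivity)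

/-- For `0 < β < 1` and `r > -1`, the moments of the M-Wright function satisfy
`∫_0^∞ τ^r M_β(τ) dτ = Γ(r+1)/Γ(βr+1)`. -/
theorem mWright_moments (β : ℝ) (hβ₀ : 0 < β) (hβ₁ : β < 1) (r : ℝ) (hr : -1 < r) :
    ∫ τ in Set.Ioi (0 : ℝ), τ ^ r * mWright β τ =
      Real.Gamma (r + 1) / Real.Gamma (β * r + 1) := by
  have hpi := Real.pi_pos
  obtain ⟨θ, hθ1, hθ3⟩ : ∃ θ, Real.pi / 2 < θ ∧ θ < min Real.pi (Real.pi / 2 / β) := by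
    apply exists_between
    rw [lt_min_iff]
    refine ⟨by linarith, ?_⟩
    rw [lt_div_iff₀ hβ₀]
    nlinarith
  have hθ2 : θ < Real.pi := hθ3.trans_le (min_le_left _ _)
  have hθβ : β * θ < Real.pi / 2 := by
    have := hθ3.trans_le (min_le_right _ _)
    rw [lt_div_iff₀ hβ₀] at this
    linarith
  have hcos : Real.cos θ < 0 := Real.cos_neg_of_pi_div_two_lt_of_lt hθ1 (by linarith)
  have hsin : 0 < Real.sin θ := Real.sin_pos_of_pos_of_lt_pi (by linarith) hθ2
  set δ : ℝ := (Real.sin θ) ^ β * Real.cos (β * θ) with hδ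
  have hδ0 : 0 < δ := mul_pos (Real.rpow_pos_of_pos hsin _)
    (Real.cos_pos_of_mem_Ioo ⟨by nlinarith, hθβ⟩)
  set F : ℝ → ℝ → ℂ := fun τ s => ((τ ^ (r + 1 - 1) : ℝ) : ℂ) * (Complex.exp (θ * Complex.I) *
      mwG (β - 1) (mwSg θ 1 s) *
      Complex.exp (-(Complex.exp (β * Complex.log (mwSg θ 1 s)) * τ))) with hF
  have hFm : Measurable (Function.uncurry F) := by
    have hm : Measurable (fun x : ℝ × ℝ => mwSg θ 1 x.2) := (mwSg_measurable' θ 1).comp measurable_snd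
    have hm' := (mwG_measurable (β - 1)).comp hm
    have h1 : Measurable (fun x : ℝ × ℝ => ((x.1 ^ (r + 1 - 1) : ℝ) : ℂ)) := by fun_prop
    have h2 : Measurable (fun x : ℝ × ℝ =>
      Complex.exp (-(Complex.exp (β * Complex.log (mwSg θ 1 x.2)) * x.1))) := by fun_prop
    exact h1.mul ((hm'.const_mul _).mul h2)
  have hFi : Integrable (Function.uncurry F)
      ((volume.restrict (Ioi 0)).prod (volume.restrict (Ioi 0))) := by
    have hb := mw_gamma_integrable (r + 1) (by linarith) δ hδ0
    have hg := (mwG_integrable hsin hcos one_pos le_rfl (β - 1)).norm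
    refine (Integrable.mul_prod hb hg).mono' hFm.aestronglyMeasurable ?_
    rw [Measure.prod_restrict]
    filter_upwards [ae_restrict_mem (measurableSet_Ioi.prod measurableSet_Ioi)] with x hx
    have hx1 : (0 : ℝ) < x.1 := hx.1
    have hx2 : (0 : ℝ) < x.2 := hx.2
    have hre := mw_re_bound hβ₀ hθ1 hθ2 hθβ hx2
    simp only [Function.uncurry, hF]
    rw [norm_mul, norm_mul, norm_mul, Complex.norm_exp_ofReal_mul_I, Complex.norm_real,
      Real.norm_of_nonneg (by positivity), one_mul, Complex.norm_exp (-(_ * _)), Complex.neg_re,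
      Complex.re_mul_ofReal]
    have : Real.exp (-((Complex.exp (β * Complex.log (mwSg θ 1 x.2))).re * x.1)) ≤
        Real.exp (-(δ * x.1)) := by gcongr
    calc _ ≤ x.1 ^ (r + 1 - 1) * (‖mwG (β - 1) (mwSg θ 1 x.2)‖ * Real.exp (-(δ * x.1))) := by
          gcongr
      _ = _ := by ring
  have e1 : ∀ τ : ℝ, τ ^ r * mWright β τ = Real.pi⁻¹ * (∫ s in Ioi (0 : ℝ), F τ s).im := by
    intro τ
    rw [hF, integral_const_mul, Complex.im_ofReal_mul, ← mw_rep hβ₀ hβ₁ hθ1 hθ2,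
      add_sub_cancel_right]
    field_simp
  have e2 : ∫ τ in Ioi (0 : ℝ), (∫ s in Ioi (0 : ℝ), F τ s).im =
      (∫ τ in Ioi (0 : ℝ), ∫ s in Ioi (0 : ℝ), F τ s).im :=
    integral_im (𝕜 := ℂ) hFi.integral_prod_left
  have e3 : ∫ s in Ioi (0 : ℝ), ∫ τ in Ioi (0 : ℝ), F τ s =
      ∫ s in Ioi (0 : ℝ), ((Real.Gamma (r + 1) : ℝ) : ℂ) * (Complex.exp (θ * Complex.I) *
        mwG (-(β * r) - 1) (mwSg θ 1 s)) := by
    refine setIntegral_congr_fun measurableSet_Ioi fun s hs => ?_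
    have hs' : (0 : ℝ) < s := hs
    have hre := mw_re_bound hβ₀ hθ1 hθ2 hθβ hs'
    obtain ⟨ha, hb⟩ := mw_arg hθ1 hθ2 hs'
    have hlog : Complex.log (Complex.exp (β * Complex.log (mwSg θ 1 s))) =
        β * Complex.log (mwSg θ 1 s) := by
      apply Complex.log_exp
      · rw [Complex.im_ofReal_mul, Complex.log_im]
        nlinarith [mul_nonneg hβ₀.le ha]
      · rw [Complex.im_ofReal_mul, Complex.log_im]
        nlinarith [mul_le_mul_of_nonneg_left hb hβ₀.le]
    have h1 : ∀ τ, F τ s = (Complex.exp (θ * Complex.I) * mwG (β - 1) (mwSg θ 1 s)) *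
        (((τ ^ (r + 1 - 1) : ℝ) : ℂ) *
          Complex.exp (-(Complex.exp (β * Complex.log (mwSg θ 1 s)) * τ))) := by
      intro τ
      rw [hF]
      ring
    simp only [h1]
    rw [integral_const_mul, mw_gammaInt (r + 1) (by linarith) _ (hδ0.trans_le hre), hlog]
    have h2 : mwG (-(β * r) - 1) (mwSg θ 1 s) = mwG (β - 1) (mwSg θ 1 s) *
        Complex.exp (-(((r + 1 : ℝ) : ℂ) * (β * Complex.log (mwSg θ 1 s)))) := by
      rw [mwG, mwG, ← Complex.exp_add, ← Complex.exp_add, ← Complex.exp_add]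
      congr 1
      push_cast
      ring
    rw [h2]
    ring
  simp only [e1]
  rw [integral_const_mul, e2, integral_integral_swap hFi, e3, integral_const_mul,
    Complex.im_ofReal_mul]
  have hJ := mwJ_eq hθ1 hθ2 (-(β * r) - 1)
  rw [mwJ] at hJ
  rw [hJ, show -(-(β * r) - 1) = β * r + 1 by ring]
  field_simp
end

section
/- For 0 < β ≤ 1 and every s ≥ 0, 0 ≤ E_β(−s) ≤ 1 and E_β(−s) is non-increasing in s. -/
open Filter Topology Finset

/-- Coefficients of `(1-z)^r`. -/
noncomputable def mlq (r : ℝ) (n : ℕ) : ℝ := ∏ j ∈ range n, (((j : ℝ) - r) / (j + 1))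

lemma mlq_zero (r : ℝ) : mlq r 0 = 1 := by simp [mlq]

lemma mlq_succ (r : ℝ) (n : ℕ) : mlq r (n+1) = mlq r n * (((n : ℝ) - r) / (n + 1)) := by
  rw [mlq, prod_range_succ, mlq]

lemma mlq_eq_choose (r : ℝ) (n : ℕ) : mlq r n = (-1) ^ n * Ring.choose r n := by
  have key : (descPochhammer ℤ n).smeval r = (-1) ^ n * n.factorial * mlq r n := by
    induction n with
    | zero => simp [mlq_zero]
    | succ n ih =>
      rw [descPochhammer_succ_right, Polynomial.smeval_mul, ih, mlq_succ, Nat.factorial_succ]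
      have : ((n : ℝ) + 1) ≠ 0 := by positivity
      simp only [Polynomial.smeval_sub, Polynomial.smeval_X, Polynomial.smeval_natCast]
      push_cast
      field_simp
      simp
      ring
  rw [Ring.choose_eq_smul, key]
  have h1 : (n.factorial : ℝ) ≠ 0 := by positivity
  have h2 : ((-1 : ℝ) ^ n) * (-1) ^ n = 1 := by rw [← mul_pow]; simp
  simp only [smul_eq_mul]
  field_simp
  linear_combination (-mlq r n) * h2

lemma mlq_add (r s : ℝ) (n : ℕ) :
    ∑ p ∈ antidiagonal n, mlq r p.1 * mlq s p.2 = mlq (r + s) n := by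
  rw [mlq_eq_choose, Ring.add_choose_eq n (Commute.all r s), mul_sum]
  refine sum_congr rfl fun p hp => ?_
  rw [mlq_eq_choose, mlq_eq_choose, ← mem_antidiagonal.1 hp, pow_add]
  ring

lemma mlq_nonneg {r : ℝ} (hr : r ≤ 0) (n : ℕ) : 0 ≤ mlq r n := by
  refine prod_nonneg fun j _ => ?_
  have : (0 : ℝ) ≤ j := by positivity
  exact div_nonneg (by linarith) (by linarith)

lemma mlq_nonpos {r : ℝ} (h0 : 0 ≤ r) (h1 : r ≤ 1) (n : ℕ) : mlq r (n + 1) ≤ 0 := by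
  rw [mlq, prod_range_succ']
  refine mul_nonpos_of_nonneg_of_nonpos (prod_nonneg fun j _ => ?_) ?_
  · have : (0 : ℝ) ≤ j := by positivity
    push_cast
    exact div_nonneg (by linarith) (by linarith)
  · simp; exact h0

/-- Nonnegativity is preserved by dividing by `(1-z)^β + c`. -/
lemma ml_nonneg {β c : ℝ} (h0 : 0 ≤ β) (h1 : β ≤ 1) (hc : 0 ≤ c) (A H : ℕ → ℝ)
    (hH : ∀ n, 0 ≤ H n)
    (h : ∀ n, ∑ p ∈ antidiagonal n, mlq β p.1 * A p.2 + c * A n = H n) (n : ℕ) : 0 ≤ A n := by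
  induction n using Nat.strong_induction_on with
  | _ n ih =>
    have hn := h n
    have hh := hH n
    cases n with
    | zero =>
      simp [mlq_zero] at hn
      by_contra hcon
      push Not at hcon
      nlinarith
    | succ m =>
      rw [Nat.sum_antidiagonal_succ, mlq_zero] at hn
      have : ∑ p ∈ antidiagonal m, mlq β (p.1 + 1) * A p.2 ≤ 0 := by
        refine sum_nonpos fun p hp => ?_
        refine mul_nonpos_of_nonpos_of_nonneg (mlq_nonpos h0 h1 _) (ih _ ?_)
        have := mem_antidiagonal.1 hp
        omega
      by_contra hcon
      push Not at hcon
      simp only at hn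
      nlinarith

/-- Bound of the coefficients. -/
lemma mlq_le_choose {β : ℝ} (h0 : 0 ≤ β) (h1 : β ≤ 1) (k n : ℕ) :
    mlq (-(β * k) - 1) n ≤ ((k + n).choose n : ℝ) := by
  have e : ((k + n).choose n : ℝ) = ∏ j ∈ range n, (((j : ℝ) + 1 + k) / (j + 1)) := by
    induction n with
    | zero => simp
    | succ n ih =>
      rw [prod_range_succ, ← ih]
      have := Nat.add_one_mul_choose_eq (k + n) n
      have h2 : ((k + n + 1 : ℕ) : ℝ) * ((k + n).choose n : ℝ)
        = ((k + n + 1).choose (n + 1) : ℝ) * ((n + 1 : ℕ) : ℝ) := by exact_mod_cast this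
      have : ((n : ℝ) + 1) ≠ 0 := by positivity
      rw [← add_assoc]
      push_cast at h2
      field_simp
      linear_combination -h2
  rw [e, mlq]
  have hk : (0 : ℝ) ≤ k := by positivity
  have hb : 0 ≤ β * k := by positivity
  refine prod_le_prod (fun j _ => ?_) (fun j _ => ?_)
  · have : (0 : ℝ) ≤ j := by positivity
    exact div_nonneg (by linarith) (by linarith)
  · have : (0 : ℝ) ≤ j := by positivity
    gcongr
    nlinarith

lemma ml_summable {β c : ℝ} (h0 : 0 ≤ β) (h1 : β ≤ 1) (hc : 0 ≤ c) (hc1 : c < 1) (n : ℕ) :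
    Summable fun k : ℕ => c ^ k * mlq (-(β * k) - 1) n := by
  have hs := summable_choose_mul_geometric_of_norm_lt_one (R := ℝ) n (r := c)
    (by rw [Real.norm_eq_abs, abs_of_nonneg hc]; exact hc1)
  refine Summable.of_nonneg_of_le (fun k => ?_) (fun k => ?_) hs
  · have hb : 0 ≤ β * k := by positivity
    exact mul_nonneg (by positivity) (mlq_nonneg (by linarith) n)
  · rw [mul_comm]
    exact mul_le_mul_of_nonneg_right (mlq_le_choose h0 h1 k n) (by positivity)

lemma ml_summable' {β c : ℝ} (h0 : 0 ≤ β) (h1 : β ≤ 1) (hc : 0 ≤ c) (hc1 : c < 1) (n : ℕ) :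
    Summable fun k : ℕ => (-c) ^ k * mlq (-(β * k) - 1) n := by
  refine Summable.of_norm ?_
  refine (ml_summable h0 h1 hc hc1 n).congr fun k => ?_
  have hb : 0 ≤ β * k := by positivity
  rw [norm_mul, norm_pow, norm_neg, Real.norm_of_nonneg hc,
    Real.norm_of_nonneg (mlq_nonneg (by linarith) n)]

/-- The discrete approximation. -/
noncomputable def mla (β c : ℝ) (n : ℕ) : ℝ := ∑' k : ℕ, (-c) ^ k * mlq (-(β * k) - 1) n

lemma mla_eq {β c : ℝ} (h0 : 0 ≤ β) (h1 : β ≤ 1) (hc : 0 ≤ c) (hc1 : c < 1) (n : ℕ) :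
    ∑ p ∈ antidiagonal n, mlq β p.1 * mla β c p.2 + c * mla β c n = mlq (β - 1) n := by
  have hS := fun m => (ml_summable' h0 h1 hc hc1 m)
  have e1 : ∑ p ∈ antidiagonal n, mlq β p.1 * mla β c p.2
      = ∑' k : ℕ, (-c) ^ k * mlq (β + (-(β * k) - 1)) n := by
    simp only [mla, ← tsum_mul_left]
    have hsw := Summable.tsum_finsetSum (s := antidiagonal n)
      (f := fun (p : ℕ × ℕ) (k : ℕ) => mlq β p.1 * ((-c) ^ k * mlq (-(β * k) - 1) p.2))
      (fun p _ => (hS p.2).mul_left (mlq β p.1))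
    rw [← hsw]
    refine tsum_congr fun k => ?_
    rw [← mlq_add, mul_sum]
    exact sum_congr rfl fun p _ => by ring
  have hs : Summable fun k : ℕ => (-c) ^ k * mlq (β + (-(β * k) - 1)) n := by
    have : Summable fun k : ℕ => ∑ p ∈ antidiagonal n,
        mlq β p.1 * ((-c) ^ k * mlq (-(β * k) - 1) p.2) :=
      summable_sum fun p _ => (hS p.2).mul_left _
    refine this.congr fun k => ?_
    rw [← mlq_add, mul_sum]
    exact sum_congr rfl fun p _ => by ring
  rw [e1, hs.tsum_eq_zero_add]
  have e2 : ∑' k : ℕ, (-c) ^ (k + 1) * mlq (β + (-(β * ((k + 1 : ℕ) : ℝ)) - 1)) n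
      = - c * mla β c n := by
    rw [mla, ← tsum_mul_left]
    refine tsum_congr fun k => ?_
    have : β + (-(β * ((k + 1 : ℕ) : ℝ)) - 1) = -(β * k) - 1 := by push_cast; ring
    rw [this]; ring
  rw [e2]
  have : β + (-(β * ((0 : ℕ) : ℝ)) - 1) = β - 1 := by push_cast; ring
  rw [this]
  ring

lemma mla_nonneg {β c : ℝ} (h0 : 0 ≤ β) (h1 : β ≤ 1) (hc : 0 ≤ c) (hc1 : c < 1) (n : ℕ) :
    0 ≤ mla β c n :=
  ml_nonneg h0 h1 hc _ _ (fun n => mlq_nonneg (by linarith) n) (mla_eq h0 h1 hc hc1) n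

lemma mla_anti {β c d : ℝ} (h0 : 0 ≤ β) (h1 : β ≤ 1) (hc : 0 ≤ c) (hcd : c ≤ d) (hd1 : d < 1)
    (n : ℕ) : mla β d n ≤ mla β c n := by
  have := ml_nonneg h0 h1 hc (fun n => mla β c n - mla β d n) (fun n => (d - c) * mla β d n)
    (fun n => mul_nonneg (by linarith) (mla_nonneg h0 h1 (hc.trans hcd) hd1 n)) (fun n => by
      have a := mla_eq h0 h1 hc (hcd.trans_lt hd1) n
      have b := mla_eq h0 h1 (hc.trans hcd) hd1 n
      simp only [mul_sub, sum_sub_distrib]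
      linear_combination a - b) n
  simpa using this

/-- normalized coefficients -/
noncomputable def mlr (x : ℝ) (n : ℕ) : ℝ := mlq (-x - 1) n * (n : ℝ) ^ (-x)

lemma mlr_succ_le {x : ℝ} (hx : 0 ≤ x) {n : ℕ} (hn : 1 ≤ n) : mlr x (n + 1) ≤ mlr x n := by
  have hn0 : (0 : ℝ) < n := by exact_mod_cast hn
  have hq := mlq_nonneg (r := -x - 1) (by linarith) n
  rw [mlr, mlr, mlq_succ, mul_assoc]
  refine mul_le_mul_of_nonneg_left ?_ hq
  push_cast
  have e1 : ((n : ℝ) - (-x - 1)) / (n + 1) = 1 + x / (n + 1) := by field_simp; ring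
  rw [e1]
  have h1 : 1 + x / ((n : ℝ) + 1) ≤ Real.exp (x / (n + 1)) := by
    have := Real.add_one_le_exp (x / ((n : ℝ) + 1)); linarith
  have h2 : 1 / ((n : ℝ) + 1) ≤ Real.log (n + 1) - Real.log n := by
    have := Real.log_le_sub_one_of_pos (x := (n : ℝ) / (n + 1)) (by positivity)
    rw [Real.log_div (by positivity) (by positivity)] at this
    have e : (n : ℝ) / (n + 1) - 1 = - (1 / ((n : ℝ) + 1)) := by field_simp; ring
    linarith
  rw [Real.rpow_def_of_pos hn0, Real.rpow_def_of_pos (by positivity)]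
  calc _ ≤ Real.exp (x / (n + 1)) * Real.exp (Real.log (n + 1) * -x) := by gcongr
    _ = Real.exp (x / (n + 1) + Real.log (n + 1) * -x) := by rw [Real.exp_add]
    _ ≤ _ := by
      apply Real.exp_le_exp.2
      have := mul_le_mul_of_nonneg_left h2 hx
      have e : x * (1 / ((n : ℝ) + 1)) = x / (n + 1) := by ring
      linarith

lemma mlr_le {x : ℝ} (hx : 0 ≤ x) {N n : ℕ} (hN : 1 ≤ N) (h : N ≤ n) : mlr x n ≤ mlr x N := by
  induction n, h using Nat.le_induction with
  | base => exact le_rfl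
  | succ n hn ih => exact (mlr_succ_le hx (hN.trans hn)).trans ih

lemma mlr_tendsto {x : ℝ} (hx : 0 ≤ x) :
    Tendsto (mlr x) atTop (𝓝 (1 / Real.Gamma (x + 1))) := by
  have h1 := Real.GammaSeq_tendsto_Gamma (x + 1)
  have h2 : Tendsto (fun n : ℕ => (n : ℝ) / (n + (x + 1))) atTop (𝓝 1) :=
    tendsto_natCast_div_add_atTop (x + 1)
  have h3 := h2.div h1 (Real.Gamma_pos_of_pos (by linarith)).ne'
  refine h3.congr' ?_
  filter_upwards [eventually_ge_atTop 1] with n hn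
  have hn0 : (0 : ℝ) < n := by exact_mod_cast hn
  have hp : 0 < ∏ j ∈ range n, (x + 1 + (j : ℝ)) := prod_pos fun j _ => by positivity
  have hq : mlq (-x - 1) n = (∏ j ∈ range n, (x + 1 + (j : ℝ))) / n.factorial := by
    rw [mlq, prod_div_distrib, ← prod_range_add_one_eq_factorial]
    push_cast
    congr 1
    exact prod_congr rfl fun j _ => by ring
  have hf : (n.factorial : ℝ) ≠ 0 := by positivity
  simp only [Pi.div_apply]
  rw [mlr, hq, Real.GammaSeq, prod_range_succ, Real.rpow_neg hn0.le, Real.rpow_add hn0,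
    Real.rpow_one]
  have hr : (n : ℝ) ^ x ≠ 0 := by positivity
  have : (x + 1 + (n : ℝ)) ≠ 0 := by positivity
  have : ((n : ℝ) + (x + 1)) ≠ 0 := by positivity
  field_simp
  ring

lemma mlterm {β s : ℝ} (n k : ℕ) :
    (s * (n : ℝ) ^ (-β)) ^ k * mlq (-(β * k) - 1) n = s ^ k * mlr (β * k) n := by
  have : (n : ℝ) ^ (-(β * k)) = ((n : ℝ) ^ (-β)) ^ k := by
    rw [← Real.rpow_natCast, ← Real.rpow_mul (by positivity)]; congr 1; ring
  rw [mlr, this]; ring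

lemma ml_small {β : ℝ} (h0 : 0 < β) (s : ℝ) :
    ∀ᶠ n : ℕ in atTop, s * (n : ℝ) ^ (-β) < 1 := by
  have := ((tendsto_rpow_neg_atTop h0).comp tendsto_natCast_atTop_atTop).const_mul s
  rw [mul_zero] at this
  exact this.eventually_lt_const one_pos

lemma mla_tendsto {β s : ℝ} (h0 : 0 < β) (h1 : β ≤ 1) (hs : 0 ≤ s) :
    Tendsto (fun n : ℕ => mla β (s * (n : ℝ) ^ (-β)) n) atTop (𝓝 (mittagLefflerReal β (-s))) := by
  obtain ⟨N, hN, hN1⟩ := ((ml_small h0 s).and (eventually_ge_atTop 1)).exists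
  have e : ∀ n : ℕ, mla β (s * (n : ℝ) ^ (-β)) n = ∑' k : ℕ, (-s) ^ k * mlr (β * k) n := by
    intro n
    refine tsum_congr fun k => ?_
    rw [← mlterm, neg_mul]
  simp only [e, mittagLefflerReal]
  refine tendsto_tsum_of_dominated_convergence (bound := fun k : ℕ => s ^ k * mlr (β * k) N)
    ?_ ?_ ?_
  · refine (ml_summable h0.le h1 (c := s * (N : ℝ) ^ (-β)) (by positivity) hN N).congr fun k => ?_
    rw [mlterm]
  · intro k
    rw [div_eq_mul_one_div]
    exact (mlr_tendsto (by positivity)).const_mul _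
  · filter_upwards [eventually_ge_atTop N] with n hn k
    have hx : 0 ≤ β * k := by positivity
    have : 0 ≤ mlr (β * k) n := mul_nonneg (mlq_nonneg (by linarith) n) (by positivity)
    rw [norm_mul, norm_pow, norm_neg, Real.norm_of_nonneg hs, Real.norm_of_nonneg this]
    exact mul_le_mul_of_nonneg_left (mlr_le hx hN1 hn) (by positivity)

/-- For `0 < β ≤ 1` and every `s ≥ 0`, `0 ≤ E_β(-s) ≤ 1`, and `s ↦ E_β(-s)` is
non-increasing on `[0,∞)`. -/
theorem mittagLeffler_neg_mem_unit_and_antitone (β : ℝ) (hβ₀ : 0 < β) (hβ₁ : β ≤ 1) :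
    (∀ s : ℝ, 0 ≤ s →
      0 ≤ mittagLefflerReal β (-s) ∧ mittagLefflerReal β (-s) ≤ 1) ∧
    (∀ s t : ℝ, 0 ≤ s → s ≤ t →
      mittagLefflerReal β (-t) ≤ mittagLefflerReal β (-s)) := by
  have anti : ∀ s t : ℝ, 0 ≤ s → s ≤ t →
      mittagLefflerReal β (-t) ≤ mittagLefflerReal β (-s) := by
    intro s t hs hst
    refine le_of_tendsto_of_tendsto (mla_tendsto hβ₀ hβ₁ (hs.trans hst))
      (mla_tendsto hβ₀ hβ₁ hs) ?_
    filter_upwards [ml_small hβ₀ t] with n hn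
    exact mla_anti hβ₀.le hβ₁ (by positivity) (by gcongr) hn n
  refine ⟨fun s hs => ⟨?_, ?_⟩, anti⟩
  · refine ge_of_tendsto (mla_tendsto hβ₀ hβ₁ hs) ?_
    filter_upwards [ml_small hβ₀ s] with n hn
    exact mla_nonneg hβ₀.le hβ₁ (by positivity) hn n
  · refine (anti 0 s le_rfl hs).trans_eq ?_
    rw [mittagLefflerReal, tsum_eq_single 0]
    · simp
    · intro k hk
      simp [hk]
end
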